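/- Let Ω ⊂ ℂⁿ, n ≥ 2, be a bounded domain admitting a C^∞ defining function ρ such that Ω is strongly convex: for every q ∈ ∂Ω, H_q(ξ,ξ) > 0 for every nonzero ξ ∈ ℂⁿ with dρ_q(ξ) = 0, where H_q is the second real Fréchet derivative of ρ at q. Let p ∈ ∂Ω and let F : Ω → Ω be holomorphic. If F(z₀) = z₀ for some z₀ ∈ Ω and F(z) = z + o(‖z−p‖²) as z → p within Ω, then F(z) = z for all z ∈ Ω. -/

import Mathlib

open Complex Topology Filter Metric Set Function

noncomputable section

/-- `ℂⁿ` as a normed space. -/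
abbrev En (n : ℕ) : Type := EuclideanSpace ℂ (Fin n)

/-- A domain: a nonempty open connected set. -/
def IsDomain' {n : ℕ} (Ω : Set (En n)) : Prop :=
  IsOpen Ω ∧ IsConnected Ω

/-- The Levi form of `ρ` at `q` in direction `ξ`:
`(1/4)(H_q(ξ,ξ) + H_q(iξ,iξ))` with `H_q` the second real Fréchet derivative. -/
def LeviForm {n : ℕ} (ρ : En n → ℝ) (q ξ : En n) : ℝ :=
  (1 / 4) * (iteratedFDeriv ℝ 2 ρ q ![ξ, ξ] + iteratedFDeriv ℝ 2 ρ q ![I • ξ, I • ξ])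

/-- `ξ` lies in the complex tangent space of `{ρ = 0}` at `q`. -/
def InCplxTangent {n : ℕ} (ρ : En n → ℝ) (q ξ : En n) : Prop :=
  fderiv ℝ ρ q ξ = 0 ∧ fderiv ℝ ρ q (I • ξ) = 0

/-- `ρ` is a `C^m` defining function for `Ω`. -/
def IsDefiningFunction {n : ℕ} (Ω : Set (En n)) (m : ℕ∞) (ρ : En n → ℝ) : Prop :=
  ContDiff ℝ m ρ ∧ Ω = {z | ρ z < 0} ∧ frontier Ω = {z | ρ z = 0} ∧
    ∀ q ∈ frontier Ω, fderiv ℝ ρ q ≠ 0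

/-- `q` is a strongly pseudoconvex point with respect to `ρ`. -/
def StronglyPcxAt {n : ℕ} (ρ : En n → ℝ) (q : En n) : Prop :=
  ∀ ξ : En n, ξ ≠ 0 → InCplxTangent ρ q ξ → 0 < LeviForm ρ q ξ

/-- `Ω` is pseudoconvex with `C^∞` boundary, witnessed by the defining function `ρ`. -/
def IsPcxCinfBoundary {n : ℕ} (Ω : Set (En n)) (ρ : En n → ℝ) : Prop :=
  IsDefiningFunction Ω ⊤ ρ ∧
    ∀ q ∈ frontier Ω, ∀ ξ : En n, InCplxTangent ρ q ξ → 0 ≤ LeviForm ρ q ξ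

/-- `F z = z + o(‖z - p‖^k)` as `z → p` within `Ω`. -/
def LittleOh {n : ℕ} (Ω : Set (En n)) (F : En n → En n) (p : En n) (k : ℕ) : Prop :=
  Tendsto (fun z => ‖F z - z‖ / ‖z - p‖ ^ k) (𝓝[Ω] p) (𝓝 0)

/-- `F` is an automorphism of `Ω`: a holomorphic bijection with holomorphic inverse. -/
def IsAutomorphismOf {n : ℕ} (F : En n → En n) (Ω : Set (En n)) : Prop :=
  DifferentiableOn ℂ F Ω ∧ MapsTo F Ω Ω ∧
    ∃ G : En n → En n, DifferentiableOn ℂ G Ω ∧ MapsTo G Ω Ω ∧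
      (∀ z ∈ Ω, G (F z) = z) ∧ (∀ z ∈ Ω, F (G z) = z)

/-!
At the fixed point `z₀` put `T(x) = tr (1 - dF_x)`. The eigenvalues of `dF` at a fixed point have
modulus at most `1`, so `Re T ≥ 0` there, and `Re T(z₀) = 0` forces `dF` to be unipotent at `z₀`,
whence `F = id` by Cartan's uniqueness theorem.

By strong convexity there is exactly one holomorphic disc `φ` centred at `z₀` which reaches `p` with
minimal slope. Second-order contact makes `F ∘ φ` another such disc, so `F` fixes `φ` pointwise and
`T ∘ φ` is a holomorphic function with nonnegative real part. If `Re T(z₀) > 0`, Harnack's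
inequality gives `Re T(φ(1 - δ)) ≥ c δ`, so that `dF` at `φ(1 - δ)` has an eigenvalue `λ` with
`|λ - 1|` at least of order `δ`, and some power `λ ^ N` with `N ≤ 1 / δ` stays away from `1`. On the
other hand, in the coordinates at `p` dilated by `δ` in the normal and by `√δ` in the complex
tangential directions second-order contact makes the iterates `F^N` with `N ≤ 1 / δ` subconverge to
a map with a fixed point, unipotent derivative there and bounded iterates. By Cartan's theorem again
the limit is the identity, which forces `λ ^ N → 1`.
-/

section HolomorphicMaps

variable {E F : Type*} [NormedAddCommGroup E] [NormedSpace ℂ E]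
  [NormedAddCommGroup F] [NormedSpace ℂ F] {f : E → F} {a x y : E} {R M : ℝ}

omit [NormedSpace ℂ E] [NormedSpace ℂ F] in
theorem mapsTo_ball_closedBall_of_norm_le (hM : ∀ x ∈ ball a R, ‖f x‖ ≤ M) :
    MapsTo f (ball a R) (closedBall (f a) (2 * M)) := fun x hx => by
  rw [mem_closedBall_iff_norm, two_mul]
  exact (norm_sub_le _ _).trans (add_le_add (hM x hx)
    (hM a (mem_ball_self (nonempty_ball.mp ⟨x, hx⟩))))

theorem norm_sub_le_of_bounded_on_ball (hd : DifferentiableOn ℂ f (ball a R))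
    (hM : ∀ x ∈ ball a R, ‖f x‖ ≤ M) (hy : y ∈ ball a R) :
    ‖f y - f a‖ ≤ 2 * M / R * ‖y - a‖ := by
  simpa [dist_eq_norm] using Complex.dist_le_div_mul_dist_of_mapsTo_ball hd
    (mapsTo_ball_closedBall_of_norm_le hM) hy

theorem norm_fderiv_le_of_bounded_on_ball (hR : 0 < R) (hd : DifferentiableOn ℂ f (ball a R))
    (hM : ∀ x ∈ ball a R, ‖f x‖ ≤ M) : ‖fderiv ℂ f a‖ ≤ 2 * M / R :=
  Complex.norm_fderiv_le_div_of_mapsTo_ball hd (mapsTo_ball_closedBall_of_norm_le hM) hR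

theorem norm_sub_sub_fderiv_le_of_bounded_on_ball (hd : DifferentiableOn ℂ f (ball a R))
    (hM : ∀ x ∈ ball a R, ‖f x‖ ≤ M) (hy : y ∈ ball a R) :
    ‖f y - f a - fderiv ℂ f a (y - a)‖ ≤ 4 * M * (‖y - a‖ / R) ^ 2 := by
  have hR : 0 < R := nonempty_ball.mp ⟨_, hy⟩
  have hfa : DifferentiableAt ℂ f a := hd.differentiableAt (ball_mem_nhds _ hR)
  have hlinear : ∀ x ∈ ball a R, ‖fderiv ℂ f a (x - a)‖ ≤ 2 * M := fun x hx => by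
    have hbound := norm_fderiv_le_of_bounded_on_ball hR hd hM
    calc ‖fderiv ℂ f a (x - a)‖ ≤ 2 * M / R * R :=
          ContinuousLinearMap.le_of_opNorm_le_of_le _ hbound (mem_ball_iff_norm.mp hx).le
      _ = 2 * M := by field_simp
  have hmaps : MapsTo (fun x => f x - fderiv ℂ f a (x - a)) (ball a R)
      (closedBall (f a - fderiv ℂ f a (a - a)) (4 * M)) := fun x hx => by
    have h1 := mem_closedBall_iff_norm.mp (mapsTo_ball_closedBall_of_norm_le hM hx)
    rw [mem_closedBall_iff_norm, sub_self, map_zero, sub_zero, sub_right_comm]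
    linarith [norm_sub_le (f x - f a) (fderiv ℂ f a (x - a)), hlinear x hx]
  have hlittle := hfa.hasFDerivAt.isLittleO.norm_right
  have h := Complex.dist_le_mul_div_pow_of_mapsTo_ball_of_isLittleO (n := 1) (by fun_prop) hmaps
    (by simpa [sub_right_comm] using hlittle) hy
  simpa [dist_eq_norm, sub_right_comm] using h

theorem norm_fderiv_sub_le_of_bounded_on_ball (hd : DifferentiableOn ℂ f (ball a R))
    (hM : ∀ x ∈ ball a R, ‖f x‖ ≤ M) (hx : x ∈ ball a (R / 2)) :
    ‖fderiv ℂ f x - fderiv ℂ f a‖ ≤ 32 * M / R ^ 2 * ‖x - a‖ := by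
  rcases eq_or_ne x a with rfl | hne
  · simp
  have hs : 0 < ‖x - a‖ := norm_pos_iff.mpr (sub_ne_zero.mpr hne)
  have hxR : ‖x - a‖ < R / 2 := mem_ball_iff_norm.mp hx
  have hdist : ∀ y ∈ ball x ‖x - a‖, ‖y - a‖ ≤ 2 * ‖x - a‖ := fun y hy => by
    linarith [norm_sub_le_norm_sub_add_norm_sub y x a, mem_ball_iff_norm.mp hy]
  have hsub : ball x ‖x - a‖ ⊆ ball a R := fun y hy =>
    mem_ball_iff_norm.mpr (by linarith [hdist y hy])
  have hM0 : 0 ≤ M := (norm_nonneg _).trans (hM a (mem_ball_self (by linarith)))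
  have hdx : DifferentiableAt ℂ f x :=
    hd.differentiableAt (isOpen_ball.mem_nhds (hsub (mem_ball_self hs)))
  have hfderiv : fderiv ℂ (fun y => f y - f a - fderiv ℂ f a (y - a)) x
      = fderiv ℂ f x - fderiv ℂ f a := by
    have := (hdx.hasFDerivAt.sub_const (f a)).sub
      ((fderiv ℂ f a).hasFDerivAt.comp x ((hasFDerivAt_id x).sub_const a))
    rw [ContinuousLinearMap.comp_id] at this
    exact this.fderiv
  have hd' := hd.mono hsub
  have hbound := norm_fderiv_le_of_bounded_on_ball (f := fun y => f y - f a - fderiv ℂ f a (y - a))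
    (M := 16 * M / R ^ 2 * ‖x - a‖ ^ 2) hs (a := x) (by fun_prop) fun y hy => by
      calc ‖f y - f a - fderiv ℂ f a (y - a)‖ ≤ 4 * M * (‖y - a‖ / R) ^ 2 :=
            norm_sub_sub_fderiv_le_of_bounded_on_ball hd hM (hsub hy)
        _ ≤ 4 * M * (2 * ‖x - a‖ / R) ^ 2 := by
            have : 0 < R := by linarith
            gcongr
            exact hdist y hy
        _ = 16 * M / R ^ 2 * ‖x - a‖ ^ 2 := by ring
  rw [hfderiv] at hbound
  refine hbound.trans_eq ?_
  field_simp
  ring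

end HolomorphicMaps

section Ultralimits

theorem exists_tendsto_ultrafilter_of_norm_le {ι F : Type*} [NormedAddCommGroup F] [ProperSpace F]
    (𝒰 : Ultrafilter ι) {u : ι → F} {M : ℝ} (hM : ∀ᶠ j in 𝒰, ‖u j‖ ≤ M) :
    ∃ l, Tendsto u 𝒰 (𝓝 l) := by
  have hball : (𝒰.map u : Filter F) ≤ 𝓟 (closedBall 0 M) :=
    tendsto_principal.mpr (hM.mono fun j hj => mem_closedBall_zero_iff.mpr hj)
  obtain ⟨l, -, hl⟩ := (isCompact_closedBall (0 : F) M).ultrafilter_le_nhds (𝒰.map u) hball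
  exact ⟨l, hl⟩

theorem tendsto_continuousLinearMap_apply {𝕜 E F ι : Type*} [NontriviallyNormedField 𝕜]
    [NormedAddCommGroup E] [NormedSpace 𝕜 E] [NormedAddCommGroup F] [NormedSpace 𝕜 F]
    {l : Filter ι} {A : ι → E →L[𝕜] F} {u : ι → E} {A₀ : E →L[𝕜] F} {u₀ : E}
    (hA : Tendsto A l (𝓝 A₀)) (hu : Tendsto u l (𝓝 u₀)) :
    Tendsto (fun k => A k (u k)) l (𝓝 (A₀ u₀)) :=
  ((isBoundedBilinearMap_apply (𝕜 := 𝕜) (E := E) (F := F)).continuous.tendsto (A₀, u₀)).comp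
    (hA.prodMk_nhds hu)

variable {E F : Type*} [NormedAddCommGroup E] [NormedSpace ℂ E]
  [NormedAddCommGroup F] [NormedSpace ℂ F]

theorem tendsto_comp_of_bounded_on_ball {ι : Type*} {l : Filter ι} {f : ι → E → F} {u : ι → E}
    {x : E} {b : F} {R M : ℝ} (hR : 0 < R)
    (hf : ∀ᶠ j in l, DifferentiableOn ℂ (f j) (ball x R) ∧ ∀ y ∈ ball x R, ‖f j y‖ ≤ M)
    (hx : Tendsto (fun j => f j x) l (𝓝 b)) (hu : Tendsto u l (𝓝 x)) :
    Tendsto (fun j => f j (u j)) l (𝓝 b) := by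
  have hdiff : Tendsto (fun j => f j (u j) - f j x) l (𝓝 0) := by
    refine squeeze_zero_norm' ?_ (by
      simpa using (tendsto_iff_norm_sub_tendsto_zero.mp hu).const_mul (2 * M / R))
    filter_upwards [hf, hu (ball_mem_nhds x hR)] with j hj hju
    exact norm_sub_le_of_bounded_on_ball hj.1 hj.2 hju
  simpa using hdiff.add hx

theorem tendsto_fderiv_comp_of_bounded_on_ball {ι : Type*} {l : Filter ι} {f : ι → E → F}
    {u : ι → E} {x : E} {B : E →L[ℂ] F} {R M : ℝ} (hR : 0 < R)
    (hf : ∀ᶠ j in l, DifferentiableOn ℂ (f j) (ball x R) ∧ ∀ y ∈ ball x R, ‖f j y‖ ≤ M)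
    (hx : Tendsto (fun j => fderiv ℂ (f j) x) l (𝓝 B)) (hu : Tendsto u l (𝓝 x)) :
    Tendsto (fun j => fderiv ℂ (f j) (u j)) l (𝓝 B) := by
  have hdiff : Tendsto (fun j => fderiv ℂ (f j) (u j) - fderiv ℂ (f j) x) l (𝓝 0) := by
    refine squeeze_zero_norm' ?_ (by
      simpa using (tendsto_iff_norm_sub_tendsto_zero.mp hu).const_mul (32 * M / R ^ 2))
    filter_upwards [hf, hu (ball_mem_nhds x (half_pos hR))] with j hj hju
    exact norm_fderiv_sub_le_of_bounded_on_ball hj.1 hj.2 hju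
  simpa using hdiff.add hx

theorem hasFDerivAt_of_tendsto_of_bounded_on_ball {ι : Type*} {l : Filter ι} [l.NeBot]
    {f : ι → E → F} {g : E → F} {B : E →L[ℂ] F} {x : E} {R M : ℝ} (hR : 0 < R)
    (hf : ∀ᶠ j in l, DifferentiableOn ℂ (f j) (ball x R) ∧ ∀ y ∈ ball x R, ‖f j y‖ ≤ M)
    (hg : ∀ᶠ y in 𝓝 x, Tendsto (fun j => f j y) l (𝓝 (g y)))
    (hB : Tendsto (fun j => fderiv ℂ (f j) x) l (𝓝 B)) : HasFDerivAt g B x := by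
  have hO : (fun y => g y - g x - B (y - x)) =O[𝓝 x] fun y => ‖y - x‖ ^ 2 := by
    refine Asymptotics.IsBigO.of_bound (4 * M / R ^ 2) ?_
    filter_upwards [ball_mem_nhds x hR, hg] with y hy hgy
    rw [norm_pow, norm_norm]
    refine le_of_tendsto ((hgy.sub hg.self_of_nhds).sub
      (tendsto_continuousLinearMap_apply hB tendsto_const_nhds)).norm ?_
    filter_upwards [hf] with j hj
    refine (norm_sub_sub_fderiv_le_of_bounded_on_ball hj.1 hj.2 hy).trans_eq ?_
    ring
  refine HasFDerivAt.of_isLittleO (hO.trans_isLittleO ?_)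
  simpa using Asymptotics.isLittleO_pow_sub_sub (E' := E) x one_lt_two

-- Montel's theorem along an ultrafilter.
theorem exists_holomorphic_ultralimit {ι : Type*} [FiniteDimensional ℂ E] [FiniteDimensional ℂ F]
    (𝒰 : Ultrafilter ι) {U : Set E} {f : ι → E → F} (hU : IsOpen U)
    (hf : ∀ x ∈ U, ∃ R > 0, ∃ M, ∀ᶠ j in 𝒰, DifferentiableOn ℂ (f j) (ball x R) ∧
      ∀ y ∈ ball x R, ‖f j y‖ ≤ M) :
    ∃ g : E → F, DifferentiableOn ℂ g U ∧ (∀ x ∈ U, Tendsto (fun j => f j x) 𝒰 (𝓝 (g x))) ∧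
      ∀ x ∈ U, Tendsto (fun j => fderiv ℂ (f j) x) 𝒰 (𝓝 (fderiv ℂ g x)) := by
  have : ProperSpace F := FiniteDimensional.proper ℂ F
  have : ProperSpace (E →L[ℂ] F) := FiniteDimensional.proper ℂ _
  have hlim : ∀ x, ∃ l, x ∈ U → Tendsto (fun j => f j x) 𝒰 (𝓝 l) := fun x => by
    by_cases hx : x ∈ U
    · obtain ⟨R, hR, M, h⟩ := hf x hx
      obtain ⟨l, hl⟩ := exists_tendsto_ultrafilter_of_norm_le 𝒰
        (h.mono fun j hj => hj.2 x (mem_ball_self hR))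
      exact ⟨l, fun _ => hl⟩
    · exact ⟨0, fun h => absurd h hx⟩
  choose g hg using hlim
  have hderiv : ∀ x ∈ U, ∃ B : E →L[ℂ] F, HasFDerivAt g B x ∧
      Tendsto (fun j => fderiv ℂ (f j) x) 𝒰 (𝓝 B) := fun x hx => by
    obtain ⟨R, hR, M, h⟩ := hf x hx
    obtain ⟨B, hB⟩ := exists_tendsto_ultrafilter_of_norm_le 𝒰
      (h.mono fun j hj => norm_fderiv_le_of_bounded_on_ball hR hj.1 hj.2)
    exact ⟨B, hasFDerivAt_of_tendsto_of_bounded_on_ball hR h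
      (eventually_of_mem (hU.mem_nhds hx) hg) hB, hB⟩
  choose! B hB hBt using hderiv
  exact ⟨g, fun x hx => (hB x hx).differentiableAt.differentiableWithinAt, fun x hx => hg x hx,
    fun x hx => (hB x hx).fderiv ▸ hBt x hx⟩

end Ultralimits

section Cartan

theorem one_add_pow_mul_pow_of_pow_eq_zero {A : Type*} [Ring A] {N : A} {k : ℕ}
    (hN : N ^ (k + 2) = 0) (m : ℕ) : (1 + N) ^ m * N ^ k = N ^ k + m • N ^ (k + 1) := by
  induction m with
  | zero => simp
  | succ m ih =>
    rw [pow_succ', mul_assoc, ih, add_mul, one_mul, mul_add, mul_smul_comm, ← pow_succ',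
      ← pow_succ', hN, smul_zero, add_zero, succ_nsmul, add_assoc]

theorem pow_succ_eq_zero_of_bounded_pow {A : Type*} [NormedRing A] [NormedAlgebra ℝ A]
    {N : A} {K : ℝ} (hK : ∀ m : ℕ, ‖(1 + N) ^ m‖ ≤ K) {k : ℕ} (hN : N ^ (k + 2) = 0) :
    N ^ (k + 1) = 0 := by
  have hbound : ∀ m : ℕ, m * ‖N ^ (k + 1)‖ ≤ (K + 1) * ‖N ^ k‖ := fun m => by
    have hm : (m : ℝ) • N ^ (k + 1) = (1 + N) ^ m * N ^ k - N ^ k := by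
      rw [one_add_pow_mul_pow_of_pow_eq_zero hN, add_sub_cancel_left, Nat.cast_smul_eq_nsmul]
    calc m * ‖N ^ (k + 1)‖ = ‖(1 + N) ^ m * N ^ k - N ^ k‖ := by
          rw [← hm, norm_smul, Real.norm_natCast]
      _ ≤ ‖(1 + N) ^ m‖ * ‖N ^ k‖ + ‖N ^ k‖ :=
          (norm_sub_le _ _).trans (add_le_add_left (norm_mul_le _ _) _)
      _ ≤ (K + 1) * ‖N ^ k‖ := by
          rw [add_one_mul]
          gcongr
          exact hK m
  by_contra hne
  obtain ⟨m, hm⟩ := exists_nat_gt ((K + 1) * ‖N ^ k‖ / ‖N ^ (k + 1)‖)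
  rw [div_lt_iff₀ (norm_pos_iff.mpr hne)] at hm
  exact (hbound m).not_gt hm

theorem eq_zero_of_isNilpotent_of_bounded_pow {A : Type*} [NormedRing A] [NormedAlgebra ℝ A]
    {N : A} {K : ℝ} (hN : IsNilpotent N) (hK : ∀ m : ℕ, ‖(1 + N) ^ m‖ ≤ K) : N = 0 := by
  obtain ⟨n, hn⟩ := hN
  have hdescent : ∀ k : ℕ, N ^ (k + 1) = 0 → N = 0 := fun k => by
    induction k with
    | zero => simp
    | succ k ih => exact fun hk => ih (pow_succ_eq_zero_of_bounded_pow hK hk)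
  exact hdescent n (by rw [pow_succ, hn, zero_mul])

variable {E : Type*} [NormedAddCommGroup E] [NormedSpace ℂ E]

theorem exists_norm_sub_le_two_mul_of_fderiv_eq_one (a : E) {R : ℝ} (hR : 0 < R) (M : ℝ) :
    ∃ r > 0, r ≤ R ∧ ∀ f : E → E, DifferentiableOn ℂ f (ball a R) →
      (∀ x ∈ ball a R, ‖f x‖ ≤ M) → fderiv ℂ f a = 1 →
      ∀ x ∈ ball a r, ∀ y ∈ ball a r, ‖y - x‖ ≤ 2 * ‖f y - f x‖ := by
  set r := min (R / 2) (R ^ 2 / (64 * (|M| + 1)))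
  have hr : 0 < r := by positivity
  have hrR : r ≤ R / 2 := min_le_left _ _
  have hrM : 32 * |M| / R ^ 2 * r ≤ 1 / 2 := by
    have := (le_div_iff₀ (by positivity)).mp (min_le_right (R / 2) (R ^ 2 / (64 * (|M| + 1))))
    rw [div_mul_eq_mul_div, div_le_iff₀ (by positivity)]
    linarith
  refine ⟨r, hr, by linarith, fun f hd hM hf x hx y hy => ?_⟩
  have hderiv : ∀ z ∈ ball a r, ‖fderiv ℂ f z - 1‖ ≤ 1 / 2 := fun z hz => by
    rw [← hf]
    calc ‖fderiv ℂ f z - fderiv ℂ f a‖ ≤ 32 * M / R ^ 2 * ‖z - a‖ :=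
          norm_fderiv_sub_le_of_bounded_on_ball hd hM (ball_subset_ball hrR hz)
      _ ≤ 32 * |M| / R ^ 2 * r := by
          gcongr
          · exact le_abs_self M
          · exact (mem_ball_iff_norm.mp hz).le
      _ ≤ 1 / 2 := hrM
  have hdiff : ∀ z ∈ ball a r, DifferentiableAt ℂ f z := fun z hz =>
    hd.differentiableAt (isOpen_ball.mem_nhds (ball_subset_ball (by linarith) hz))
  have hclose : ‖f y - f x - (y - x)‖ ≤ 1 / 2 * ‖y - x‖ :=
    (convex_ball a r).norm_image_sub_le_of_norm_fderiv_le' hdiff hderiv hx hy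
  have htri := norm_sub_le (f y - f x) (f y - f x - (y - x))
  rw [sub_sub_cancel] at htri
  linarith

theorem fderiv_eq_pow_of_iterates {g : ℕ → E → E} {a : E}
    (hd : ∀ m, DifferentiableAt ℂ (g m) a) (hg0 : g 0 =ᶠ[𝓝 a] id) (hga : g 1 a = a)
    (hcomp : ∀ m, g (m + 1) =ᶠ[𝓝 a] g m ∘ g 1) (m : ℕ) :
    fderiv ℂ (g m) a = fderiv ℂ (g 1) a ^ m := by
  induction m with
  | zero => rw [hg0.fderiv_eq, fderiv_id, pow_zero, ContinuousLinearMap.one_def]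
  | succ m ih =>
    rw [(hcomp m).fderiv_eq, fderiv_comp a (hga.symm ▸ hd m) (hd 1), hga, ih, pow_succ,
      ContinuousLinearMap.mul_def]

/-- The Cesàro mean `(g 0 x + ⋯ + g N x) / (N + 1)`; unlike `birkhoffAverage` it does not require
the `g m` to be iterates of a globally defined map. -/
def cesaroMean (g : ℕ → E → E) (N : ℕ) (x : E) : E :=
  ((N + 1 : ℕ) : ℂ)⁻¹ • ∑ m ∈ Finset.range (N + 1), g m x

variable {g : ℕ → E → E}

theorem differentiableOn_cesaroMean {s : Set E} (hd : ∀ m, DifferentiableOn ℂ (g m) s) (N : ℕ) :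
    DifferentiableOn ℂ (cesaroMean g N) s :=
  (DifferentiableOn.fun_sum fun m _ => hd m).const_smul _

theorem norm_cesaroMean_le {x : E} {M : ℝ} (hM : ∀ m, ‖g m x‖ ≤ M) (N : ℕ) :
    ‖cesaroMean g N x‖ ≤ M := by
  have hsum := norm_sum_le_of_le (Finset.range (N + 1)) fun m _ => hM m
  rw [Finset.sum_const, Finset.card_range, nsmul_eq_mul] at hsum
  rwa [cesaroMean, norm_smul, norm_inv, Complex.norm_natCast, inv_mul_le_iff₀ (by positivity)]

theorem fderiv_cesaroMean_eq_one {a : E} (hone : ∀ m, HasFDerivAt (g m) (1 : E →L[ℂ] E) a)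
    (N : ℕ) : fderiv ℂ (cesaroMean g N) a = 1 := by
  have hsum := (HasFDerivAt.fun_sum fun m (_ : m ∈ Finset.range (N + 1)) => hone m).const_smul
    (((N + 1 : ℕ) : ℂ)⁻¹)
  refine HasFDerivAt.fderiv (hsum.congr_fderiv ?_)
  rw [Finset.sum_const, Finset.card_range, ← Nat.cast_smul_eq_nsmul ℂ, smul_smul,
    inv_mul_cancel₀ (Nat.cast_ne_zero.mpr N.succ_ne_zero), one_smul]

theorem norm_cesaroMean_sub_le {x y : E} {M : ℝ} (hM : ∀ m, ‖g m x‖ ≤ M)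
    (hy : ∀ m, g m y = g (m + 1) x) (N : ℕ) :
    ‖cesaroMean g N y - cesaroMean g N x‖ ≤ 2 * M / (N + 1 : ℕ) := by
  rw [cesaroMean, cesaroMean, ← smul_sub, Finset.sum_congr rfl fun m _ => hy m,
    ← Finset.sum_sub_distrib, Finset.sum_range_sub fun m => g m x, norm_smul, norm_inv,
    Complex.norm_natCast, two_mul, inv_mul_eq_div]
  gcongr
  exact (norm_sub_le _ _).trans (add_le_add (hM _) (hM _))

-- The Cesàro means of the iterates are uniformly bi-Lipschitz near `a`, while the difference of
-- their values at `g 1 x` and at `x` telescopes and tends to zero.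
theorem eventually_eq_self_of_bounded_iterates {a : E} {R M : ℝ} (hR : 0 < R)
    (hd : ∀ m, DifferentiableOn ℂ (g m) (ball a R)) (hM : ∀ m, ∀ x ∈ ball a R, ‖g m x‖ ≤ M)
    (hg0 : ∀ x ∈ ball a R, g 0 x = x) (hga : g 1 a = a)
    (hcomp : ∀ m, ∀ x ∈ ball a R, g 1 x ∈ ball a R → g (m + 1) x = g m (g 1 x))
    (hnil : IsNilpotent (fderiv ℂ (g 1) a - 1)) : ∀ᶠ x in 𝓝 a, g 1 x = x := by
  have hball := ball_mem_nhds a hR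
  have hda : ∀ m, DifferentiableAt ℂ (g m) a := fun m => (hd m).differentiableAt hball
  have hnear : ∀ r > 0, ∀ᶠ x in 𝓝 a, g 1 x ∈ ball a r := fun r hr =>
    (hda 1).continuousAt.eventually_mem (hga.symm ▸ ball_mem_nhds a hr)
  have hpow := fderiv_eq_pow_of_iterates hda (eventually_of_mem hball hg0) hga fun m => by
    filter_upwards [hball, hnear R hR] with x hx hgx using hcomp m x hx hgx
  have hone : fderiv ℂ (g 1) a = 1 := sub_eq_zero.mp <|
    eq_zero_of_isNilpotent_of_bounded_pow hnil (K := 2 * M / R) fun m => by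
      rw [add_sub_cancel, ← hpow]
      exact norm_fderiv_le_of_bounded_on_ball hR (hd m) (hM m)
  have hfderiv : ∀ m, HasFDerivAt (g m) (1 : E →L[ℂ] E) a := fun m => by
    rw [← one_pow m, ← hone, ← hpow]
    exact (hda m).hasFDerivAt
  obtain ⟨r, hr, hrR, hlip⟩ := exists_norm_sub_le_two_mul_of_fderiv_eq_one a hR M
  filter_upwards [ball_mem_nhds a hr, hnear r hr] with x hx hgx
  have hxR := ball_subset_ball hrR hx
  have hbound : ∀ N : ℕ, ‖g 1 x - x‖ ≤ 2 * (2 * M / (N + 1 : ℕ)) := fun N =>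
    (hlip _ (differentiableOn_cesaroMean hd N)
      (fun y hy => norm_cesaroMean_le (fun m => hM m y hy) N)
      (fderiv_cesaroMean_eq_one hfderiv N) x hx _ hgx).trans <|
    mul_le_mul_of_nonneg_left (norm_cesaroMean_sub_le (fun m => hM m x hxR)
      (fun m => (hcomp m x hxR (ball_subset_ball hrR hgx)).symm) N) zero_le_two
  have hlim : Tendsto (fun N : ℕ => 2 * (2 * M / ((N + 1 : ℕ) : ℝ))) atTop (𝓝 0) := by
    simpa using (((tendsto_const_div_atTop_nhds_zero_nat (2 * M)).comp
      (tendsto_add_atTop_nat 1)).const_mul 2)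
  exact sub_eq_zero.mp (norm_le_zero_iff.mp (ge_of_tendsto' hlim hbound))

end Cartan

section Harnack

theorem norm_add_conj_sq_sub_norm_sub_sq (w z : ℂ) :
    ‖w + (starRingEnd ℂ) z‖ ^ 2 - ‖w - z‖ ^ 2 = 4 * (w.re * z.re) := by
  rw [Complex.sq_norm, Complex.sq_norm, normSq_apply, normSq_apply]
  simp only [sub_re, sub_im, add_re, add_im, conj_re, conj_im]
  ring

theorem norm_one_add_mul_sq_sub_norm_add_sq (r : ℝ) (ζ : ℂ) :
    ‖1 + r * ζ‖ ^ 2 - ‖ζ + r‖ ^ 2 = (1 - r ^ 2) * (1 - ‖ζ‖ ^ 2) := by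
  simp only [Complex.sq_norm, normSq_apply, add_re, add_im, ofReal_re, ofReal_im, one_re, one_im,
    mul_re, mul_im, zero_mul, sub_zero, add_zero, zero_add]
  ring

theorem moebius_mem_ball {r : ℝ} (hr : r ∈ Ico (0 : ℝ) 1) {ζ : ℂ} (hζ : ζ ∈ ball (0 : ℂ) 1) :
    1 + r * ζ ≠ 0 ∧ (ζ + r) / (1 + r * ζ) ∈ ball (0 : ℂ) 1 := by
  have hζ1 : ‖ζ‖ < 1 := mem_ball_zero_iff.mp hζ
  have hgap : 0 < (1 - r ^ 2) * (1 - ‖ζ‖ ^ 2) := by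
    have hr2 : r ^ 2 < 1 := pow_lt_one₀ hr.1 hr.2 two_ne_zero
    have hζ2 : ‖ζ‖ ^ 2 < 1 := pow_lt_one₀ (norm_nonneg ζ) hζ1 two_ne_zero
    exact mul_pos (sub_pos.mpr hr2) (sub_pos.mpr hζ2)
  have hlt : ‖ζ + r‖ < ‖1 + r * ζ‖ := by
    refine lt_of_pow_lt_pow_left₀ 2 (norm_nonneg _) ?_
    linarith [norm_one_add_mul_sq_sub_norm_add_sq r ζ]
  have hpos : 0 < ‖1 + r * ζ‖ := (norm_nonneg _).trans_lt hlt
  exact ⟨norm_pos_iff.mp hpos, by rwa [mem_ball_zero_iff, norm_div, div_lt_one hpos]⟩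

variable {E : Type*} [NormedAddCommGroup E] [NormedSpace ℂ E] {h : E → ℂ} {a y : E} {R : ℝ}

-- The Schwarz lemma, transported by the Cayley transform `w ↦ (w - h a) / (w + conj (h a))`.
theorem norm_sub_le_mul_norm_add_conj_of_re_nonneg (hd : DifferentiableOn ℂ h (ball a R))
    (hre : ∀ x ∈ ball a R, 0 ≤ (h x).re) (ha : 0 < (h a).re) (hy : y ∈ ball a R) :
    ‖h y - h a‖ ≤ ‖y - a‖ / R * ‖h y + (starRingEnd ℂ) (h a)‖ := by
  have hne : ∀ x ∈ ball a R, h x + (starRingEnd ℂ) (h a) ≠ 0 := fun x hx h0 => by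
    have hre0 := congrArg Complex.re h0
    rw [add_re, conj_re, zero_re] at hre0
    linarith [hre x hx]
  have hle : ∀ x ∈ ball a R, ‖h x - h a‖ ≤ ‖h x + (starRingEnd ℂ) (h a)‖ := fun x hx => by
    refine le_of_sq_le_sq ?_ (norm_nonneg _)
    linarith [norm_add_conj_sq_sub_norm_sub_sq (h x) (h a), mul_nonneg (hre x hx) ha.le]
  have hcayley := Complex.dist_le_div_mul_dist_of_mapsTo_ball (R₂ := 1) (c := a) (R₁ := R) (z := y)
    (f := fun x => (h x - h a) / (h x + (starRingEnd ℂ) (h a)))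
    (by simpa only [div_eq_mul_inv] using (hd.sub_const _).fun_mul ((hd.add_const _).fun_inv hne))
    (fun x hx => by
      rw [sub_self, zero_div, mem_closedBall_zero_iff, norm_div,
        div_le_one (norm_pos_iff.mpr (hne x hx))]
      exact hle x hx) hy
  simp only [sub_self, zero_div, norm_div, dist_eq_norm, sub_zero] at hcayley
  rw [div_le_iff₀ (norm_pos_iff.mpr (hne y hy))] at hcayley
  exact hcayley.trans_eq (by ring)

theorem harnack_of_re_nonneg (hd : DifferentiableOn ℂ h (ball a R))
    (hre : ∀ x ∈ ball a R, 0 ≤ (h x).re) (hy : y ∈ ball a R) :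
    (1 - ‖y - a‖ / R) * (h a).re ≤ (1 + ‖y - a‖ / R) * (h y).re := by
  have hR : 0 < R := nonempty_ball.mp ⟨_, hy⟩
  have hy0 := hre y hy
  have ht1 : ‖y - a‖ / R ≤ 1 := (div_le_one hR).mpr (mem_ball_iff_norm.mp hy).le
  rcases (hre a (mem_ball_self hR)).eq_or_lt with ha | ha
  · rw [← ha, mul_zero]
    positivity
  have hschwarz := norm_sub_le_mul_norm_add_conj_of_re_nonneg hd hre ha hy
  have ht0 : 0 ≤ ‖y - a‖ / R := by positivity
  set t := ‖y - a‖ / R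
  have hsq : ‖h y - h a‖ ^ 2 ≤ t ^ 2 * ‖h y + (starRingEnd ℂ) (h a)‖ ^ 2 := by
    rw [← mul_pow]
    gcongr
  have hsum : (h y).re + (h a).re ≤ ‖h y + (starRingEnd ℂ) (h a)‖ := by
    simpa using re_le_norm (h y + (starRingEnd ℂ) (h a))
  have hgap : (1 - t ^ 2) * ((h y).re + (h a).re) ^ 2 ≤ 4 * ((h y).re * (h a).re) :=
    calc (1 - t ^ 2) * ((h y).re + (h a).re) ^ 2
        ≤ (1 - t ^ 2) * ‖h y + (starRingEnd ℂ) (h a)‖ ^ 2 := by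
          have : 0 ≤ 1 - t ^ 2 := sub_nonneg.mpr (pow_le_one₀ ht0 ht1)
          gcongr
      _ ≤ 4 * ((h y).re * (h a).re) := by
          linarith [norm_add_conj_sq_sub_norm_sub_sq (h y) (h a)]
  have hsq_re : ((h a).re - (h y).re) ^ 2 ≤ (t * ((h y).re + (h a).re)) ^ 2 := by
    rw [mul_pow]
    linarith
  linarith [le_of_abs_le (abs_le_of_sq_le_sq hsq_re (by positivity))]

theorem norm_le_three_mul_of_re_nonneg (hd : DifferentiableOn ℂ h (ball a R))
    (hre : ∀ x ∈ ball a R, 0 ≤ (h x).re) (ha : 0 < (h a).re) (hy : y ∈ ball a R)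
    (hyR : ‖y - a‖ ≤ R / 2) : ‖h y‖ ≤ 3 * ‖h a‖ := by
  have hR : 0 < R := nonempty_ball.mp ⟨_, hy⟩
  have ht : ‖y - a‖ / R ≤ 1 / 2 := by rw [div_le_iff₀ hR]; linarith
  have hconj : ‖h y + (starRingEnd ℂ) (h a)‖ ≤ ‖h y‖ + ‖h a‖ :=
    (norm_add_le _ _).trans_eq (by rw [RCLike.norm_conj])
  have hsub : ‖h y - h a‖ ≤ 1 / 2 * (‖h y‖ + ‖h a‖) :=
    (norm_sub_le_mul_norm_add_conj_of_re_nonneg hd hre ha hy).trans (by gcongr)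
  linarith [norm_sub_norm_le (h y) (h a)]

theorem norm_fderiv_le_of_re_nonneg (hR : 0 < R) (hd : DifferentiableOn ℂ h (ball a R))
    (hre : ∀ x ∈ ball a R, 0 ≤ (h x).re) (ha : 0 < (h a).re) :
    ‖fderiv ℂ h a‖ ≤ 4 * (h a).re / R := by
  refine (hd.differentiableAt (ball_mem_nhds a hR)).hasFDerivAt.le_of_lip' (by positivity) ?_
  filter_upwards [ball_mem_nhds a (half_pos hR)] with y hy
  have hschwarz := norm_sub_le_mul_norm_add_conj_of_re_nonneg hd hre ha
    (ball_subset_ball (half_le_self hR.le) hy)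
  have ht : ‖y - a‖ / R ≤ 1 / 2 := by
    rw [div_le_iff₀ hR]
    linarith [mem_ball_iff_norm.mp hy]
  have hconj : ‖h y + (starRingEnd ℂ) (h a)‖ ≤ ‖h y - h a‖ + 2 * (h a).re := by
    have hsplit : h y + (starRingEnd ℂ) (h a) = (h y - h a) + (2 * (h a).re : ℝ) := by
      rw [← add_conj]
      ring
    rw [hsplit]
    refine (norm_add_le _ _).trans ?_
    rw [norm_real, Real.norm_of_nonneg (by positivity)]
  calc ‖h y - h a‖ = 2 * ‖h y - h a‖ - ‖h y - h a‖ := by ring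
    _ ≤ 2 * (‖y - a‖ / R * (‖h y - h a‖ + 2 * (h a).re)) - 2 * (1 / 2) * ‖h y - h a‖ := by
        linarith [hschwarz.trans (mul_le_mul_of_nonneg_left hconj (by positivity))]
    _ ≤ 2 * (‖y - a‖ / R * (‖h y - h a‖ + 2 * (h a).re)) - 2 * (‖y - a‖ / R) * ‖h y - h a‖ := by
        gcongr
    _ = 4 * (h a).re / R * ‖y - a‖ := by ring

-- Harnack's inequality for `h` precomposed with the automorphism `ζ ↦ (ζ + r) / (1 + r ζ)`.
theorem monotoneOn_re_mul_one_add_div_one_sub {h : ℂ → ℂ} (hd : DifferentiableOn ℂ h (ball 0 1))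
    (hre : ∀ ζ ∈ ball (0 : ℂ) 1, 0 ≤ (h ζ).re) :
    MonotoneOn (fun r : ℝ => (h r).re * ((1 + r) / (1 - r))) (Ico 0 1) := by
  intro r hr r' hr' hrr
  have hr1 : 0 < 1 - r := sub_pos.mpr hr.2
  have hr1' : 0 < 1 - r' := sub_pos.mpr hr'.2
  have hprod : 0 < 1 - r * r' :=
    sub_pos.mpr (mul_lt_one_of_nonneg_of_lt_one_left hr.1 hr.2 hr'.2.le)
  obtain ⟨s, hs⟩ : ∃ s, s = (r' - r) / (1 - r * r') := ⟨_, rfl⟩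
  have hs_mul : s * (1 - r * r') = r' - r := (eq_div_iff hprod.ne').mp hs
  have hs_sub : 1 - s = (1 - r') * (1 + r) / (1 - r * r') := by
    rw [eq_div_iff hprod.ne']
    linear_combination -hs_mul
  have hs_add : 1 + s = (1 + r') * (1 - r) / (1 - r * r') := by
    rw [eq_div_iff hprod.ne']
    linear_combination hs_mul
  have hs0 : 0 ≤ s := hs ▸ div_nonneg (sub_nonneg.mpr hrr) hprod.le
  have hs1 : 0 < 1 - s := by
    rw [hs_sub]
    exact div_pos (mul_pos hr1' (by linarith [hr.1])) hprod
  have hs_norm : ‖(s : ℂ)‖ = s := by rw [norm_real, Real.norm_of_nonneg hs0]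
  have hmoebius_s : ((s : ℂ) + r) / (1 + r * s) = r' := by
    have hreal : (s + r) / (1 + r * s) = r' := by
      rw [div_eq_iff (by have := hr.1; positivity)]
      linear_combination hs_mul
    exact_mod_cast congrArg ((↑) : ℝ → ℂ) hreal
  have hharnack := harnack_of_re_nonneg (h := fun ζ => h ((ζ + r) / (1 + r * ζ))) (a := 0) (R := 1)
    (y := (s : ℂ)) (hd.comp (t := ball 0 1) (DifferentiableOn.div (by fun_prop) (by fun_prop)
      fun ζ hζ => (moebius_mem_ball hr hζ).1) fun ζ hζ => (moebius_mem_ball hr hζ).2)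
    (fun ζ hζ => hre _ (moebius_mem_ball hr hζ).2)
    (by rw [mem_ball_zero_iff, hs_norm]; linarith)
  simp only [hmoebius_s, sub_zero, hs_norm, div_one, zero_add, mul_zero, add_zero] at hharnack
  rw [hs_sub, hs_add, div_mul_eq_mul_div, div_mul_eq_mul_div,
    div_le_div_iff_of_pos_right hprod] at hharnack
  change (h r).re * ((1 + r) / (1 - r)) ≤ (h r').re * ((1 + r') / (1 - r'))
  rw [← mul_div_assoc, ← mul_div_assoc, div_le_div_iff₀ hr1 hr1']
  linarith

end Harnack

section SmoothFunctions

variable {E F : Type*} [NormedAddCommGroup E] [NormedSpace ℝ E]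
  [NormedAddCommGroup F] [NormedSpace ℝ F]

theorem hasDerivAt_comp_line {f : E → F} {f' : E →L[ℝ] F} {x v : E} {t : ℝ}
    (hf : HasFDerivAt f f' (x + t • v)) : HasDerivAt (fun s : ℝ => f (x + s • v)) (f' v) t := by
  have hline : HasDerivAt (fun s : ℝ => x + s • v) v t := by
    simpa using ((hasDerivAt_id t).smul_const v).const_add x
  exact hf.comp_hasDerivAt t hline

theorem exists_eq_add_add_half_of_hasDerivAt {g g' g'' : ℝ → ℝ} (hg : ∀ t, HasDerivAt g (g' t) t)
    (hg' : ∀ t, HasDerivAt g' (g'' t) t) : ∃ θ ∈ Ioo (0 : ℝ) 1, g 1 = g 0 + g' 0 + g'' θ / 2 := by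
  obtain ⟨s, hs, hsg⟩ := exists_ratio_hasDerivAt_eq_ratio_slope
    (fun t => g t - t * g' 0) (fun t => g' t - 1 * g' 0) one_pos
    (fun t _ => ((hg t).sub ((hasDerivAt_id t).mul_const _)).continuousAt.continuousWithinAt)
    (fun t _ => (hg t).sub ((hasDerivAt_id t).mul_const _))
    (fun t => t ^ 2) (fun t => 2 * t) (by fun_prop) (fun t _ => by simpa using hasDerivAt_pow 2 t)
  obtain ⟨θ, hθ, hθg⟩ := exists_hasDerivAt_eq_slope g' g'' hs.1
    (fun t _ => (hg' t).continuousAt.continuousWithinAt) (fun t _ => hg' t)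
  rw [sub_zero, eq_div_iff hs.1.ne'] at hθg
  refine ⟨θ, ⟨hθ.1, hθ.2.trans hs.2⟩, ?_⟩
  have : s * (g 1 - (g 0 + g' 0 + g'' θ / 2)) = 0 := by linear_combination -hθg / 2 - hsg / 2
  linarith [(mul_eq_zero.mp this).resolve_left hs.1.ne']

theorem exists_eq_add_fderiv_add_half_hessian {ρ : E → ℝ} (hρ : ContDiff ℝ 2 ρ) (b x : E) :
    ∃ θ ∈ Ioo (0 : ℝ) 1, ρ x = ρ b + fderiv ℝ ρ b (x - b) +
      fderiv ℝ (fderiv ℝ ρ) (b + θ • (x - b)) (x - b) (x - b) / 2 := by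
  have hρ' : Differentiable ℝ (fderiv ℝ ρ) :=
    (hρ.fderiv_right (m := 1) (by norm_num)).differentiable (by norm_num)
  simpa using exists_eq_add_add_half_of_hasDerivAt
    (fun t => hasDerivAt_comp_line (hρ.differentiable (by norm_num) (b + t • (x - b))).hasFDerivAt)
    (fun t => (hasDerivAt_comp_line (hρ' (b + t • (x - b))).hasFDerivAt).clm_apply
      (hasDerivAt_const t (x - b)))

theorem exists_taylor_bound [FiniteDimensional ℝ E] {ρ : E → ℝ} (hρ : ContDiff ℝ 2 ρ) (r : ℝ) :
    ∃ L > 0, (∀ b ∈ closedBall (0 : E) r, ‖fderiv ℝ ρ b‖ ≤ L) ∧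
      ∀ b ∈ closedBall (0 : E) r, ∀ x ∈ closedBall (0 : E) r, ∀ y ∈ closedBall (0 : E) r,
        |ρ y - ρ x - fderiv ℝ ρ b (y - x)| ≤ L * (‖x - b‖ + ‖y - x‖) * ‖y - x‖ := by
  have : ProperSpace E := FiniteDimensional.proper ℝ E
  have hρ' : ContDiff ℝ 1 (fderiv ℝ ρ) := hρ.fderiv_right (by norm_num)
  obtain ⟨L₁, hL₁⟩ := (isCompact_closedBall (0 : E) r).exists_bound_of_continuousOn
    hρ'.continuous.continuousOn
  obtain ⟨L₂, hL₂⟩ := (isCompact_closedBall (0 : E) r).exists_bound_of_continuousOn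
    (hρ'.continuous_fderiv (by norm_num)).continuousOn
  have hconv : Convex ℝ (closedBall (0 : E) r) := convex_closedBall _ _
  have hL : 0 < max 1 (max L₁ L₂) := lt_max_of_lt_left one_pos
  have hLip : ∀ b ∈ closedBall (0 : E) r, ∀ x ∈ closedBall (0 : E) r,
      ‖fderiv ℝ ρ x - fderiv ℝ ρ b‖ ≤ max 1 (max L₁ L₂) * ‖x - b‖ := fun b hb x hx =>
    hconv.norm_image_sub_le_of_norm_fderiv_le (𝕜 := ℝ)
      (fun z _ => hρ'.differentiable (by norm_num) z) (fun z hz => (hL₂ z hz).trans (by simp)) hb hx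
  refine ⟨max 1 (max L₁ L₂), hL, fun b hb => (hL₁ b hb).trans (by simp), fun b hb x hx y hy => ?_⟩
  exact (hconv.inter (convex_closedBall b (‖x - b‖ + ‖y - x‖))).norm_image_sub_le_of_norm_fderiv_le'
    (𝕜 := ℝ) (φ := fderiv ℝ ρ b) (fun z _ => hρ.differentiable (by norm_num) z)
    (fun z hz => (hLip b hb z hz.1).trans (mul_le_mul_of_nonneg_left
      (mem_closedBall_iff_norm.mp hz.2) hL.le))
    ⟨hx, mem_closedBall_iff_norm.mpr (by simp)⟩
    ⟨hy, mem_closedBall_iff_norm.mpr (by simpa [add_comm] using norm_add_le (y - x) (x - b))⟩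

theorem eventually_pos_of_hessian_pos {ρ : E → ℝ} (hρ : ContDiff ℝ 2 ρ) {b v : E}
    (hb : ρ b = 0) (hv : fderiv ℝ ρ b v = 0) (hvv : 0 < fderiv ℝ (fderiv ℝ ρ) b v v) :
    ∀ᶠ s : ℝ in 𝓝[>] 0, 0 < ρ (b + s • v) := by
  have hnear : ∀ᶠ s : ℝ in 𝓝 0, ∀ θ ∈ Icc (0 : ℝ) 1,
      0 < fderiv ℝ (fderiv ℝ ρ) (b + θ • s • v) v v := by
    refine isCompact_Icc.eventually_forall_of_forall_eventually fun θ _ => ?_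
    have hc : Continuous fun q : ℝ × ℝ => fderiv ℝ (fderiv ℝ ρ) (b + q.2 • q.1 • v) v v :=
      (((hρ.fderiv_right (m := 1) (by norm_num)).continuous_fderiv (by norm_num)).comp
        (by fun_prop : Continuous fun q : ℝ × ℝ => b + q.2 • q.1 • v)).clm_apply
        continuous_const |>.clm_apply continuous_const
    exact (hc.tendsto (0, θ)).eventually_const_lt (by simpa using hvv)
  filter_upwards [nhdsWithin_le_nhds hnear, self_mem_nhdsWithin] with s hs hs0
  obtain ⟨θ, hθ, h⟩ := exists_eq_add_fderiv_add_half_hessian hρ b (b + s • v)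
  rw [h, add_sub_cancel_left, hb]
  simp only [map_smul, hv, smul_apply, smul_eq_mul]
  have := hs θ (Ioo_subset_Icc_self hθ)
  have hs0 : 0 < s := hs0
  ring_nf
  positivity

end SmoothFunctions

theorem exists_pos_forall_of_isCompact {X : Type*} [TopologicalSpace X] {K : Set X}
    (hK : IsCompact K) {P : ℝ → X → Prop} (hmono : ∀ c₁ c₂ x, c₁ ≤ c₂ → P c₂ x → P c₁ x)
    (hP : ∀ x ∈ K, ∃ c > 0, ∀ᶠ y in 𝓝[K] x, P c y) : ∃ c > 0, ∀ x ∈ K, P c x := by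
  refine hK.induction_on (p := fun s => ∃ c > 0, ∀ x ∈ s, P c x) ⟨1, one_pos, by simp⟩
    (fun s t hst ⟨c, hc, h⟩ => ⟨c, hc, fun x hx => h x (hst hx)⟩) ?_
    fun x hx => (hP x hx).elim fun c hc => ⟨_, hc.2, c, hc.1, fun _ hy => hy⟩
  rintro s t ⟨c, hc, hs⟩ ⟨d, hd, ht⟩
  refine ⟨min c d, lt_min hc hd, fun x hx => hx.elim
    (fun h => hmono _ _ x (min_le_left _ _) (hs x h))
    fun h => hmono _ _ x (min_le_right _ _) (ht x h)⟩

section StrongConvexity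

/-- A bounded domain given by a regular `C²` defining function whose second derivative is positive
definite on the tangent spaces of the boundary. -/
structure IsStronglyConvexDomain {E : Type*} [NormedAddCommGroup E] [NormedSpace ℝ E]
    (Ω : Set E) (ρ : E → ℝ) : Prop where
  contDiff : ContDiff ℝ 2 ρ
  isOpen : IsOpen Ω
  isPreconnected : IsPreconnected Ω
  isBounded : Bornology.IsBounded Ω
  eq_setOf : Ω = {z | ρ z < 0}
  frontier_eq : frontier Ω = {z | ρ z = 0}
  fderiv_ne_zero : ∀ q ∈ frontier Ω, fderiv ℝ ρ q ≠ 0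
  hessian_pos : ∀ q ∈ frontier Ω, ∀ ξ : E, ξ ≠ 0 → fderiv ℝ ρ q ξ = 0 →
    0 < fderiv ℝ (fderiv ℝ ρ) q ξ ξ

namespace IsStronglyConvexDomain

variable {E : Type*} [NormedAddCommGroup E] [NormedSpace ℝ E]
  {Ω : Set E} {ρ : E → ℝ}

theorem nonpos_of_mem_closure (h : IsStronglyConvexDomain Ω ρ) {x : E} (hx : x ∈ closure Ω) :
    ρ x ≤ 0 := by
  have hsub : Ω ⊆ {z | ρ z ≤ 0} := fun z hz => by
    rw [h.eq_setOf] at hz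
    exact le_of_lt (show ρ z < 0 from hz)
  exact (isClosed_le h.contDiff.continuous continuous_const).closure_subset_iff.mpr hsub hx

theorem eq_zero_of_mem_frontier (h : IsStronglyConvexDomain Ω ρ) {x : E} (hx : x ∈ frontier Ω) :
    ρ x = 0 := by
  rwa [h.frontier_eq] at hx

theorem differentiable (h : IsStronglyConvexDomain Ω ρ) : Differentiable ℝ ρ :=
  h.contDiff.differentiable (by norm_num)

theorem continuous_fderiv (h : IsStronglyConvexDomain Ω ρ) : Continuous (fderiv ℝ ρ) :=
  h.contDiff.continuous_fderiv (by norm_num)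

theorem continuous_hessian (h : IsStronglyConvexDomain Ω ρ) :
    Continuous (fderiv ℝ (fderiv ℝ ρ)) :=
  (h.contDiff.fderiv_right (m := 1) (by norm_num)).continuous_fderiv (by norm_num)

theorem eventually_pos_of_tangent (h : IsStronglyConvexDomain Ω ρ) {b v : E}
    (hb : b ∈ frontier Ω) (hv : v ≠ 0) (hDv : fderiv ℝ ρ b v = 0) :
    ∀ᶠ s : ℝ in 𝓝[>] 0, 0 < ρ (b + s • v) :=
  eventually_pos_of_hessian_pos h.contDiff (h.eq_zero_of_mem_frontier hb) hDv
    (h.hessian_pos b hb v hv hDv)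

theorem mem_of_segment_subset_closure (h : IsStronglyConvexDomain Ω ρ) {x y : E} (hx : x ∈ Ω)
    (hy : y ∈ Ω) (hxy : ∀ s ∈ Icc (0 : ℝ) 1, x + s • (y - x) ∈ closure Ω) {t : ℝ}
    (ht : t ∈ Icc (0 : ℝ) 1) : x + t • (y - x) ∈ Ω := by
  by_contra hb
  have hbf : x + t • (y - x) ∈ frontier Ω := h.isOpen.frontier_eq ▸ ⟨hxy t ht, hb⟩
  have ht0 : 0 < t := ht.1.lt_of_ne' fun h0 => hb (by simpa [h0] using hx)
  have ht1 : t < 1 := ht.2.lt_of_ne fun h1 => hb (by simpa [h1] using hy)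
  have hv : y - x ≠ 0 := fun h0 => hb (by simpa [h0] using hx)
  have hmax : IsLocalMax (fun s : ℝ => ρ (x + s • (y - x))) t := by
    filter_upwards [Icc_mem_nhds ht0 ht1] with s hs
    exact (h.nonpos_of_mem_closure (hxy s hs)).trans_eq (h.eq_zero_of_mem_frontier hbf).symm
  have htangent := hmax.hasDerivAt_eq_zero (hasDerivAt_comp_line (h.differentiable _).hasFDerivAt)
  obtain ⟨s, hs, hs0⟩ := ((h.eventually_pos_of_tangent hbf hv htangent).and
    (Ioo_mem_nhdsGT (sub_pos.mpr ht1))).exists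
  rw [add_assoc, ← add_smul] at hs
  exact hs.not_ge (h.nonpos_of_mem_closure (hxy _ ⟨by linarith [hs0.1], by linarith [hs0.2]⟩))

-- The set of points visible from `x` is open, and by strict convexity it is closed in `Ω`.
theorem convex (h : IsStronglyConvexDomain Ω ρ) : Convex ℝ Ω := by
  suffices hvis : ∀ x ∈ Ω, Ω ⊆ {y | ∀ t ∈ Icc (0 : ℝ) 1, x + t • (y - x) ∈ Ω} by
    refine fun x hx => starConvex_iff_segment_subset.mpr fun y hy => ?_
    rw [segment_eq_image']
    exact image_subset_iff.mpr (hvis x hx hy)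
  intro x hx
  refine h.isPreconnected.subset_of_closure_inter_subset ?_ ⟨x, hx, fun t _ => by simpa using hx⟩ ?_
  · refine isOpen_iff_mem_nhds.mpr fun y hy => isCompact_Icc.eventually_forall_of_forall_eventually
      (P := fun y t => x + t • (y - x) ∈ Ω) fun t ht => ?_
    have hcont : ContinuousAt (fun z : E × ℝ => x + z.2 • (z.1 - x)) (y, t) := by fun_prop
    exact hcont.eventually (h.isOpen.mem_nhds (hy t ht))
  · rintro y ⟨hy, hyΩ⟩ t ht
    refine h.mem_of_segment_subset_closure hx hyΩ (fun s hs => ?_) ht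
    have hcont : Continuous fun z : E => x + s • (z - x) := by fun_prop
    exact map_mem_closure (f := fun z : E => x + s • (z - x)) hcont hy fun z hz => hz s hs

theorem fderiv_sub_nonpos (h : IsStronglyConvexDomain Ω ρ) {b x : E} (hb : b ∈ frontier Ω)
    (hx : x ∈ closure Ω) : fderiv ℝ ρ b (x - b) ≤ 0 := by
  have hder := hasDerivAt_comp_line (f := ρ) (x := b) (v := x - b) (t := 0)
    (h.differentiable _).hasFDerivAt
  rw [zero_smul, add_zero] at hder
  refine le_of_tendsto hder.tendsto_slope_zero_right ?_
  filter_upwards [Ioo_mem_nhdsGT (show (0 : ℝ) < 1 by norm_num)] with t ht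
  have hmem : b + t • (x - b) ∈ closure Ω :=
    h.convex.closure.add_smul_sub_mem (frontier_subset_closure hb) hx ⟨ht.1.le, ht.2.le⟩
  simp only [zero_add, zero_smul, add_zero, h.eq_zero_of_mem_frontier hb, sub_zero, smul_eq_mul]
  exact mul_nonpos_of_nonneg_of_nonpos (inv_nonneg.mpr ht.1.le) (h.nonpos_of_mem_closure hmem)

theorem fderiv_sub_neg (h : IsStronglyConvexDomain Ω ρ) {b x : E} (hb : b ∈ frontier Ω)
    (hx : x ∈ closure Ω) (hxb : x ≠ b) : fderiv ℝ ρ b (x - b) < 0 := by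
  refine (h.fderiv_sub_nonpos hb hx).lt_of_ne fun h0 => ?_
  obtain ⟨s, hs, hs0⟩ := ((h.eventually_pos_of_tangent hb (sub_ne_zero.mpr hxb) h0).and
    (Ioo_mem_nhdsGT one_pos)).exists
  exact hs.not_ge (h.nonpos_of_mem_closure (h.convex.closure.add_smul_sub_mem
    (frontier_subset_closure hb) hx ⟨hs0.1.le, hs0.2.le⟩))

variable [FiniteDimensional ℝ E]

theorem exists_eventually_le_max_fderiv_hessian (h : IsStronglyConvexDomain Ω ρ) {b : E}
    (hb : b ∈ frontier Ω) : ∃ m > 0, ∀ᶠ q : E × E in 𝓝 (b, b), ∀ v : E, ‖v‖ ≤ 1 →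
      m * ‖v‖ ^ 2 ≤ max |fderiv ℝ ρ q.1 v| (fderiv ℝ (fderiv ℝ ρ) q.2 v v) := by
  have hD := h.continuous_fderiv
  have hH := h.continuous_hessian
  have hcont : Continuous fun q : (E × E) × E =>
      max |fderiv ℝ ρ q.1.1 q.2| (fderiv ℝ (fderiv ℝ ρ) q.1.2 q.2 q.2) := by fun_prop
  have hsphere : IsCompact (sphere (0 : E) 1) :=
    have : ProperSpace E := FiniteDimensional.proper ℝ E
    isCompact_sphere 0 1
  obtain ⟨m, hm, hlt⟩ : ∃ m > 0, ∀ ξ ∈ sphere (0 : E) 1,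
      m ≤ max |fderiv ℝ ρ b ξ| (fderiv ℝ (fderiv ℝ ρ) b ξ ξ) := by
    refine hsphere.exists_forall_le' (f := fun ξ =>
        max |fderiv ℝ ρ b ξ| (fderiv ℝ (fderiv ℝ ρ) b ξ ξ))
      (hcont.comp (.prodMk_right (b, b))).continuousOn fun ξ hξ => ?_
    by_cases hξ0 : fderiv ℝ ρ b ξ = 0
    · exact lt_max_of_lt_right (h.hessian_pos b hb ξ (ne_zero_of_mem_unit_sphere ⟨ξ, hξ⟩) hξ0)
    · exact lt_max_of_lt_left (abs_pos.mpr hξ0)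
  refine ⟨m / 2, half_pos hm, ?_⟩
  have hev := hsphere.eventually_forall_of_forall_eventually (x₀ := (b, b)) (P := fun q ξ =>
    m / 2 < max |fderiv ℝ ρ q.1 ξ| (fderiv ℝ (fderiv ℝ ρ) q.2 ξ ξ)) fun ξ hξ =>
      (hcont.tendsto ((b, b), ξ)).eventually_const_lt ((half_lt_self hm).trans_le (hlt ξ hξ))
  filter_upwards [hev] with q hq v hv
  rcases eq_or_ne v 0 with rfl | hv0
  · simp
  have hr : 0 < ‖v‖ := norm_pos_iff.mpr hv0
  obtain ⟨ξ, hξ, hvξ⟩ : ∃ ξ ∈ sphere (0 : E) 1, v = ‖v‖ • ξ :=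
    ⟨‖v‖⁻¹ • v, by simp [norm_smul, hr.ne'], by simp [smul_smul, hr.ne']⟩
  generalize ‖v‖ = r at *
  subst hvξ
  simp only [map_smul, smul_apply, smul_eq_mul, abs_mul, abs_of_pos hr]
  rcases lt_max_iff.mp (hq ξ hξ) with h1 | h1
  · refine le_max_of_le_left ?_
    nlinarith [mul_le_mul_of_nonneg_left h1.le hr.le, mul_le_mul_of_nonneg_left hv hr.le]
  · refine le_max_of_le_right ?_
    nlinarith [mul_le_mul_of_nonneg_left h1.le (mul_pos hr hr).le]

theorem exists_eventually_quadratic_support_self (h : IsStronglyConvexDomain Ω ρ) {b₀ : E}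
    (hb₀ : b₀ ∈ frontier Ω) : ∃ c > 0, ∀ᶠ q in 𝓝[frontier Ω ×ˢ closure Ω] (b₀, b₀),
      c * ‖q.2 - q.1‖ ^ 2 ≤ -fderiv ℝ ρ q.1 (q.2 - q.1) := by
  obtain ⟨m, hm, hev⟩ := h.exists_eventually_le_max_fderiv_hessian hb₀
  obtain ⟨ε, hε, hball⟩ := Metric.eventually_nhds_iff_ball.mp hev
  refine ⟨m / 2, half_pos hm, ?_⟩
  filter_upwards [self_mem_nhdsWithin, nhdsWithin_le_nhds (ball_mem_nhds _ hε),
    nhdsWithin_le_nhds (ball_mem_nhds _ (half_pos one_pos))] with q hq hqε hq1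
  obtain ⟨b, x⟩ := q
  obtain ⟨hb, hx⟩ : b ∈ frontier Ω ∧ x ∈ closure Ω := hq
  rw [← ball_prod_same] at hqε hq1
  have hD := h.fderiv_sub_nonpos hb hx
  obtain ⟨θ, hθ, htaylor⟩ := exists_eq_add_fderiv_add_half_hessian h.contDiff b x
  rw [h.eq_zero_of_mem_frontier hb] at htaylor
  have hwε : (b, b + θ • (x - b)) ∈ ball (b₀, b₀) ε := by
    rw [← ball_prod_same]
    exact ⟨hqε.1, (convex_ball b₀ ε).add_smul_sub_mem hqε.1 hqε.2 (Ioo_subset_Icc_self hθ)⟩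
  have hnorm : ‖x - b‖ ≤ 1 := by
    rw [← dist_eq_norm]
    linarith [dist_triangle_right x b b₀, mem_ball.mp hq1.1, mem_ball.mp hq1.2]
  have hmax := hball _ hwε _ hnorm
  rw [abs_of_nonpos hD] at hmax
  rcases le_max_iff.mp hmax with h1 | h1
  · nlinarith [sq_nonneg ‖x - b‖]
  · linarith [h.nonpos_of_mem_closure hx]

theorem exists_quadratic_support (h : IsStronglyConvexDomain Ω ρ) :
    ∃ c > 0, ∀ b ∈ frontier Ω, ∀ x ∈ closure Ω, c * ‖x - b‖ ^ 2 ≤ -fderiv ℝ ρ b (x - b) := by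
  have : ProperSpace E := FiniteDimensional.proper ℝ E
  have hK : IsCompact (frontier Ω ×ˢ closure Ω) :=
    (h.isBounded.isCompact_closure.of_isClosed_subset isClosed_frontier
      frontier_subset_closure).prod h.isBounded.isCompact_closure
  suffices ∃ c > 0, ∀ q ∈ frontier Ω ×ˢ closure Ω,
      c * ‖q.2 - q.1‖ ^ 2 ≤ -fderiv ℝ ρ q.1 (q.2 - q.1) by
    obtain ⟨c, hc, hq⟩ := this
    exact ⟨c, hc, fun b hb x hx => hq (b, x) ⟨hb, hx⟩⟩
  refine exists_pos_forall_of_isCompact hK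
    (fun c₁ c₂ q hc hq => (mul_le_mul_of_nonneg_right hc (sq_nonneg _)).trans hq) ?_
  rintro ⟨b, x⟩ ⟨hb, hx⟩
  rcases eq_or_ne x b with rfl | hxb
  · exact h.exists_eventually_quadratic_support_self hb
  have hneg := neg_pos.mpr (h.fderiv_sub_neg hb hx hxb)
  have hr : 0 < ‖x - b‖ := norm_pos_iff.mpr (sub_ne_zero.mpr hxb)
  have hD := h.continuous_fderiv
  set c := -fderiv ℝ ρ b (x - b) / (2 * ‖x - b‖ ^ 2) with hc
  have hcont : Continuous fun q : E × E =>
      -fderiv ℝ ρ q.1 (q.2 - q.1) - c * ‖q.2 - q.1‖ ^ 2 := by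
    fun_prop
  refine ⟨c, by positivity, nhdsWithin_le_nhds ?_⟩
  filter_upwards [(hcont.tendsto (b, x)).eventually_const_lt (u := 0) (by
    simp only [hc]
    field_simp
    linarith)] with q hq
  exact (sub_pos.mp hq).le

end IsStronglyConvexDomain

end StrongConvexity

section LocalGeometry

/-- The geometric properties of a strongly convex domain `Ω` near a boundary point `p` with complex
conormal `ω`: a uniform quadratic support of the whole boundary, quadratic contact of `Ω` with the
half-space `{x | 0 < re (ω (x - p))}` from both sides, and room for displacements of size `δ` in the
conormal and `√δ` in the complex tangential directions at the points at distance of order `δ` from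
the boundary and `√δ` from `p`. -/
structure StronglyConvexAt {E : Type*} [NormedAddCommGroup E] [NormedSpace ℂ E]
    (Ω : Set E) (p : E) (ω : E →L[ℂ] ℂ) : Prop where
  isOpen : IsOpen Ω
  bounded : ∃ R > 0, ∀ x ∈ Ω, ‖x‖ ≤ R
  segment : ∀ x ∈ Ω, ∀ y ∈ Ω, ∀ t ∈ Icc (0 : ℝ) 1, x + (t : ℂ) • (y - x) ∈ Ω
  mem_frontier : p ∈ frontier Ω
  support : ∃ c > 0, ∃ K > 0, ∀ b ∈ frontier Ω, ∃ η : E →L[ℂ] ℂ, ‖η‖ ≤ K ∧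
    ∀ x ∈ closure Ω, c * ‖x - b‖ ^ 2 ≤ (η (x - b)).re
  support_at : ∃ c > 0, ∀ x ∈ closure Ω, c * ‖x - p‖ ^ 2 ≤ (ω (x - p)).re
  mem_of_lt : ∃ C > 0, ∀ x, C * ‖x - p‖ ^ 2 < (ω (x - p)).re → x ∈ Ω
  add_mem : ∀ a > 0, ∀ B > 0, ∃ κ > 0, ∀ᶠ δ in 𝓝[>] (0 : ℝ), ∀ x ∈ Ω, ∀ h,
    ‖x - p‖ ^ 2 ≤ B * δ → ball x (a * δ) ⊆ Ω → ‖ω h‖ ≤ κ * δ → ‖h‖ ^ 2 ≤ κ ^ 2 * δ → x + h ∈ Ω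

variable {E : Type*} [NormedAddCommGroup E] [NormedSpace ℝ E]
  {Ω : Set E} {ρ : E → ℝ} {p : E}

namespace IsStronglyConvexDomain

theorem exists_fderiv_eq_neg_one (h : IsStronglyConvexDomain Ω ρ) (hp : p ∈ frontier Ω) :
    ∃ v, fderiv ℝ ρ p v = -1 := by
  obtain ⟨w, hw⟩ := DFunLike.ne_iff.mp (h.fderiv_ne_zero p hp)
  rw [zero_apply] at hw
  exact ⟨(-(fderiv ℝ ρ p w)⁻¹) • w, by simp [hw]⟩

variable [FiniteDimensional ℝ E]

theorem exists_taylor_bound_thickening (h : IsStronglyConvexDomain Ω ρ) :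
    ∃ L > 0, (∀ b ∈ closure Ω, ‖fderiv ℝ ρ b‖ ≤ L) ∧ ∀ b ∈ closure Ω, ∀ x ∈ closure Ω, ∀ u : E,
      ‖u‖ ≤ 1 → |ρ (x + u) - ρ x - fderiv ℝ ρ b u| ≤ L * (‖x - b‖ + ‖u‖) * ‖u‖ := by
  obtain ⟨r, hr⟩ := h.isBounded.closure.subset_closedBall (0 : E)
  obtain ⟨L, hL, hD, hT⟩ := exists_taylor_bound h.contDiff (r + 1)
  have hsub := hr.trans (closedBall_subset_closedBall (by linarith : r ≤ r + 1))
  refine ⟨L, hL, fun b hb => hD b (hsub hb), fun b hb x hx u hu => ?_⟩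
  have hxu : x + u ∈ closedBall (0 : E) (r + 1) := mem_closedBall_zero_iff.mpr <|
    (norm_add_le _ _).trans (add_le_add (mem_closedBall_zero_iff.mp (hr hx)) hu)
  simpa using hT b (hsub hb) x (hsub hx) (x + u) hxu

-- Moving from `x` towards the boundary by a fraction of `a * δ` stays in `Ω` and increases `ρ`.
theorem exists_forall_le_of_ball_subset (h : IsStronglyConvexDomain Ω ρ) (hp : p ∈ frontier Ω)
    {a : ℝ} (ha : 0 < a) (B : ℝ) : ∃ s > 0, ∀ᶠ δ in 𝓝[>] (0 : ℝ), ∀ x ∈ Ω,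
      ‖x - p‖ ^ 2 ≤ B * δ → ball x (a * δ) ⊆ Ω → ρ x ≤ -(s * δ) := by
  obtain ⟨L, hL, -, hT⟩ := h.exists_taylor_bound_thickening
  obtain ⟨v, hv⟩ := h.exists_fderiv_eq_neg_one hp
  set s := a / (‖v‖ + 1) with hs
  have hs0 : 0 < s := by positivity
  have hsv : s * ‖v‖ < a := by
    rw [hs, div_mul_eq_mul_div, div_lt_iff₀ (by positivity)]
    linarith
  have hsmall : ∀ᶠ δ in 𝓝[>] (0 : ℝ),
      L * (√(B * δ) + s * δ * ‖v‖) * ‖v‖ < 1 / 2 ∧ s * δ * ‖v‖ < 1 := by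
    have hcont : Continuous fun δ : ℝ => L * (√(B * δ) + s * δ * ‖v‖) * ‖v‖ := by fun_prop
    have hcont' : Continuous fun δ : ℝ => s * δ * ‖v‖ := by fun_prop
    exact nhdsWithin_le_nhds (((hcont.tendsto 0).eventually_lt_const (by simp)).and
      ((hcont'.tendsto 0).eventually_lt_const (by simp)))
  refine ⟨s / 2, half_pos hs0, ?_⟩
  filter_upwards [hsmall, self_mem_nhdsWithin] with δ ⟨hδ, hδ1⟩ (hδ0 : 0 < δ) x hx hxp hball
  have hnorm : ‖-((s * δ) • v)‖ = s * δ * ‖v‖ := by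
    rw [norm_neg, norm_smul, Real.norm_of_nonneg (by positivity)]
  have hmem : ρ (x + -((s * δ) • v)) < 0 := by
    have : x + -((s * δ) • v) ∈ Ω := hball <| by
      rw [mem_ball_iff_norm, add_sub_cancel_left, hnorm]
      nlinarith
    rwa [h.eq_setOf] at this
  have htaylor := (abs_le.mp (hT p (frontier_subset_closure hp) x (subset_closure hx)
    (-((s * δ) • v)) (hnorm ▸ hδ1.le))).1
  rw [hnorm, map_neg, map_smul, hv, smul_eq_mul] at htaylor
  have herr : L * (‖x - p‖ + s * δ * ‖v‖) * (s * δ * ‖v‖) ≤ s * δ * (1 / 2) := by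
    calc L * (‖x - p‖ + s * δ * ‖v‖) * (s * δ * ‖v‖)
        = s * δ * (L * (‖x - p‖ + s * δ * ‖v‖) * ‖v‖) := by ring
      _ ≤ s * δ * (L * (√(B * δ) + s * δ * ‖v‖) * ‖v‖) := by
          gcongr
          exact Real.le_sqrt_of_sq_le hxp
      _ ≤ s * δ * (1 / 2) := by gcongr
  linarith

theorem exists_forall_add_mem (h : IsStronglyConvexDomain Ω ρ) (hp : p ∈ frontier Ω) {a B : ℝ}
    (ha : 0 < a) (hB : 0 < B) : ∃ κ > 0, ∀ᶠ δ in 𝓝[>] (0 : ℝ), ∀ x ∈ Ω, ∀ u,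
      ‖x - p‖ ^ 2 ≤ B * δ → ball x (a * δ) ⊆ Ω → fderiv ℝ ρ p u ≤ κ * δ →
        ‖u‖ ^ 2 ≤ κ ^ 2 * δ → x + u ∈ Ω := by
  obtain ⟨L, hL, -, hT⟩ := h.exists_taylor_bound_thickening
  obtain ⟨s, hs, hdepth⟩ := h.exists_forall_le_of_ball_subset hp ha B
  set κ := min 1 (s / (2 * (1 + L * (√B + 1))))
  have hκ0 : 0 < κ := lt_min one_pos (by positivity)
  have hκ1 : κ ≤ 1 := min_le_left _ _
  have hκs : κ * (1 + L * (√B + 1)) ≤ s / 2 := by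
    have := (le_div_iff₀ (by positivity)).mp (min_le_right 1 (s / (2 * (1 + L * (√B + 1)))))
    linarith
  refine ⟨κ, hκ0, ?_⟩
  filter_upwards [hdepth, Ioo_mem_nhdsGT (show (0 : ℝ) < 1 by norm_num)] with δ hδ ⟨hδ0, hδ1⟩ x hx u
    hxp hball hu hu2
  have hxp' : ‖x - p‖ ≤ √B * √δ := Real.sqrt_mul hB.le δ ▸ Real.le_sqrt_of_sq_le hxp
  have hδsqrt : √δ ≤ 1 := Real.sqrt_le_one.mpr hδ1.le
  have hu' : ‖u‖ ≤ κ * √δ := by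
    simpa [Real.sqrt_mul (sq_nonneg κ), Real.sqrt_sq hκ0.le] using Real.le_sqrt_of_sq_le hu2
  have htaylor := (abs_le.mp (hT p (frontier_subset_closure hp) x (subset_closure hx) u
    (hu'.trans (mul_le_one₀ hκ1 (Real.sqrt_nonneg _) hδsqrt)))).2
  have herr : L * (‖x - p‖ + ‖u‖) * ‖u‖ ≤ L * (√B + 1) * κ * δ := by
    calc L * (‖x - p‖ + ‖u‖) * ‖u‖ ≤ L * (√B * √δ + 1 * √δ) * (κ * √δ) := by
          gcongr
          exact hu'.trans (by gcongr)
      _ = L * (√B + 1) * κ * (√δ * √δ) := by ring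
      _ = L * (√B + 1) * κ * δ := by rw [Real.mul_self_sqrt hδ0.le]
  rw [h.eq_setOf]
  change ρ (x + u) < 0
  nlinarith [hδ x hx hxp hball, mul_le_mul_of_nonneg_right hκs hδ0.le, mul_pos hs hδ0]

theorem exists_forall_mem_of_lt (h : IsStronglyConvexDomain Ω ρ) (hp : p ∈ frontier Ω) :
    ∃ C > 0, ∀ x, C * ‖x - p‖ ^ 2 < -fderiv ℝ ρ p (x - p) → x ∈ Ω := by
  obtain ⟨L, hL, hD, hT⟩ := h.exists_taylor_bound_thickening
  have hpc := frontier_subset_closure hp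
  refine ⟨L, hL, fun x hx => ?_⟩
  have hlt : L * ‖x - p‖ * ‖x - p‖ < L * ‖x - p‖ * 1 := by
    calc L * ‖x - p‖ * ‖x - p‖ = L * ‖x - p‖ ^ 2 := by ring
      _ < -fderiv ℝ ρ p (x - p) := hx
      _ ≤ ‖fderiv ℝ ρ p (x - p)‖ := neg_le_abs _
      _ ≤ L * ‖x - p‖ * 1 := by
          rw [mul_one]
          exact (fderiv ℝ ρ p).le_of_opNorm_le (hD p hpc) _
  have hx1 : ‖x - p‖ < 1 := lt_of_mul_lt_mul_left hlt (by positivity)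
  have htaylor := (abs_le.mp (hT p hpc p hpc (x - p) hx1.le)).2
  rw [add_sub_cancel, h.eq_zero_of_mem_frontier hp, sub_self, norm_zero, zero_add] at htaylor
  rw [h.eq_setOf]
  change ρ x < 0
  linarith

theorem stronglyConvexAt [NormedSpace ℂ E] [IsScalarTower ℝ ℂ E]
    (h : IsStronglyConvexDomain Ω ρ) (hp : p ∈ frontier Ω) :
    ∃ ω : E →L[ℂ] ℂ, StronglyConvexAt Ω p ω := by
  set η : E → E →L[ℂ] ℂ := fun b => StrongDual.extendRCLike (𝕜 := ℂ) (-fderiv ℝ ρ b) with hη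
  have hηre : ∀ b x, (η b x).re = -fderiv ℝ ρ b x := fun b x =>
    StrongDual.re_extendRCLike_apply (𝕜 := ℂ) (-fderiv ℝ ρ b) x
  have hηnorm : ∀ b, ‖η b‖ = ‖fderiv ℝ ρ b‖ := fun b => by
    rw [hη, StrongDual.norm_extendRCLike, norm_neg]
  obtain ⟨L, hL, hD, -⟩ := h.exists_taylor_bound_thickening
  obtain ⟨c, hc, hsupp⟩ := h.exists_quadratic_support
  obtain ⟨r, hr⟩ := h.isBounded.subset_closedBall (0 : E)
  exact ⟨η p,
    { isOpen := h.isOpen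
      bounded := ⟨max r 1, by positivity, fun x hx =>
        (mem_closedBall_zero_iff.mp (hr hx)).trans (le_max_left _ _)⟩
      segment := fun x hx y hy t ht => by
        have := h.convex.add_smul_sub_mem hx hy ht
        rwa [RCLike.real_smul_eq_coe_smul (K := ℂ)] at this
      mem_frontier := hp
      support := ⟨c, hc, L, hL, fun b hb => ⟨η b,
        (hηnorm b).trans_le (hD b (frontier_subset_closure hb)),
        fun x hx => (hsupp b hb x hx).trans_eq (hηre _ _).symm⟩⟩
      support_at := ⟨c, hc, fun x hx => (hsupp p hp x hx).trans_eq (hηre _ _).symm⟩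
      mem_of_lt := by
        simpa only [hηre] using h.exists_forall_mem_of_lt hp
      add_mem := fun a ha B hB => by
        obtain ⟨κ, hκ, hev⟩ := h.exists_forall_add_mem hp ha hB
        refine ⟨κ, hκ, hev.mono fun δ hδ x hx u hxp hball hu => hδ x hx u hxp hball ?_⟩
        have := (abs_le.mp ((abs_re_le_norm (η p u)).trans hu)).1
        rw [hηre] at this
        linarith }⟩

end IsStronglyConvexDomain

end LocalGeometry

section Discs

theorem norm_sub_sq_le_two_mul_add {E : Type*} [SeminormedAddCommGroup E] (x y b : E) :
    ‖x - y‖ ^ 2 ≤ 2 * (‖x - b‖ ^ 2 + ‖y - b‖ ^ 2) := by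
  have htri : ‖x - y‖ ≤ ‖x - b‖ + ‖y - b‖ := by
    simpa only [dist_eq_norm] using dist_triangle_right x y b
  exact (pow_le_pow_left₀ (norm_nonneg _) htri 2).trans add_sq_le

theorem ball_subset_of_forall_frontier {E : Type*} [NormedAddCommGroup E] [NormedSpace ℝ E]
    {Ω : Set E} (hΩ : IsOpen Ω) {x : E} (hx : x ∈ Ω) {d : ℝ}
    (h : ∀ b ∈ frontier Ω, d ≤ ‖x - b‖) : ball x d ⊆ Ω := by
  rcases le_or_gt d 0 with hd | hd
  · rw [ball_eq_empty.mpr hd]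
    exact empty_subset _
  refine (convex_ball x d).isPreconnected.subset_of_closure_inter_subset hΩ
    ⟨x, mem_ball_self hd, hx⟩ ?_
  rintro y ⟨hy, hyx⟩
  by_contra hyΩ
  rw [mem_ball, dist_comm, dist_eq_norm] at hyx
  exact (h y (hΩ.frontier_eq ▸ ⟨hy, hyΩ⟩)).not_gt hyx

theorem ofReal_mem_ball_of_mem_Ico {r : ℝ} (hr : r ∈ Ico (0 : ℝ) 1) : (r : ℂ) ∈ ball (0 : ℂ) 1 := by
  rw [mem_ball_zero_iff, norm_real, Real.norm_of_nonneg hr.1]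
  exact hr.2

theorem mul_one_add_div_two_mem_ball {ζ : ℂ} (hζ : ζ ∈ ball (0 : ℂ) 1) :
    ζ * (1 + ζ) / 2 ∈ ball (0 : ℂ) 1 ∧ ‖1 - ζ‖ ^ 2 / 8 ≤ 1 - ‖ζ * (1 + ζ) / 2‖ := by
  have hlt : ‖ζ‖ < 1 := mem_ball_zero_iff.mp hζ
  have hadd : ‖1 + ζ‖ ≤ 1 + ‖ζ‖ := (norm_add_le _ _).trans_eq (by rw [norm_one])
  have hprod : ‖ζ * (1 + ζ) / 2‖ = ‖ζ‖ * ‖1 + ζ‖ / 2 := by simp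
  have hpar := parallelogram_law_with_norm ℝ (1 : ℂ) ζ
  rw [norm_one] at hpar
  rw [mem_ball_zero_iff, hprod]
  constructor <;> nlinarith [norm_nonneg ζ, norm_nonneg (1 + ζ)]

variable {E : Type*} [NormedAddCommGroup E] [NormedSpace ℂ E]

/-- A holomorphic disc in `Ω` centred at `z`, parametrised by the open unit disc; the values of `φ`
elsewhere are irrelevant. -/
structure IsDiscAt (Ω : Set E) (z : E) (φ : ℂ → E) : Prop where
  differentiableOn : DifferentiableOn ℂ φ (ball 0 1)
  mapsTo : MapsTo φ (ball 0 1) Ω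
  map_zero : φ 0 = z

/-- The disc `φ` reaches the boundary point `p` with slope at most `J` in the conormal direction
`ω`. For discs in a domain on which `re (ω (· - p))` is positive the quotient is nondecreasing in
`r`, by Harnack's inequality, so that its supremum is its radial limit. -/
def SlopeLE (ω : E →L[ℂ] ℂ) (p : E) (φ : ℂ → E) (J : ℝ) : Prop :=
  ∀ r ∈ Ico (0 : ℝ) 1, (ω (φ r - p)).re * ((1 + r) / (1 - r)) ≤ J

namespace StronglyConvexAt

variable {Ω : Set E} {p : E} {ω : E →L[ℂ] ℂ}

theorem convex (h : StronglyConvexAt Ω p ω) : Convex ℝ Ω :=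
  convex_iff_add_mem.mpr fun x hx y hy a b ha hb hab => by
    have hseg := h.segment x hx y hy b ⟨hb, by linarith⟩
    rw [Complex.coe_smul] at hseg
    rw [eq_sub_of_add_eq hab]
    convert hseg using 1
    module

theorem midpoint_mem (h : StronglyConvexAt Ω p ω) {x y : E} (hx : x ∈ Ω) (hy : y ∈ Ω) :
    (2⁻¹ : ℂ) • (x + y) ∈ Ω := by
  have hseg := h.segment x hx y hy 2⁻¹ ⟨by norm_num, by norm_num⟩
  convert hseg using 1
  push_cast
  module

theorem starlike (h : StronglyConvexAt Ω p ω) {y : E} (hy : y ∈ Ω) {t : ℝ}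
    (ht : t ∈ Ioc (0 : ℝ) 1) : p + (t : ℂ) • (y - p) ∈ Ω := by
  rw [← h.isOpen.interior_eq] at hy ⊢
  rw [Complex.coe_smul]
  exact h.convex.add_smul_sub_mem_interior' (frontier_subset_closure h.mem_frontier) hy ht

theorem notMem (h : StronglyConvexAt Ω p ω) : p ∉ Ω :=
  (h.isOpen.frontier_eq ▸ h.mem_frontier : p ∈ closure Ω \ Ω).2

theorem re_pos (h : StronglyConvexAt Ω p ω) {x : E} (hx : x ∈ Ω) : 0 < (ω (x - p)).re := by
  obtain ⟨c, hc, hs⟩ := h.support_at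
  have hxp : 0 < ‖x - p‖ := norm_pos_iff.mpr (sub_ne_zero.mpr fun e => h.notMem (e ▸ hx))
  exact (by positivity : 0 < c * ‖x - p‖ ^ 2).trans_le (hs x (subset_closure hx))

theorem exists_ball_midpoint_subset (h : StronglyConvexAt Ω p ω) : ∃ c > 0, ∀ x ∈ Ω, ∀ y ∈ Ω,
    ball ((2⁻¹ : ℂ) • (x + y)) (c * ‖x - y‖ ^ 2) ⊆ Ω := by
  obtain ⟨c, hc, K, hK, hs⟩ := h.support
  refine ⟨c / (4 * K), by positivity, fun x hx y hy => ?_⟩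
  refine ball_subset_of_forall_frontier h.isOpen (h.midpoint_mem hx hy) fun b hb => ?_
  obtain ⟨η, hη, hηs⟩ := hs b hb
  have hmid : (η ((2⁻¹ : ℂ) • (x + y) - b)).re = ((η (x - b)).re + (η (y - b)).re) / 2 := by
    have hsplit : (2⁻¹ : ℂ) • (x + y) - b = ((2⁻¹ : ℝ) : ℂ) • ((x - b) + (y - b)) := by
      push_cast
      module
    rw [hsplit, map_smul, map_add, smul_eq_mul, re_ofReal_mul, add_re, inv_mul_eq_div]
  have hle : (η ((2⁻¹ : ℂ) • (x + y) - b)).re ≤ K * ‖(2⁻¹ : ℂ) • (x + y) - b‖ :=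
    (re_le_norm _).trans (η.le_of_opNorm_le hη _)
  rw [div_mul_eq_mul_div, div_le_iff₀ (by positivity)]
  calc c * ‖x - y‖ ^ 2 ≤ c * (2 * (‖x - b‖ ^ 2 + ‖y - b‖ ^ 2)) := by
        gcongr
        exact norm_sub_sq_le_two_mul_add x y b
    _ = 2 * (c * ‖x - b‖ ^ 2 + c * ‖y - b‖ ^ 2) := by ring
    _ ≤ 2 * ((η (x - b)).re + (η (y - b)).re) := by
        gcongr
        exacts [hηs x (subset_closure hx), hηs y (subset_closure hy)]
    _ ≤ ‖(2⁻¹ : ℂ) • (x + y) - b‖ * (4 * K) := by linarith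

theorem exists_ball_disc_subset_of_ball_subset (h : StronglyConvexAt Ω p ω) :
    ∃ a > (0 : ℝ), ∀ z, ∀ r > 0, ball z r ⊆ Ω → ∀ φ, IsDiscAt Ω z φ → ∀ ζ ∈ ball (0 : ℂ) 1,
      ball (φ ζ) (a * r ^ 2 * (1 - ‖ζ‖)) ⊆ Ω := by
  obtain ⟨c, hc, K, hK, hs⟩ := h.support
  refine ⟨c / (2 * K), by positivity, fun z r hr hrΩ φ hφ ζ hζ => ?_⟩
  refine ball_subset_of_forall_frontier h.isOpen (hφ.mapsTo hζ) fun b hb => ?_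
  obtain ⟨η, hη, hηs⟩ := hs b hb
  have hζ1 : ‖ζ‖ < 1 := mem_ball_zero_iff.mp hζ
  have hrb : r ≤ ‖z - b‖ := by
    by_contra! hlt
    rw [h.isOpen.frontier_eq] at hb
    exact hb.2 (hrΩ (mem_ball_iff_norm'.mpr hlt))
  have hre : ∀ ξ ∈ ball (0 : ℂ) 1, 0 ≤ (η (φ ξ - b)).re := fun ξ hξ =>
    (by positivity : 0 ≤ c * ‖φ ξ - b‖ ^ 2).trans (hηs _ (subset_closure (hφ.mapsTo hξ)))
  have hharnack := harnack_of_re_nonneg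
    (η.differentiable.comp_differentiableOn (hφ.differentiableOn.sub_const b)) hre hζ
  simp only [comp_apply, sub_zero, div_one, hφ.map_zero] at hharnack
  rw [div_mul_eq_mul_div, div_mul_eq_mul_div, div_le_iff₀ (by positivity)]
  calc c * r ^ 2 * (1 - ‖ζ‖) ≤ c * ‖z - b‖ ^ 2 * (1 - ‖ζ‖) := by
        have : 0 ≤ 1 - ‖ζ‖ := by linarith
        gcongr
    _ ≤ (1 - ‖ζ‖) * (η (z - b)).re := by
        rw [mul_comm]
        exact mul_le_mul_of_nonneg_left (hηs z (subset_closure (hrΩ (mem_ball_self hr))))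
          (by linarith)
    _ ≤ (1 + ‖ζ‖) * (η (φ ζ - b)).re := hharnack
    _ ≤ 2 * (η (φ ζ - b)).re := mul_le_mul_of_nonneg_right (by linarith) (hre ζ hζ)
    _ ≤ 2 * (K * ‖φ ζ - b‖) := by
        gcongr
        exact (re_le_norm _).trans (η.le_of_opNorm_le hη _)
    _ = ‖φ ζ - b‖ * (2 * K) := by ring

theorem exists_ball_disc_subset (h : StronglyConvexAt Ω p ω) {z : E} (hz : z ∈ Ω) :
    ∃ a > (0 : ℝ), ∀ φ, IsDiscAt Ω z φ → ∀ ζ ∈ ball (0 : ℂ) 1,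
      ball (φ ζ) (a * (1 - ‖ζ‖)) ⊆ Ω := by
  obtain ⟨a, ha, hs⟩ := h.exists_ball_disc_subset_of_ball_subset
  obtain ⟨r, hr, hrΩ⟩ := Metric.isOpen_iff.mp h.isOpen z hz
  exact ⟨a * r ^ 2, by positivity, hs z r hr hrΩ⟩

end StronglyConvexAt

namespace IsDiscAt

variable {Ω : Set E} {p y z : E} {ω : E →L[ℂ] ℂ} {φ χ : ℂ → E} {J : ℝ}

theorem re_le_of_slopeLE (hφ : IsDiscAt Ω z φ) (hJ : SlopeLE ω p φ J) : (ω (z - p)).re ≤ J := by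
  simpa [hφ.map_zero] using hJ 0 (by simp)

theorem re_le_mul_of_slopeLE (hΩ : StronglyConvexAt Ω p ω) (hφ : IsDiscAt Ω z φ)
    (hJ : SlopeLE ω p φ J) {r : ℝ} (hr : r ∈ Ico (0 : ℝ) 1) :
    (ω (φ r - p)).re ≤ J * (1 - r) := by
  have hslope := hJ r hr
  have hpos := hΩ.re_pos (hφ.mapsTo (ofReal_mem_ball_of_mem_Ico hr))
  rw [mul_div_assoc', div_le_iff₀ (sub_pos.mpr hr.2)] at hslope
  exact (le_mul_of_one_le_right hpos.le (by linarith [hr.1])).trans hslope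

theorem slopeLE_of_re_le_mul (hΩ : StronglyConvexAt Ω p ω) (hφ : IsDiscAt Ω z φ)
    (hJ : ∀ r ∈ Ico (0 : ℝ) 1, (ω (φ r - p)).re ≤ J * (1 - r)) : SlopeLE ω p φ (2 * J) := by
  intro r hr
  have hpos := hΩ.re_pos (hφ.mapsTo (ofReal_mem_ball_of_mem_Ico hr))
  rw [mul_div_assoc', div_le_iff₀ (sub_pos.mpr hr.2)]
  calc (ω (φ r - p)).re * (1 + r) ≤ (ω (φ r - p)).re * 2 := by
        gcongr
        linarith [hr.2]
    _ ≤ J * (1 - r) * 2 := by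
        gcongr
        exact hJ r hr
    _ = 2 * J * (1 - r) := by ring

theorem exists_norm_sub_sq_le (hΩ : StronglyConvexAt Ω p ω) : ∃ C > 0, ∀ φ : ℂ → E, ∀ z J,
    IsDiscAt Ω z φ → SlopeLE ω p φ J → ∀ r ∈ Ico (0 : ℝ) 1, ‖φ r - p‖ ^ 2 ≤ C * J * (1 - r) := by
  obtain ⟨c, hc, hs⟩ := hΩ.support_at
  refine ⟨c⁻¹, by positivity, fun φ z J hφ hJ r hr => ?_⟩
  rw [mul_assoc, ← div_eq_inv_mul, le_div_iff₀ hc, mul_comm]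
  exact (hs _ (subset_closure (hφ.mapsTo (ofReal_mem_ball_of_mem_Ico hr)))).trans
    (re_le_mul_of_slopeLE hΩ hφ hJ hr)

theorem slopeLE_of_isLittleO (hΩ : StronglyConvexAt Ω p ω) (hχ : IsDiscAt Ω y χ)
    (hJ : SlopeLE ω p φ J)
    (hχφ : (fun r : ℝ => χ r - φ r) =o[𝓝[<] 1] fun r : ℝ => 1 - r) : SlopeLE ω p χ J := by
  intro r hr
  have hlim : Tendsto (fun s : ℝ => J + 2 * ‖ω‖ * (‖χ s - φ s‖ / ‖1 - s‖)) (𝓝[<] 1) (𝓝 J) := by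
    simpa using (hχφ.norm_norm.tendsto_div_nhds_zero.const_mul (2 * ‖ω‖)).const_add J
  refine ge_of_tendsto hlim ?_
  filter_upwards [Ioo_mem_nhdsLT hr.2] with s hs
  have hs' : s ∈ Ico (0 : ℝ) 1 := ⟨hr.1.trans hs.1.le, hs.2⟩
  have hs1 : 0 < 1 - s := sub_pos.mpr hs.2
  have hq : 0 ≤ (1 + s) / (1 - s) := div_nonneg (by linarith [hs'.1]) hs1.le
  have hsplit : (ω (χ s - p)).re = (ω (φ s - p)).re + (ω (χ s - φ s)).re := by
    rw [← add_re, ← map_add, add_comm, sub_add_sub_cancel]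
  have hω : (ω (χ s - φ s)).re ≤ ‖ω‖ * ‖χ s - φ s‖ := (re_le_norm _).trans (ω.le_opNorm _)
  calc (ω (χ r - p)).re * ((1 + r) / (1 - r)) ≤ (ω (χ s - p)).re * ((1 + s) / (1 - s)) :=
        monotoneOn_re_mul_one_add_div_one_sub
          (ω.differentiable.comp_differentiableOn (hχ.differentiableOn.sub_const p))
          (fun ζ hζ => (hΩ.re_pos (hχ.mapsTo hζ)).le) hr hs' hs.1.le
    _ = (ω (φ s - p)).re * ((1 + s) / (1 - s)) + (ω (χ s - φ s)).re * ((1 + s) / (1 - s)) := by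
        rw [hsplit, add_mul]
    _ ≤ J + ‖ω‖ * ‖χ s - φ s‖ * (2 / (1 - s)) := by
        gcongr
        exacts [hJ s hs', by linarith [hs.2]]
    _ = J + 2 * ‖ω‖ * (‖χ s - φ s‖ / ‖1 - s‖) := by
        rw [Real.norm_of_nonneg hs1.le]
        ring

theorem midpoint (hΩ : StronglyConvexAt Ω p ω) (hφ : IsDiscAt Ω z φ) (hχ : IsDiscAt Ω z χ) :
    IsDiscAt Ω z fun ζ => (2⁻¹ : ℂ) • (φ ζ + χ ζ) where
  differentiableOn := (hφ.differentiableOn.add hχ.differentiableOn).const_smul _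
  mapsTo _ hζ := hΩ.midpoint_mem (hφ.mapsTo hζ) (hχ.mapsTo hζ)
  map_zero := by
    rw [hφ.map_zero, hχ.map_zero]
    module

theorem homothety (hΩ : StronglyConvexAt Ω p ω) {t : ℝ} (ht : t ∈ Ioc (0 : ℝ) 1)
    (hφ : IsDiscAt Ω z φ) :
    IsDiscAt Ω (p + (t : ℂ) • (z - p)) fun ζ => p + (t : ℂ) • (φ ζ - p) where
  differentiableOn := ((hφ.differentiableOn.sub_const p).const_smul _).const_add p
  mapsTo _ hζ := hΩ.starlike (hφ.mapsTo hζ) ht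
  map_zero := by rw [hφ.map_zero]

theorem of_tendsto {ι : Type*} {l : Filter ι} [l.NeBot]
    (hΩ : StronglyConvexAt Ω p ω) (hz : z ∈ Ω) {f : ι → ℂ → E} (hf : ∀ j, IsDiscAt Ω z (f j))
    (hφ : DifferentiableOn ℂ φ (ball 0 1))
    (hlim : ∀ ζ ∈ ball (0 : ℂ) 1, Tendsto (fun j => f j ζ) l (𝓝 (φ ζ))) : IsDiscAt Ω z φ := by
  obtain ⟨a, ha, hs⟩ := hΩ.exists_ball_disc_subset hz
  refine ⟨hφ, fun ζ hζ => ?_, ?_⟩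
  · have hrad : 0 < a * (1 - ‖ζ‖) := mul_pos ha (sub_pos.mpr (mem_ball_zero_iff.mp hζ))
    obtain ⟨j, hj⟩ := ((hlim ζ hζ).eventually (ball_mem_nhds _ hrad)).exists
    exact hs _ (hf j) ζ hζ (mem_ball_comm.mp hj)
  · have h0 := hlim 0 (mem_ball_self one_pos)
    simp only [(hf _).map_zero] at h0
    exact tendsto_nhds_unique h0 tendsto_const_nhds

end IsDiscAt

namespace SlopeLE

variable {p : E} {ω : E →L[ℂ] ℂ} {φ χ : ℂ → E} {J : ℝ}

theorem midpoint (hφ : SlopeLE ω p φ J) (hχ : SlopeLE ω p χ J) :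
    SlopeLE ω p (fun ζ => (2⁻¹ : ℂ) • (φ ζ + χ ζ)) J := fun r hr => by
  have hsplit : (2⁻¹ : ℂ) • (φ r + χ r) - p = ((2⁻¹ : ℝ) : ℂ) • ((φ r - p) + (χ r - p)) := by
    push_cast
    module
  rw [hsplit, map_smul, map_add, smul_eq_mul, re_ofReal_mul, add_re]
  linarith [hφ r hr, hχ r hr]

theorem homothety {t : ℝ} (ht : 0 ≤ t) (hφ : SlopeLE ω p φ J) :
    SlopeLE ω p (fun ζ => p + (t : ℂ) • (φ ζ - p)) (t * J) := fun r hr => by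
  rw [add_sub_cancel_left, map_smul, smul_eq_mul, re_ofReal_mul, mul_assoc]
  exact mul_le_mul_of_nonneg_left (hφ r hr) ht

theorem of_tendsto {ι : Type*} {l : Filter ι} [l.NeBot] {f : ι → ℂ → E} {u : ι → ℝ}
    (hf : ∀ j, SlopeLE ω p (f j) (u j)) (hu : Tendsto u l (𝓝 J))
    (hlim : ∀ ζ ∈ ball (0 : ℂ) 1, Tendsto (fun j => f j ζ) l (𝓝 (φ ζ))) : SlopeLE ω p φ J :=
  fun r hr => le_of_tendsto_of_tendsto'
    (((continuous_re.tendsto _).comp ((ω.continuous.tendsto _).comp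
      ((hlim r (ofReal_mem_ball_of_mem_Ico hr)).sub_const p))).mul_const _) hu fun j => hf j r hr

end SlopeLE

end Discs

section MinimalDiscs

variable {E : Type*} [NormedAddCommGroup E] [NormedSpace ℂ E]

/-- The centres of the discs of finite slope at `p`. -/
def finiteSlopeCentres (Ω : Set E) (p : E) (ω : E →L[ℂ] ℂ) : Set E :=
  {z | ∃ φ J, IsDiscAt Ω z φ ∧ SlopeLE ω p φ J}

/-- The disc `φ`, reparametrised by a map which sends the unit disc into itself and touches its
boundary only at `1`, and then moved by a vector which is `v` at the centre and negligible
near `1`. -/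
def recentredDisc (φ : ℂ → E) (v : E) (ζ : ℂ) : E := φ (ζ * (1 + ζ) / 2) + (1 - ζ) ^ 2 • v

variable {Ω : Set E} {p : E} {ω : E →L[ℂ] ℂ}

theorem isDiscAt_recentredDisc {φ : ℂ → E} {z v : E} {a : ℝ} (hφ : IsDiscAt Ω z φ)
    (ha : ∀ ζ ∈ ball (0 : ℂ) 1, ball (φ ζ) (a * (1 - ‖ζ‖)) ⊆ Ω) (hv : ‖v‖ < a / 8) :
    IsDiscAt Ω (z + v) (recentredDisc φ v) := by
  refine ⟨?_, fun ζ hζ => ?_, by simp [recentredDisc, hφ.map_zero]⟩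
  · refine DifferentiableOn.add ?_ (by fun_prop)
    exact hφ.differentiableOn.comp (by fun_prop) fun ζ hζ => (mul_one_add_div_two_mem_ball hζ).1
  · obtain ⟨hmem, hgap⟩ := mul_one_add_div_two_mem_ball hζ
    refine ha _ hmem ?_
    have ha0 : 0 < a := by linarith [norm_nonneg v]
    have hne : 0 < ‖1 - ζ‖ := norm_pos_iff.mpr <| sub_ne_zero.mpr <| by
      rintro rfl
      simp at hζ
    rw [mem_ball_iff_norm, recentredDisc, add_sub_cancel_left, norm_smul, norm_pow]
    calc ‖1 - ζ‖ ^ 2 * ‖v‖ < ‖1 - ζ‖ ^ 2 * (a / 8) := by gcongr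
      _ = a * (‖1 - ζ‖ ^ 2 / 8) := by ring
      _ ≤ a * (1 - ‖ζ * (1 + ζ) / 2‖) := by gcongr

namespace StronglyConvexAt

theorem exists_slopeLE_recentredDisc (hΩ : StronglyConvexAt Ω p ω) {φ : ℂ → E} {z v : E} {J : ℝ}
    (hφ : IsDiscAt Ω z φ) (hJ : SlopeLE ω p φ J) (hψ : IsDiscAt Ω (z + v) (recentredDisc φ v)) :
    ∃ J', SlopeLE ω p (recentredDisc φ v) J' := by
  refine ⟨_, hψ.slopeLE_of_re_le_mul hΩ (J := J * (3 / 2) + ‖ω v‖) fun t ht => ?_⟩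
  have hs : t * (1 + t) / 2 ∈ Ico (0 : ℝ) 1 :=
    ⟨by have := ht.1; positivity, by nlinarith [ht.1, ht.2]⟩
  have hJ0 : 0 ≤ J := by
    refine (hΩ.re_pos ?_).le.trans (hφ.re_le_of_slopeLE hJ)
    exact hφ.map_zero ▸ hφ.mapsTo (mem_ball_self one_pos)
  have hsplit : (ω (recentredDisc φ v t - p)).re
      = (ω (φ ((t * (1 + t) / 2 : ℝ) : ℂ) - p)).re + (1 - t) ^ 2 * (ω v).re := by
    have hvec : recentredDisc φ v t - p
        = (φ ((t * (1 + t) / 2 : ℝ) : ℂ) - p) + (((1 - t) ^ 2 : ℝ) : ℂ) • v := by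
      rw [recentredDisc]
      push_cast
      abel
    rw [hvec, map_add, map_smul, add_re, smul_eq_mul, re_ofReal_mul]
  have hmain : J * (1 - t * (1 + t) / 2) ≤ J * (3 / 2) * (1 - t) := by
    rw [mul_assoc]
    gcongr
    nlinarith [ht.1, ht.2]
  have hcorr : (1 - t) ^ 2 * (ω v).re ≤ (1 - t) * ‖ω v‖ :=
    calc (1 - t) ^ 2 * (ω v).re ≤ (1 - t) ^ 2 * ‖ω v‖ := by
          gcongr
          exact re_le_norm _
      _ ≤ (1 - t) * ‖ω v‖ := by
          gcongr
          nlinarith [ht.1, ht.2]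
  rw [hsplit]
  linarith [hφ.re_le_mul_of_slopeLE hΩ hJ hs]

theorem finiteSlopeCentres_subset : finiteSlopeCentres Ω p ω ⊆ Ω := by
  rintro z ⟨φ, J, hφ, -⟩
  exact hφ.map_zero ▸ hφ.mapsTo (mem_ball_self one_pos)

theorem exists_ball_subset_finiteSlopeCentres (hΩ : StronglyConvexAt Ω p ω) {z : E} (hz : z ∈ Ω) :
    ∃ δ > 0, ∀ y ∈ ball z δ, y ∈ finiteSlopeCentres Ω p ω →
      ball y δ ⊆ finiteSlopeCentres Ω p ω := by
  obtain ⟨a, ha, hs⟩ := hΩ.exists_ball_disc_subset_of_ball_subset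
  obtain ⟨r, hr, hrΩ⟩ := Metric.isOpen_iff.mp hΩ.isOpen z hz
  refine ⟨min (r / 2) (a * (r / 2) ^ 2 / 8), by positivity, ?_⟩
  rintro y hy ⟨φ, J, hφ, hJ⟩ w hw
  have hyr : ball y (r / 2) ⊆ Ω := by
    refine (ball_subset_ball' ?_).trans hrΩ
    linarith [(mem_ball.mp hy).le.trans (min_le_left _ _)]
  have hdisc := isDiscAt_recentredDisc (v := w - y) hφ (hs y (r / 2) (by positivity) hyr φ hφ)
    ((mem_ball_iff_norm.mp hw).trans_le (min_le_right _ _))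
  obtain ⟨J', hJ'⟩ := hΩ.exists_slopeLE_recentredDisc hφ hJ hdisc
  rw [add_sub_cancel] at hdisc
  exact ⟨_, J', hdisc, hJ'⟩

theorem exists_map_eq_one (hΩ : StronglyConvexAt Ω p ω) {z : E} (hz : z ∈ Ω) : ∃ ν, ω ν = 1 := by
  have hne : ω (z - p) ≠ 0 := fun h0 => by simpa [h0] using hΩ.re_pos hz
  exact ⟨(ω (z - p))⁻¹ • (z - p), by rw [map_smul, smul_eq_mul, inv_mul_cancel₀ hne]⟩

theorem finiteSlopeCentres_nonempty (hΩ : StronglyConvexAt Ω p ω) {z : E} (hz : z ∈ Ω) :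
    (finiteSlopeCentres Ω p ω).Nonempty := by
  obtain ⟨ν, hν⟩ := hΩ.exists_map_eq_one hz
  obtain ⟨C, hC, hmem⟩ := hΩ.mem_of_lt
  obtain ⟨t, ht0, ht⟩ : ∃ t > (0 : ℝ), C * (t * ‖ν‖ ^ 2) * 2 < 1 :=
    ⟨1 / (2 * (C * ‖ν‖ ^ 2 + 1)), by positivity, by field_simp; linarith⟩
  have hdisc : IsDiscAt Ω (p + (t : ℂ) • ν) fun ζ => p + ((t : ℂ) * (1 - ζ)) • ν := by
    refine ⟨by fun_prop, fun ζ hζ => hmem _ ?_, by simp⟩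
    have hζ1 : ‖ζ‖ < 1 := mem_ball_zero_iff.mp hζ
    have hsq : ‖1 - ζ‖ ^ 2 ≤ 2 * (1 - ζ).re := by
      have hζ2 : ‖ζ‖ ^ 2 ≤ 1 := pow_le_one₀ (norm_nonneg ζ) hζ1.le
      rw [← normSq_eq_norm_sq, normSq_apply] at hζ2 ⊢
      simp only [sub_re, sub_im, one_re, one_im]
      linarith
    have hre : 0 < (1 - ζ).re := sub_pos.mpr ((re_le_norm ζ).trans_lt hζ1)
    simp only [add_sub_cancel_left, map_smul, hν, norm_smul, norm_mul, norm_real,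
      Real.norm_of_nonneg ht0.le, smul_eq_mul, mul_one, re_ofReal_mul]
    calc C * (t * ‖1 - ζ‖ * ‖ν‖) ^ 2 = t * (C * (t * ‖ν‖ ^ 2)) * ‖1 - ζ‖ ^ 2 := by ring
      _ ≤ t * (C * (t * ‖ν‖ ^ 2)) * (2 * (1 - ζ).re) := by gcongr
      _ = t * (1 - ζ).re * (C * (t * ‖ν‖ ^ 2) * 2) := by ring
      _ < t * (1 - ζ).re * 1 := by gcongr
      _ = t * (1 - ζ).re := mul_one _
  refine ⟨_, _, _, hdisc, hdisc.slopeLE_of_re_le_mul hΩ (J := t) fun r _ => le_of_eq ?_⟩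
  simp [hν]

theorem mem_finiteSlopeCentres (hΩ : StronglyConvexAt Ω p ω) {z : E} (hz : z ∈ Ω) :
    z ∈ finiteSlopeCentres Ω p ω := by
  have hopen : IsOpen (finiteSlopeCentres Ω p ω) := Metric.isOpen_iff.mpr fun y hy => by
    obtain ⟨δ, hδ, h⟩ := hΩ.exists_ball_subset_finiteSlopeCentres (finiteSlopeCentres_subset hy)
    exact ⟨δ, hδ, h y (mem_ball_self hδ) hy⟩
  refine hΩ.convex.isPreconnected.subset_of_closure_inter_subset hopen ?_ ?_ hz
  · obtain ⟨y, hy⟩ := hΩ.finiteSlopeCentres_nonempty hz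
    exact ⟨y, finiteSlopeCentres_subset hy, hy⟩
  · rintro y ⟨hyc, hy⟩
    obtain ⟨δ, hδ, h⟩ := hΩ.exists_ball_subset_finiteSlopeCentres hy
    obtain ⟨w, hw, hyw⟩ := Metric.mem_closure_iff.mp hyc δ hδ
    exact h w (mem_ball'.mpr hyw) hw hyw

theorem exists_minimal_disc [FiniteDimensional ℂ E] (hΩ : StronglyConvexAt Ω p ω) {z : E}
    (hz : z ∈ Ω) : ∃ φ J, IsDiscAt Ω z φ ∧ SlopeLE ω p φ J ∧
      ∀ ψ J', IsDiscAt Ω z ψ → SlopeLE ω p ψ J' → J ≤ J' := by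
  set S : Set ℝ := {J | ∃ φ, IsDiscAt Ω z φ ∧ SlopeLE ω p φ J}
  have hne : S.Nonempty := by
    obtain ⟨φ, J, h⟩ := hΩ.mem_finiteSlopeCentres hz
    exact ⟨J, φ, h⟩
  have hbdd : BddBelow S := ⟨(ω (z - p)).re, fun J ⟨φ, hφ, hJ⟩ => hφ.re_le_of_slopeLE hJ⟩
  obtain ⟨J, -, hJlim, hJS⟩ := exists_seq_tendsto_sInf hne hbdd
  choose φ hφ hφJ using hJS
  obtain ⟨R, -, hb⟩ := hΩ.bounded
  obtain ⟨g, hgd, hg, -⟩ := exists_holomorphic_ultralimit (hyperfilter ℕ) (f := φ)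
    (isOpen_ball (x := (0 : ℂ)) (ε := 1)) fun ζ hζ => by
      obtain ⟨δ, hδ, hsub⟩ := Metric.isOpen_iff.mp isOpen_ball ζ hζ
      exact ⟨δ, hδ, R, Eventually.of_forall fun j =>
        ⟨(hφ j).differentiableOn.mono hsub, fun ξ hξ => hb _ ((hφ j).mapsTo (hsub hξ))⟩⟩
  exact ⟨g, sInf S, .of_tendsto hΩ hz hφ hgd hg,
    .of_tendsto hφJ (hJlim.mono_left Nat.hyperfilter_le_atTop) hg,
    fun ψ J' hψ hJ' => csInf_le hbdd ⟨ψ, hψ, hJ'⟩⟩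

end StronglyConvexAt

end MinimalDiscs

section Uniqueness

variable {E : Type*} [NormedAddCommGroup E] [NormedSpace ℂ E]

theorem exists_eq_pow_smul_of_ne_zero [CompleteSpace E] {U : Set ℂ} (hU : IsOpen U)
    (hUc : IsPreconnected U) {g : ℂ → E} (hg : DifferentiableOn ℂ g U) {c w : ℂ} (hc : c ∈ U)
    (hw : w ∈ U) (hgw : g w ≠ 0) :
    ∃ (N : ℕ) (h : ℂ → E), DifferentiableOn ℂ h U ∧ h c ≠ 0 ∧ ∀ ζ, g ζ = (ζ - c) ^ N • h ζ := by
  have hA : AnalyticOnNhd ℂ g U := hg.analyticOnNhd hU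
  obtain ⟨q, hq⟩ := hA c hc
  have hq0 : q ≠ 0 := fun h =>
    hgw (hA.eqOn_zero_of_preconnected_of_eventuallyEq_zero hUc hc (hq.locally_zero_iff.mpr h) hw)
  have hd : ∀ n, DifferentiableOn ℂ ((swap dslope c)^[n] g) U := fun n => by
    induction n with
    | zero => exact hg
    | succ n ih =>
      rw [iterate_succ_apply']
      exact (differentiableOn_dslope (hU.mem_nhds hc)).mpr ih
  exact ⟨q.order, _, hd _, hq.iterate_dslope_fslope_ne_zero hq0, hq.eq_pow_order_mul_iterate_dslope⟩

theorem exists_normalized_factor [CompleteSpace E] {g : ℂ → E}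
    (hg : DifferentiableOn ℂ g (ball 0 1)) {w : ℂ} (hw : w ∈ ball (0 : ℂ) 1) (hgw : g w ≠ 0) :
    ∃ k : ℂ → ℂ, DifferentiableOn ℂ k (ball 0 1) ∧ k 0 = 1 ∧
      (∃ C, ∀ ζ, 1 / 2 ≤ ‖ζ‖ → ‖k ζ‖ ≤ C * ‖g ζ‖) ∧ ∃ B, ∀ ζ, ‖ζ‖ ≤ 1 / 2 → ‖k ζ‖ ≤ B := by
  obtain ⟨N, h, hh, h0, hgh⟩ := exists_eq_pow_smul_of_ne_zero isOpen_ball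
    (convex_ball 0 1).isPreconnected hg (mem_ball_self one_pos) hw hgw
  obtain ⟨ℓ, hℓ, hℓ0⟩ := exists_dual_vector ℂ (h 0) (norm_ne_zero_iff.mpr h0)
  have hk : DifferentiableOn ℂ (fun ζ => ℓ (h ζ) / ‖h 0‖) (ball 0 1) :=
    (ℓ.differentiable.comp_differentiableOn hh).div_const _
  refine ⟨_, hk, ?_, ⟨2 ^ N / ‖h 0‖, fun ζ hζ => ?_⟩, ?_⟩
  · rw [hℓ0]
    exact div_self (ofReal_ne_zero.mpr (norm_ne_zero_iff.mpr h0))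
  · have hone : 1 ≤ 2 ^ N * ‖ζ‖ ^ N := by
      rw [← mul_pow]
      exact one_le_pow₀ (by linarith)
    rw [hgh ζ, sub_zero, norm_smul, norm_pow, norm_div, norm_real, norm_norm, div_mul_eq_mul_div]
    gcongr
    calc ‖ℓ (h ζ)‖ ≤ 1 * ‖h ζ‖ := ℓ.le_of_opNorm_le hℓ.le _
      _ ≤ 2 ^ N * ‖ζ‖ ^ N * ‖h ζ‖ := by gcongr
      _ = 2 ^ N * (‖ζ‖ ^ N * ‖h ζ‖) := mul_assoc _ _ _
  · obtain ⟨B, hB⟩ := (isCompact_closedBall (0 : ℂ) (1 / 2)).exists_bound_of_continuousOn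
      (hk.continuousOn.mono (closedBall_subset_ball (by norm_num)))
    exact ⟨B, fun ζ hζ => hB ζ (mem_closedBall_zero_iff.mpr hζ)⟩

theorem isLittleO_one_sub_of_norm_le {E : Type*} [SeminormedAddCommGroup E] {g : ℝ → E} {K r₀ : ℝ}
    (hr₀ : r₀ < 1) (hg : ∀ r ∈ Ico r₀ 1, ‖g r‖ ≤ K * (1 - r) ^ 2) :
    g =o[𝓝[<] 1] fun r : ℝ => 1 - r := by
  have hO : g =O[𝓝[<] 1] fun r : ℝ => (1 - r) ^ 2 := .of_bound K <| by
    filter_upwards [Ico_mem_nhdsLT hr₀] with r hr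
    rw [Real.norm_of_nonneg (sq_nonneg _)]
    exact hg r hr
  have hlim : Tendsto (fun r : ℝ => 1 - r) (𝓝[<] 1) (𝓝 0) := by
    exact (Continuous.tendsto' (by fun_prop) 1 0 (sub_self 1)).mono_left nhdsWithin_le_nhds
  exact hO.trans_isLittleO ((Asymptotics.isLittleO_pow_id one_lt_two).comp_tendsto hlim)

variable {Ω : Set E} {p z : E} {ω : E →L[ℂ] ℂ} {φ χ : ℂ → E} {J : ℝ}

theorem norm_ofReal_mul_mul_one_sub_smul_le {ε : ℝ} (hε : 0 ≤ ε) (w : ℂ) {ζ : ℂ}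
    (hζ : ζ ∈ ball (0 : ℂ) 1) (u : E) :
    ‖((ε : ℂ) * (w * (1 - ζ))) • u‖ ≤ ‖w‖ * (2 * ‖u‖ * ε) := by
  have hζ2 : ‖1 - ζ‖ ≤ 2 := (norm_sub_le _ _).trans <| by
    rw [norm_one]
    linarith [mem_ball_zero_iff.mp hζ]
  rw [norm_smul, norm_mul, norm_mul, norm_real, Real.norm_of_nonneg hε]
  calc ε * (‖w‖ * ‖1 - ζ‖) * ‖u‖ ≤ ε * (‖w‖ * 2) * ‖u‖ := by gcongr
    _ = ‖w‖ * (2 * ‖u‖ * ε) := by ring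

-- Near the circle the perturbation is controlled by `‖φ - χ‖ ^ 2`, which is the size of the ball
-- that strong convexity provides about the midpoint.
theorem IsDiscAt.exists_isDiscAt_midpoint_add (hΩ : StronglyConvexAt Ω p ω) (hφ : IsDiscAt Ω z φ)
    (hχ : IsDiscAt Ω z χ) {k : ℂ → ℂ} (hk : DifferentiableOn ℂ k (ball 0 1)) (hk0 : k 0 = 1)
    {C B : ℝ} (hC : ∀ ζ, 1 / 2 ≤ ‖ζ‖ → ‖k ζ‖ ≤ C * ‖φ ζ - χ ζ‖)
    (hB : ∀ ζ, ‖ζ‖ ≤ 1 / 2 → ‖k ζ‖ ≤ B) (u : E) :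
    ∃ ε > (0 : ℝ), IsDiscAt Ω (z + (ε : ℂ) • u) fun ζ =>
      (2⁻¹ : ℂ) • (φ ζ + χ ζ) + ((ε : ℂ) * (k ζ ^ 2 * (1 - ζ))) • u := by
  obtain ⟨c, hc, hcΩ⟩ := hΩ.exists_ball_midpoint_subset
  obtain ⟨a, ha, haΩ⟩ :=
    hΩ.exists_ball_disc_subset (hφ.map_zero ▸ hφ.mapsTo (mem_ball_self one_pos))
  have hmid := hφ.midpoint hΩ hχ
  obtain ⟨ε, hε, hεlt⟩ := exists_pos_mul_lt (lt_min hc (half_pos ha)) (2 * (B ^ 2 + C ^ 2) * ‖u‖)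
  have hnorm {ζ : ℂ} (hζ : ζ ∈ ball (0 : ℂ) 1) :=
    norm_ofReal_mul_mul_one_sub_smul_le hε.le (k ζ ^ 2) hζ u
  simp only [norm_pow] at hnorm
  have hεu : 0 ≤ 2 * ‖u‖ * ε := by positivity
  refine ⟨ε, hε, hmid.differentiableOn.add ?_, fun ζ hζ => ?_, ?_⟩
  · exact (((hk.pow 2).mul (by fun_prop)).const_mul _).smul_const u
  · rcases le_total ‖ζ‖ (1 / 2) with hζ2 | hζ2
    · refine haΩ _ hmid ζ hζ ?_
      rw [mem_ball_iff_norm, add_sub_cancel_left]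
      calc ‖((ε : ℂ) * (k ζ ^ 2 * (1 - ζ))) • u‖ ≤ ‖k ζ‖ ^ 2 * (2 * ‖u‖ * ε) := hnorm hζ
        _ ≤ (B ^ 2 + C ^ 2) * (2 * ‖u‖ * ε) := by
            gcongr
            nlinarith [pow_le_pow_left₀ (norm_nonneg (k ζ)) (hB ζ hζ2) 2, sq_nonneg C]
        _ = 2 * (B ^ 2 + C ^ 2) * ‖u‖ * ε := by ring
        _ < a / 2 := hεlt.trans_le (min_le_right _ _)
        _ ≤ a * (1 - ‖ζ‖) := by nlinarith
    rcases eq_or_ne (φ ζ) (χ ζ) with heq | hne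
    · have hkζ : k ζ = 0 := by simpa [heq] using hC ζ hζ2
      simpa [hkζ] using hmid.mapsTo hζ
    · have hpos : 0 < ‖φ ζ - χ ζ‖ ^ 2 := pow_pos (norm_pos_iff.mpr (sub_ne_zero.mpr hne)) 2
      refine hcΩ _ (hφ.mapsTo hζ) _ (hχ.mapsTo hζ) ?_
      rw [mem_ball_iff_norm, add_sub_cancel_left]
      calc ‖((ε : ℂ) * (k ζ ^ 2 * (1 - ζ))) • u‖ ≤ ‖k ζ‖ ^ 2 * (2 * ‖u‖ * ε) := hnorm hζ
        _ ≤ (C * ‖φ ζ - χ ζ‖) ^ 2 * (2 * ‖u‖ * ε) := by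
            gcongr
            exact hC ζ hζ2
        _ ≤ 2 * (B ^ 2 + C ^ 2) * ‖u‖ * ε * ‖φ ζ - χ ζ‖ ^ 2 := by
            nlinarith [mul_nonneg (mul_nonneg (sq_nonneg B) hεu) hpos.le]
        _ < c * ‖φ ζ - χ ζ‖ ^ 2 := by
            gcongr
            exact hεlt.trans_le (min_le_left _ _)
  · simp only [hφ.map_zero, hχ.map_zero, hk0]
    rw [one_pow, sub_zero, one_mul, mul_one, ← two_smul ℂ z, inv_smul_smul₀ two_ne_zero]

theorem IsDiscAt.exists_norm_sub_sq_le_mul_one_sub (hΩ : StronglyConvexAt Ω p ω)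
    (hφ : IsDiscAt Ω z φ) (hχ : IsDiscAt Ω z χ) (hφJ : SlopeLE ω p φ J) (hχJ : SlopeLE ω p χ J) :
    ∃ D, ∀ r ∈ Ico (0 : ℝ) 1, ‖φ r - χ r‖ ^ 2 ≤ D * (1 - r) := by
  obtain ⟨D, -, hD⟩ := IsDiscAt.exists_norm_sub_sq_le hΩ
  refine ⟨4 * (D * J), fun r hr => (norm_sub_sq_le_two_mul_add _ _ p).trans ?_⟩
  linarith [hD φ z J hφ hφJ r hr, hD χ z J hχ hχJ r hr]

-- If two minimal discs differ, their midpoint can be pushed away from `p` at the centre at no cost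
-- in slope; contracting towards `p` then produces a disc through `z` of smaller slope.
theorem StronglyConvexAt.eqOn_of_minimal_disc [CompleteSpace E] (hΩ : StronglyConvexAt Ω p ω)
    (hφ : IsDiscAt Ω z φ) (hχ : IsDiscAt Ω z χ) (hφJ : SlopeLE ω p φ J) (hχJ : SlopeLE ω p χ J)
    (hmin : ∀ ψ J', IsDiscAt Ω z ψ → SlopeLE ω p ψ J' → J ≤ J') : EqOn φ χ (ball 0 1) := by
  intro w hw
  by_contra hne
  obtain ⟨k, hk, hk0, ⟨C, hC⟩, B, hB⟩ := exists_normalized_factor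
    (hφ.differentiableOn.sub hχ.differentiableOn) hw (sub_ne_zero.mpr hne)
  obtain ⟨ε, hε, hψ⟩ := hφ.exists_isDiscAt_midpoint_add hΩ hχ hk hk0 hC hB (z - p)
  obtain ⟨D, hD⟩ := hφ.exists_norm_sub_sq_le_mul_one_sub hΩ hχ hφJ hχJ
  have hψJ := hψ.slopeLE_of_isLittleO hΩ (hφJ.midpoint hχJ) <|
    isLittleO_one_sub_of_norm_le (K := ε * (C ^ 2 * D * ‖z - p‖)) one_half_lt_one fun r hr => by
      have hr0 : 0 ≤ r := by linarith [hr.1]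
      have hr1 : 0 ≤ 1 - r := sub_nonneg.mpr hr.2.le
      have hkr : ‖k r‖ ^ 2 ≤ C ^ 2 * (D * (1 - r)) := calc
        ‖k r‖ ^ 2 ≤ (C * ‖φ r - χ r‖) ^ 2 := by
            gcongr
            exact hC r (by rw [norm_real, Real.norm_of_nonneg hr0]; exact hr.1)
        _ = C ^ 2 * ‖φ r - χ r‖ ^ 2 := mul_pow _ _ _
        _ ≤ C ^ 2 * (D * (1 - r)) := by
            gcongr
            exact hD r ⟨hr0, hr.2⟩
      rw [add_sub_cancel_left, norm_smul, norm_mul, norm_mul, norm_pow, ← ofReal_one,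
        ← ofReal_sub, norm_real, norm_real, Real.norm_of_nonneg hε.le, Real.norm_of_nonneg hr1]
      calc ε * (‖k r‖ ^ 2 * (1 - r)) * ‖z - p‖
          ≤ ε * (C ^ 2 * (D * (1 - r)) * (1 - r)) * ‖z - p‖ := by gcongr
        _ = ε * (C ^ 2 * D * ‖z - p‖) * (1 - r) ^ 2 := by ring
  have ht : (1 + ε)⁻¹ ∈ Ioc (0 : ℝ) 1 := ⟨by positivity, inv_le_one_of_one_le₀ (by linarith)⟩
  have hcentre : p + (((1 + ε)⁻¹ : ℝ) : ℂ) • (z + (ε : ℂ) • (z - p) - p) = z := by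
    have hne : (1 + ε : ℂ) ≠ 0 := by exact_mod_cast (by positivity : (1 + ε : ℝ) ≠ 0)
    rw [add_sub_right_comm, ← one_smul ℂ (z - p), smul_smul, mul_one, ← add_smul]
    push_cast
    rw [inv_smul_smul₀ hne, add_sub_cancel]
  have hdisc := hψ.homothety hΩ ht
  rw [hcentre] at hdisc
  have hle := hmin _ _ hdisc (hψJ.homothety ht.1.le)
  have hJ : 0 < J := (hΩ.re_pos (hφ.map_zero ▸ hφ.mapsTo (mem_ball_self one_pos))).trans_le
    (hφ.re_le_of_slopeLE hφJ)
  rw [← div_eq_inv_mul, le_div_iff₀ (by positivity)] at hle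
  nlinarith

theorem IsDiscAt.tendsto_nhdsWithin (hΩ : StronglyConvexAt Ω p ω) (hφ : IsDiscAt Ω z φ)
    (hJ : SlopeLE ω p φ J) : Tendsto (fun r : ℝ => φ r) (𝓝[<] 1) (𝓝[Ω] p) := by
  obtain ⟨C, -, hC⟩ := IsDiscAt.exists_norm_sub_sq_le hΩ
  have hIco : ∀ᶠ r in 𝓝[<] (1 : ℝ), r ∈ Ico (0 : ℝ) 1 := Ico_mem_nhdsLT one_pos
  refine tendsto_nhdsWithin_iff.mpr ⟨tendsto_iff_norm_sub_tendsto_zero.mpr ?_, ?_⟩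
  · have hlim : Tendsto (fun r : ℝ => √(C * J * (1 - r))) (𝓝[<] 1) (𝓝 0) := by
      refine ((Continuous.tendsto' ?_ 1 0 (by simp)).mono_left nhdsWithin_le_nhds)
      fun_prop
    refine squeeze_zero' (Eventually.of_forall fun _ => norm_nonneg _) ?_ hlim
    filter_upwards [hIco] with r hr using Real.le_sqrt_of_sq_le (hC φ z J hφ hJ r hr)
  · filter_upwards [hIco] with r hr using hφ.mapsTo (ofReal_mem_ball_of_mem_Ico hr)

theorem IsDiscAt.map_sub_isLittleO (hΩ : StronglyConvexAt Ω p ω) (hφ : IsDiscAt Ω z φ)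
    (hJ : SlopeLE ω p φ J) {F : E → E}
    (hFp : Tendsto (fun x => ‖F x - x‖ / ‖x - p‖ ^ 2) (𝓝[Ω] p) (𝓝 0)) :
    (fun r : ℝ => F (φ r) - φ r) =o[𝓝[<] 1] fun r : ℝ => 1 - r := by
  obtain ⟨C, -, hC⟩ := IsDiscAt.exists_norm_sub_sq_le hΩ
  have hFp' : (fun x => F x - x) =o[𝓝[Ω] p] fun x => ‖x - p‖ ^ 2 := by
    refine (Asymptotics.isLittleO_of_tendsto' ?_ hFp).of_norm_left
    filter_upwards [self_mem_nhdsWithin] with x hx h0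
    exact absurd (sub_eq_zero.mp (norm_eq_zero.mp (pow_eq_zero_iff two_ne_zero |>.mp h0)))
      fun h => hΩ.notMem (h ▸ hx)
  refine (hFp'.comp_tendsto (hφ.tendsto_nhdsWithin hΩ hJ)).trans_isBigO (.of_bound (C * J) ?_)
  filter_upwards [Ico_mem_nhdsLT (zero_lt_one' ℝ)] with r hr
  rw [comp_apply, norm_pow, norm_norm, Real.norm_of_nonneg (sub_nonneg.mpr hr.2.le)]
  exact hC φ z J hφ hJ r hr

theorem StronglyConvexAt.exists_fixed_disc [FiniteDimensional ℂ E] (hΩ : StronglyConvexAt Ω p ω)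
    (hz : z ∈ Ω) {F : E → E} (hF : DifferentiableOn ℂ F Ω) (hmaps : MapsTo F Ω Ω) (hFz : F z = z)
    (hFp : Tendsto (fun x => ‖F x - x‖ / ‖x - p‖ ^ 2) (𝓝[Ω] p) (𝓝 0)) :
    ∃ φ J, IsDiscAt Ω z φ ∧ SlopeLE ω p φ J ∧ ∀ ζ ∈ ball (0 : ℂ) 1, F (φ ζ) = φ ζ := by
  have := FiniteDimensional.complete ℂ E
  obtain ⟨φ, J, hφ, hJ, hmin⟩ := hΩ.exists_minimal_disc hz
  have hFφ : IsDiscAt Ω z fun ζ => F (φ ζ) :=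
    ⟨hF.comp hφ.differentiableOn hφ.mapsTo, hmaps.comp hφ.mapsTo, by rw [hφ.map_zero, hFz]⟩
  have hFJ := hFφ.slopeLE_of_isLittleO hΩ hJ (hφ.map_sub_isLittleO hΩ hJ hFp)
  exact ⟨φ, J, hφ, hJ, hΩ.eqOn_of_minimal_disc hFφ hφ hFJ hJ hmin⟩

end Uniqueness

section Kernel

variable {E : Type*} [NormedAddCommGroup E] [NormedSpace ℂ E]

theorem eqOn_of_convex_of_eventuallyEq {F : Type*} [NormedAddCommGroup F] [NormedSpace ℂ F]
    [CompleteSpace F] {V : Set E} (hV : IsOpen V) (hc : Convex ℝ V) {f g : E → F}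
    (hf : DifferentiableOn ℂ f V) (hg : DifferentiableOn ℂ g V) {a : E} (ha : a ∈ V)
    (hfg : f =ᶠ[𝓝 a] g) : EqOn f g V := fun x hx => by
  set γ : ℂ → E := fun ζ => ζ • (x - a) + a
  have hγ : Differentiable ℂ γ := by fun_prop
  have hconv : Convex ℝ (γ ⁻¹' V) := hc.affine_preimage
    (((LinearMap.toSpanSingleton ℂ E (x - a)).restrictScalars ℝ).toAffineMap +
      AffineMap.const ℝ ℂ a)
  have hcomp : ∀ h : E → F, DifferentiableOn ℂ h V → AnalyticOnNhd ℂ (h ∘ γ) (γ ⁻¹' V) :=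
    fun h hh => (hh.comp hγ.differentiableOn fun _ h => h).analyticOnNhd (hV.preimage hγ.continuous)
  have hlim : Tendsto γ (𝓝 0) (𝓝 a) := by simpa [γ] using hγ.continuous.tendsto 0
  have heq := (hcomp f hf).eqOn_of_preconnected_of_eventuallyEq (hcomp g hg) hconv.isPreconnected
    (by simpa [γ] using ha) (hlim.eventually hfg)
  simpa [γ] using heq (x := 1) (by simpa [γ] using hx)

variable {ι : Type*}

/-- The kernel of a family of sets along an ultrafilter, as in Carathéodory's kernel theorem: the
points having a neighbourhood contained in almost all of the sets. -/
def ultraKernel (𝒰 : Ultrafilter ι) (U : ι → Set E) : Set E :=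
  {x | ∃ R > 0, ∀ᶠ j in 𝒰, ball x R ⊆ U j}

/-- `U` is a convex set over the right half-plane (via `ω`) whose points are controlled in norm
by their image. -/
structure ConvexOverHalfPlane (ω : E →L[ℂ] ℂ) (C : ℝ) (U : Set E) : Prop where
  convex : Convex ℝ U
  re_pos : ∀ x ∈ U, 0 < (ω x).re
  norm_le : ∀ x ∈ U, ‖x‖ ≤ C * (1 + ‖ω x‖)

variable {𝒰 : Ultrafilter ι} {U : ι → Set E}

omit [NormedSpace ℂ E] in
theorem mem_ultraKernel_of_ball_subset {x y : E} {R : ℝ} (hy : y ∈ ball x R)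
    (h : ∀ᶠ j in 𝒰, ball x R ⊆ U j) : y ∈ ultraKernel 𝒰 U := by
  obtain ⟨r, hr, hball⟩ := isOpen_iff.mp isOpen_ball y hy
  exact ⟨r, hr, h.mono fun j hj => hball.trans hj⟩

omit [NormedSpace ℂ E] in
theorem isOpen_ultraKernel : IsOpen (ultraKernel 𝒰 U) :=
  isOpen_iff.mpr fun _ ⟨R, hR, h⟩ => ⟨R, hR, fun _ hy => mem_ultraKernel_of_ball_subset hy h⟩

theorem convex_ultraKernel (hU : ∀ j, Convex ℝ (U j)) : Convex ℝ (ultraKernel 𝒰 U) := by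
  rintro x ⟨R, hR, hx⟩ y ⟨r, hr, hy⟩ s t hs ht hst
  refine ⟨min R r, lt_min hR hr, ?_⟩
  filter_upwards [hx, hy] with j hxj hyj w hw
  set u := w - (s • x + t • y)
  have hu : ‖u‖ < min R r := mem_ball_iff_norm.mp hw
  have hxu : x + u ∈ U j := hxj (by simpa using hu.trans_le (min_le_left _ _))
  have hyu : y + u ∈ U j := hyj (by simpa using hu.trans_le (min_le_right _ _))
  have hcombo : s • (x + u) + t • (y + u) = w := by
    rw [smul_add, smul_add, add_add_add_comm, ← add_smul, hst, one_smul, add_sub_cancel]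
  exact hcombo ▸ hU j hxu hyu hs ht hst

variable {ω : E →L[ℂ] ℂ} {ν : E} {C : ℝ}

theorem eventually_norm_map_iterate_le {G : ι → E → E}
    (hGν : ∀ m, Tendsto (fun j => (G j)^[m] ν) 𝒰 (𝓝 ν))
    (ω : E →L[ℂ] ℂ) (m : ℕ) : ∀ᶠ j in 𝒰, ‖ω ((G j)^[m] ν)‖ ≤ ‖ω ν‖ + 1 :=
  (((ω.continuous.norm.tendsto ν).comp (hGν m)).eventually_lt_const (lt_add_one _)).mono
    fun _ h => h.le

namespace ConvexOverHalfPlane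

theorem nonneg {V : Set E} {x : E} (hV : ConvexOverHalfPlane ω C V) (hx : x ∈ V) : 0 ≤ C :=
  nonneg_of_mul_nonneg_left ((norm_nonneg x).trans (hV.norm_le x hx)) (by positivity)

theorem norm_map_le_three_mul {V : Set E} {f : E → E} {x y : E} {R : ℝ}
    (hV : ConvexOverHalfPlane ω C V) (hd : DifferentiableOn ℂ f (ball x R))
    (hf : MapsTo f (ball x R) V) (hy : y ∈ ball x (R / 2)) : ‖ω (f y)‖ ≤ 3 * ‖ω (f x)‖ := by
  have hyR : ‖y - x‖ < R / 2 := mem_ball_iff_norm.mp hy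
  have hR : 0 < R := by linarith [norm_nonneg (y - x)]
  exact norm_le_three_mul_of_re_nonneg (h := fun z => ω (f z))
    (ω.differentiable.comp_differentiableOn hd) (fun z hz => (hV.re_pos _ (hf hz)).le)
    (hV.re_pos _ (hf (mem_ball_self hR))) (ball_subset_ball (by linarith) hy) hyR.le

theorem norm_le_of_mapsTo_ball {V : Set E} {f : E → E} {x y : E} {R : ℝ}
    (hV : ConvexOverHalfPlane ω C V) (hd : DifferentiableOn ℂ f (ball x R))
    (hf : MapsTo f (ball x R) V) (hy : y ∈ ball x (R / 2)) :
    ‖f y‖ ≤ C * (1 + 3 * ‖ω (f x)‖) := by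
  have hyR : y ∈ ball x R := ball_subset_ball
    (by linarith [norm_nonneg (y - x), mem_ball_iff_norm.mp hy]) hy
  have hC := hV.nonneg (hf hyR)
  exact (hV.norm_le _ (hf hyR)).trans (by gcongr; exact hV.norm_map_le_three_mul hd hf hy)

variable {G : ι → E → E}

theorem exists_eventually_norm_le (hU : ∀ j, ConvexOverHalfPlane ω C (U j))
    (hd : ∀ j, DifferentiableOn ℂ (G j) (U j)) (hm : ∀ j, MapsTo (G j) (U j) (U j))
    (hν : ν ∈ ultraKernel 𝒰 U) (hM : ∃ M, ∀ᶠ j in 𝒰, ‖ω (G j ν)‖ ≤ M)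
    {x : E} (hx : x ∈ ultraKernel 𝒰 U) : ∃ M, ∀ᶠ j in 𝒰, ‖ω (G j x)‖ ≤ M := by
  set P : E → E → Prop := fun x y =>
    (∃ M, ∀ᶠ j in 𝒰, ‖ω (G j x)‖ ≤ M) → ∃ M, ∀ᶠ j in 𝒰, ‖ω (G j y)‖ ≤ M
  have hnear : ∀ {x y : E} {R : ℝ}, (∀ᶠ j in 𝒰, ball x R ⊆ U j) → y ∈ ball x (R / 2) → P x y := by
    rintro x y R hxR hy ⟨M, hM⟩
    refine ⟨3 * M, ?_⟩
    filter_upwards [hxR, hM] with j hj hjM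
    exact ((hU j).norm_map_le_three_mul ((hd j).mono hj) ((hm j).mono_left hj) hy).trans
      (by gcongr)
  refine (convex_ultraKernel fun j => (hU j).convex).isPreconnected.induction₂' P ?_
    (fun _ _ _ _ _ _ hxy hyz h => hyz (hxy h)) hν hx hM
  rintro x ⟨R, hR, hxR⟩
  filter_upwards [nhdsWithin_le_nhds (ball_mem_nhds x (by positivity : 0 < R / 4))] with y hy
  have hsub : ball y (R / 2) ⊆ ball x R := ball_subset_ball' (by linarith [mem_ball.mp hy])
  exact ⟨hnear hxR (ball_subset_ball (by linarith) hy),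
    hnear (hxR.mono fun j hj => hsub.trans hj) (mem_ball_comm.mp (by convert hy using 2; ring))⟩

theorem exists_eventually_bounded_on_ball (hU : ∀ j, ConvexOverHalfPlane ω C (U j))
    (hd : ∀ j, DifferentiableOn ℂ (G j) (U j)) (hm : ∀ j, MapsTo (G j) (U j) (U j))
    (hν : ν ∈ ultraKernel 𝒰 U) (hM : ∃ M, ∀ᶠ j in 𝒰, ‖ω (G j ν)‖ ≤ M)
    {x : E} (hx : x ∈ ultraKernel 𝒰 U) :
    ∃ R > 0, ∃ M, ∀ᶠ j in 𝒰,
      DifferentiableOn ℂ (G j) (ball x R) ∧ ∀ y ∈ ball x R, ‖G j y‖ ≤ M := by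
  obtain ⟨M', hM'⟩ := exists_eventually_norm_le hU hd hm hν hM hx
  obtain ⟨R, hR, hxR⟩ := hx
  refine ⟨R / 2, half_pos hR, C * (1 + 3 * M'), ?_⟩
  filter_upwards [hM', hxR] with j hMj hj
  refine ⟨(hd j).mono ((ball_subset_ball (by linarith)).trans hj), fun y hy => ?_⟩
  have hC := (hU j).nonneg (hj (mem_ball_self hR))
  exact ((hU j).norm_le_of_mapsTo_ball ((hd j).mono hj) ((hm j).mono_left hj) hy).trans
    (by gcongr)

theorem exists_eventually_iterate_bounded_on_ball (hU : ∀ j, ConvexOverHalfPlane ω C (U j))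
    (hd : ∀ j, DifferentiableOn ℂ (G j) (U j)) (hm : ∀ j, MapsTo (G j) (U j) (U j))
    (hν : ν ∈ ultraKernel 𝒰 U) (hGν : ∀ m, Tendsto (fun j => (G j)^[m] ν) 𝒰 (𝓝 ν)) (m : ℕ)
    {x : E} (hx : x ∈ ultraKernel 𝒰 U) :
    ∃ R > 0, ∃ M, ∀ᶠ j in 𝒰,
      DifferentiableOn ℂ (G j)^[m] (ball x R) ∧ ∀ y ∈ ball x R, ‖(G j)^[m] y‖ ≤ M :=
  exists_eventually_bounded_on_ball hU (fun j => (hd j).iterate (hm j) m)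
    (fun j => (hm j).iterate m) hν ⟨_, eventually_norm_map_iterate_le hGν ω m⟩ hx

variable [FiniteDimensional ℂ E]

-- Cartan's uniqueness theorem passes to the limit: the limits of the iterates are the iterates of
-- the limit, and they are bounded near `ν`.
theorem eqOn_id_of_tendsto_iterates (hU : ∀ j, ConvexOverHalfPlane ω C (U j))
    (hd : ∀ j, DifferentiableOn ℂ (G j) (U j)) (hm : ∀ j, MapsTo (G j) (U j) (U j))
    (hν : ν ∈ ultraKernel 𝒰 U) (hGν : ∀ m, Tendsto (fun j => (G j)^[m] ν) 𝒰 (𝓝 ν))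
    {g : ℕ → E → E} (hgd : ∀ m, DifferentiableOn ℂ (g m) (ultraKernel 𝒰 U))
    (hg : ∀ m, ∀ x ∈ ultraKernel 𝒰 U, Tendsto (fun j => (G j)^[m] x) 𝒰 (𝓝 (g m x)))
    (hnil : IsNilpotent (fderiv ℂ (g 1) ν - 1)) : EqOn (g 1) id (ultraKernel 𝒰 U) := by
  have : CompleteSpace E := FiniteDimensional.complete ℂ E
  obtain ⟨R, hR, hνR⟩ := id hν
  have hsub : ball ν (R / 2) ⊆ ultraKernel 𝒰 U := fun y hy =>
    mem_ultraKernel_of_ball_subset (ball_subset_ball (by linarith) hy) hνR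
  have hbound : ∀ m, ∀ y ∈ ball ν (R / 2), ‖g m y‖ ≤ C * (1 + 3 * (‖ω ν‖ + 1)) := fun m y hy => by
    refine le_of_tendsto (hg m y (hsub hy)).norm ?_
    filter_upwards [hνR, eventually_norm_map_iterate_le hGν ω m] with j hj hjω
    have hC := (hU j).nonneg (hj (mem_ball_self hR))
    exact ((hU j).norm_le_of_mapsTo_ball (((hd j).iterate (hm j) m).mono hj)
      (((hm j).iterate m).mono_left hj) hy).trans (by gcongr)
  have hcomp : ∀ m, ∀ y ∈ ball ν (R / 2), g 1 y ∈ ball ν (R / 2) → g (m + 1) y = g m (g 1 y) :=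
    fun m y hy hgy => by
      obtain ⟨r, hr, M, hrM⟩ :=
        exists_eventually_iterate_bounded_on_ball hU hd hm hν hGν m (hsub hgy)
      have hlim := tendsto_comp_of_bounded_on_ball hr hrM (hg m _ (hsub hgy)) (hg 1 y (hsub hy))
      exact tendsto_nhds_unique (hg (m + 1) y (hsub hy)) hlim
  exact eqOn_of_convex_of_eventuallyEq isOpen_ultraKernel
    (convex_ultraKernel fun j => (hU j).convex) (hgd 1) differentiableOn_id hν <|
    eventually_eq_self_of_bounded_iterates (half_pos hR) (fun m => (hgd m).mono hsub) hbound
      (fun y hy => tendsto_nhds_unique (hg 0 y (hsub hy)) tendsto_const_nhds)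
      (tendsto_nhds_unique (hg 1 ν hν) (hGν 1)) hcomp hnil

theorem tendsto_fderiv_one_of_iterates (hU : ∀ j, ConvexOverHalfPlane ω C (U j))
    (hd : ∀ j, DifferentiableOn ℂ (G j) (U j)) (hm : ∀ j, MapsTo (G j) (U j) (U j))
    (hν : ν ∈ ultraKernel 𝒰 U) (hGν : ∀ m, Tendsto (fun j => (G j)^[m] ν) 𝒰 (𝓝 ν))
    (hnil : ∀ Z, Tendsto (fun j => fderiv ℂ (G j) ν) 𝒰 (𝓝 Z) → IsNilpotent (Z - 1))
    {x : ι → E} {x₀ : E} (hx : Tendsto x 𝒰 (𝓝 x₀)) (hx₀ : x₀ ∈ ultraKernel 𝒰 U) :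
    Tendsto (fun j => fderiv ℂ (G j) (x j)) 𝒰 (𝓝 1) := by
  have hloc := fun m x => exists_eventually_iterate_bounded_on_ball hU hd hm hν hGν m (x := x)
  choose g hgd hg hgf using fun m => exists_holomorphic_ultralimit 𝒰 isOpen_ultraKernel (hloc m)
  have hid := eqOn_id_of_tendsto_iterates hU hd hm hν hGν hgd hg (hnil _ (hgf 1 ν hν))
  have hone : fderiv ℂ (g 1) x₀ = 1 := by
    rw [(hid.eventuallyEq_of_mem (isOpen_ultraKernel.mem_nhds hx₀)).fderiv_eq, fderiv_id]
    rfl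
  obtain ⟨r, hr, M, hrM⟩ := hloc 1 x₀ hx₀
  exact tendsto_fderiv_comp_of_bounded_on_ball hr hrM (hone ▸ hgf 1 x₀ hx₀) hx

end ConvexOverHalfPlane

end Kernel

section Dilation

variable {E : Type*} [NormedAddCommGroup E] [NormedSpace ℂ E]

/-- The anisotropic dilation scaling the direction `ν` by `s ^ 2` and the kernel of `ω` by `s`, when
`ω ν = 1`. It maps the paraboloid `‖x - ω x • ν‖ ^ 2 < (ω x).re` to itself for `s ≠ 0`. -/
def dilation (ω : E →L[ℂ] ℂ) (ν : E) (s : ℝ) : E →L[ℂ] E :=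
  (s : ℂ) • ContinuousLinearMap.id ℂ E + ((s ^ 2 - s : ℝ) : ℂ) • ω.smulRight ν

variable {ω : E →L[ℂ] ℂ} {ν : E} {s : ℝ}

theorem dilation_apply (s : ℝ) (x : E) :
    dilation ω ν s x = (s : ℂ) • x + ((s ^ 2 - s : ℝ) : ℂ) • ω x • ν := rfl

theorem map_dilation (hν : ω ν = 1) (s : ℝ) (x : E) : ω (dilation ω ν s x) = (s ^ 2 : ℝ) * ω x := by
  rw [dilation_apply, map_add, map_smul, map_smul, map_smul, hν]
  simp only [smul_eq_mul]
  push_cast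
  ring

theorem dilation_dilation (hν : ω ν = 1) (s t : ℝ) (x : E) :
    dilation ω ν s (dilation ω ν t x) = dilation ω ν (s * t) x := by
  rw [dilation_apply s, map_dilation hν, dilation_apply, dilation_apply]
  push_cast
  module

theorem dilation_one (x : E) : dilation ω ν 1 x = x := by simp [dilation_apply]

theorem dilation_inv_dilation (hν : ω ν = 1) (hs : s ≠ 0) (x : E) :
    dilation ω ν s⁻¹ (dilation ω ν s x) = x := by
  rw [dilation_dilation hν, inv_mul_cancel₀ hs, dilation_one]

theorem dilation_dilation_inv (hν : ω ν = 1) (hs : s ≠ 0) (x : E) :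
    dilation ω ν s (dilation ω ν s⁻¹ x) = x := by
  rw [dilation_dilation hν, mul_inv_cancel₀ hs, dilation_one]

theorem dilation_normal (hν : ω ν = 1) (s : ℝ) : dilation ω ν s ν = ((s ^ 2 : ℝ) : ℂ) • ν := by
  rw [dilation_apply, hν]
  push_cast
  module

theorem dilation_sub_normal (hν : ω ν = 1) (s : ℝ) (x : E) :
    dilation ω ν s x - ω (dilation ω ν s x) • ν = (s : ℂ) • (x - ω x • ν) := by
  rw [map_dilation hν, dilation_apply]
  push_cast
  module

theorem norm_dilation_le {b : ℝ} (hs : |s| ≤ b) (hsq : |s ^ 2 - s| ≤ b) (x : E) :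
    ‖dilation ω ν s x‖ ≤ b * ((1 + ‖ω‖ * ‖ν‖) * ‖x‖) := by
  calc ‖dilation ω ν s x‖ ≤ ‖(s : ℂ) • x‖ + ‖((s ^ 2 - s : ℝ) : ℂ) • ω x • ν‖ := norm_add_le _ _
    _ = |s| * ‖x‖ + |s ^ 2 - s| * (‖ω x‖ * ‖ν‖) := by
      simp only [norm_smul, norm_real, Real.norm_eq_abs]
    _ ≤ b * ‖x‖ + b * (‖ω‖ * ‖x‖ * ‖ν‖) := by
      have hb := (abs_nonneg s).trans hs
      gcongr
      exact ω.le_opNorm x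
    _ = b * ((1 + ‖ω‖ * ‖ν‖) * ‖x‖) := by ring

theorem norm_dilation_le_of_le_one (h0 : 0 ≤ s) (h1 : s ≤ 1) (x : E) :
    ‖dilation ω ν s x‖ ≤ s * ((1 + ‖ω‖ * ‖ν‖) * ‖x‖) :=
  norm_dilation_le (abs_of_nonneg h0).le (abs_le.mpr ⟨by nlinarith, by nlinarith⟩) x

theorem norm_dilation_le_of_one_le (h1 : 1 ≤ s) (x : E) :
    ‖dilation ω ν s x‖ ≤ s ^ 2 * ((1 + ‖ω‖ * ‖ν‖) * ‖x‖) :=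
  norm_dilation_le (abs_le.mpr ⟨by nlinarith, by nlinarith⟩)
    (abs_le.mpr ⟨by nlinarith, by nlinarith⟩) x

theorem tendsto_dilation_inv_of_isLittleO {ι : Type*} {l : Filter ι} {δ : ι → ℝ} {u : ι → E}
    (hδ : Tendsto δ l (𝓝[>] 0)) (hu : u =o[l] δ) :
    Tendsto (fun j => dilation ω ν (√(δ j))⁻¹ (u j)) l (𝓝 0) := by
  refine squeeze_zero_norm' ?_
    (by simpa using hu.norm_norm.tendsto_div_nhds_zero.const_mul (1 + ‖ω‖ * ‖ν‖))
  filter_upwards [hδ.eventually (Ioo_mem_nhdsGT one_pos)] with j ⟨hδ0, hδ1⟩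
  have hsqrt : 1 ≤ (√(δ j))⁻¹ :=
    (one_le_inv₀ (Real.sqrt_pos.mpr hδ0)).mpr (Real.sqrt_le_one.mpr hδ1.le)
  calc ‖dilation ω ν (√(δ j))⁻¹ (u j)‖ ≤ (√(δ j))⁻¹ ^ 2 * ((1 + ‖ω‖ * ‖ν‖) * ‖u j‖) :=
        norm_dilation_le_of_one_le hsqrt (u j)
    _ = (1 + ‖ω‖ * ‖ν‖) * (‖u j‖ / ‖δ j‖) := by
      rw [inv_pow, Real.sq_sqrt hδ0.le, Real.norm_of_nonneg hδ0.le]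
      ring

section ConjDilation

variable {ι : Type*} {l : Filter ι} [l.NeBot] {s : ι → ℝ} {T : ι → E →L[ℂ] E} {Z : E →L[ℂ] E}

theorem map_normal_eq_zero_of_tendsto_conj_dilation (hν : ω ν = 1)
    (hs : ∀ᶠ j in l, 0 < s j ∧ s j ≤ 1) (hT : Tendsto T l (𝓝 0))
    (hZ : Tendsto (fun j => dilation ω ν (s j)⁻¹ ∘L T j ∘L dilation ω ν (s j)) l (𝓝 Z)) :
    Z ν = 0 := by
  have hTν : Tendsto (fun j => (1 + ‖ω‖ * ‖ν‖) * ‖T j ν‖) l (𝓝 0) := by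
    simpa using (tendsto_continuousLinearMap_apply hT (tendsto_const_nhds (x := ν))).norm.const_mul
      (1 + ‖ω‖ * ‖ν‖)
  refine tendsto_nhds_unique (tendsto_continuousLinearMap_apply hZ tendsto_const_nhds)
    (squeeze_zero_norm' ?_ hTν)
  filter_upwards [hs] with j ⟨hs0, hs1⟩
  calc ‖dilation ω ν (s j)⁻¹ (T j (dilation ω ν (s j) ν))‖
      = s j ^ 2 * ‖dilation ω ν (s j)⁻¹ (T j ν)‖ := by
        rw [dilation_normal hν, map_smul, map_smul, norm_smul, norm_real,
          Real.norm_of_nonneg (sq_nonneg _)]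
    _ ≤ s j ^ 2 * ((s j)⁻¹ ^ 2 * ((1 + ‖ω‖ * ‖ν‖) * ‖T j ν‖)) := by
        gcongr
        exact norm_dilation_le_of_one_le ((one_le_inv₀ hs0).mpr hs1) _
    _ = (1 + ‖ω‖ * ‖ν‖) * ‖T j ν‖ := by field_simp

theorem map_eq_smul_normal_of_tendsto_conj_dilation (hν : ω ν = 1)
    (hs : ∀ᶠ j in l, s j ≠ 0) (hT : Tendsto T l (𝓝 0))
    (hZ : Tendsto (fun j => dilation ω ν (s j)⁻¹ ∘L T j ∘L dilation ω ν (s j)) l (𝓝 Z))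
    {e : E} (he : ω e = 0) : Z e = ω (Z e) • ν := by
  have hproj : Continuous fun y : E => y - ω y • ν := by fun_prop
  have hTe : Tendsto (fun j => T j e - ω (T j e) • ν) l (𝓝 0) := by
    simpa [Function.comp_def] using (hproj.tendsto _).comp
      (tendsto_continuousLinearMap_apply hT (tendsto_const_nhds (x := e)))
  refine sub_eq_zero.mp (tendsto_nhds_unique ((hproj.tendsto _).comp
    (tendsto_continuousLinearMap_apply hZ tendsto_const_nhds)) (hTe.congr' ?_))
  filter_upwards [hs] with j hj
  have hde : dilation ω ν (s j) e = (s j : ℂ) • e := by simp [dilation_apply, he]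
  simp only [Function.comp_apply, ContinuousLinearMap.comp_apply]
  rw [dilation_sub_normal hν, hde, map_smul, map_smul, smul_eq_mul, mul_smul, ← smul_sub, smul_smul,
    ← ofReal_mul, inv_mul_cancel₀ hj, ofReal_one, one_smul]

-- In the splitting `ℂ ν ⊕ ker ω`, conjugation keeps the diagonal blocks of `T` and shrinks the
-- block from `ℂ ν` to `ker ω`, so only the block from `ker ω` to `ℂ ν` can survive in the limit.
theorem isNilpotent_of_tendsto_conj_dilation (hν : ω ν = 1)
    (hs : ∀ᶠ j in l, 0 < s j ∧ s j ≤ 1) (hT : Tendsto T l (𝓝 0))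
    (hZ : Tendsto (fun j => dilation ω ν (s j)⁻¹ ∘L T j ∘L dilation ω ν (s j)) l (𝓝 Z)) :
    IsNilpotent Z := by
  have hZν := map_normal_eq_zero_of_tendsto_conj_dilation hν hs hT hZ
  refine ⟨2, ContinuousLinearMap.ext fun x => ?_⟩
  have hx : Z x = Z (x - ω x • ν) := by rw [map_sub, map_smul, hZν, smul_zero, sub_zero]
  have hker : ω (x - ω x • ν) = 0 := by simp [hν]
  rw [sq, mul_apply_eq_comp, hx, map_eq_smul_normal_of_tendsto_conj_dilation hν
    (hs.mono fun j hj => hj.1.ne') hT hZ hker, map_smul, hZν, smul_zero, zero_apply]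

end ConjDilation

end Dilation

section Rescaling

variable {E : Type*} [NormedAddCommGroup E] [NormedSpace ℂ E]

/-- The domain `Ω` in the coordinates `x ↦ p + dilation ω ν s x`. -/
def rescaled (Ω : Set E) (p : E) (ω : E →L[ℂ] ℂ) (ν : E) (s : ℝ) : Set E :=
  {x | p + dilation ω ν s x ∈ Ω}

/-- The map `f` in the coordinates `x ↦ p + dilation ω ν s x`. -/
def rescaledMap (f : E → E) (p : E) (ω : E →L[ℂ] ℂ) (ν : E) (s : ℝ) (x : E) : E :=
  dilation ω ν s⁻¹ (f (p + dilation ω ν s x) - p)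

variable {ω : E →L[ℂ] ℂ} {ν p : E} {s : ℝ} {f : E → E} {Ω : Set E}

theorem hasFDerivAt_rescaledMap {B : E →L[ℂ] E} {x : E}
    (hB : HasFDerivAt f B (p + dilation ω ν s x)) :
    HasFDerivAt (rescaledMap f p ω ν s) (dilation ω ν s⁻¹ ∘L B ∘L dilation ω ν s) x :=
  (dilation ω ν s⁻¹).hasFDerivAt.comp x
    ((hB.comp x ((dilation ω ν s).hasFDerivAt.const_add p)).sub_const p)

theorem differentiableOn_rescaledMap (hf : DifferentiableOn ℂ f Ω) :
    DifferentiableOn ℂ (rescaledMap f p ω ν s) (rescaled Ω p ω ν s) :=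
  (dilation ω ν s⁻¹).differentiable.comp_differentiableOn <| DifferentiableOn.sub_const
    (hf.comp ((dilation ω ν s).differentiable.const_add p).differentiableOn fun _ h => h) p

theorem semiconj_rescaledMap (hν : ω ν = 1) (hs : s ≠ 0) :
    Function.Semiconj (fun x => p + dilation ω ν s x) (rescaledMap f p ω ν s) f := fun x => by
  simp only [rescaledMap, dilation_dilation_inv hν hs, add_sub_cancel]

theorem mapsTo_rescaledMap (hν : ω ν = 1) (hs : s ≠ 0) (hm : MapsTo f Ω Ω) :
    MapsTo (rescaledMap f p ω ν s) (rescaled Ω p ω ν s) (rescaled Ω p ω ν s) := fun x hx => by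
  change p + dilation ω ν s _ ∈ Ω
  rw [(semiconj_rescaledMap hν hs).eq]
  exact hm hx

theorem iterate_rescaledMap (hν : ω ν = 1) (hs : s ≠ 0) (m : ℕ) :
    (rescaledMap f p ω ν s)^[m] = rescaledMap f^[m] p ω ν s := funext fun x => by
  rw [rescaledMap, ← (semiconj_rescaledMap hν hs).iterate_right m x, add_sub_cancel_left,
    dilation_inv_dilation hν hs]

theorem rescaledMap_normal_sub (hν : ω ν = 1) (hs : s ≠ 0) :
    rescaledMap f p ω ν s ν - ν
      = dilation ω ν s⁻¹ (f (p + ((s ^ 2 : ℝ) : ℂ) • ν) - (p + ((s ^ 2 : ℝ) : ℂ) • ν)) := by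
  rw [← dilation_normal hν, ← sub_sub, map_sub, dilation_inv_dilation hν hs, rescaledMap]

namespace StronglyConvexAt

theorem re_pos_of_mem_rescaled (hΩ : StronglyConvexAt Ω p ω) (hν : ω ν = 1) {x : E}
    (hx : x ∈ rescaled Ω p ω ν s) : 0 < (ω x).re := by
  have h := hΩ.re_pos hx
  rw [add_sub_cancel_left, map_dilation hν, re_ofReal_mul] at h
  exact pos_of_mul_pos_right h (sq_nonneg s)

theorem convex_rescaled (hΩ : StronglyConvexAt Ω p ω) (s : ℝ) :
    Convex ℝ (rescaled Ω p ω ν s) :=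
  (hΩ.convex.translate_preimage_right p).linear_preimage
    ((dilation ω ν s : E →ₗ[ℂ] E).restrictScalars ℝ)

-- The quadratic support at `p` bounds the tangential part by the square root of the normal part,
-- and this bound is invariant under dilations.
theorem exists_norm_sub_sq_le_of_mem_rescaled (hΩ : StronglyConvexAt Ω p ω) (hν : ω ν = 1) :
    ∃ K ≥ 0, ∀ s > 0, ∀ x ∈ rescaled Ω p ω ν s, ‖x - ω x • ν‖ ^ 2 ≤ K * ‖ω x‖ := by
  obtain ⟨c, hc, hsupp⟩ := hΩ.support_at
  set A : ℝ := 1 + ‖ω‖ * ‖ν‖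
  refine ⟨A ^ 2 / c, by positivity, fun s hs x hx => ?_⟩
  set y := dilation ω ν s x
  have hy : ‖y‖ ^ 2 ≤ s ^ 2 * ‖ω x‖ / c := by
    rw [le_div_iff₀' hc]
    calc c * ‖y‖ ^ 2 ≤ (ω y).re := by simpa using hsupp _ (subset_closure hx)
      _ ≤ ‖ω y‖ := re_le_norm _
      _ = s ^ 2 * ‖ω x‖ := by
        rw [map_dilation hν, norm_mul, norm_real, Real.norm_of_nonneg (sq_nonneg s)]
  have htangential : s * ‖x - ω x • ν‖ ≤ A * ‖y‖ := by
    calc s * ‖x - ω x • ν‖ = ‖y - ω y • ν‖ := by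
          rw [dilation_sub_normal hν, norm_smul, norm_real, Real.norm_of_nonneg hs.le]
      _ ≤ ‖y‖ + ‖ω y • ν‖ := norm_sub_le _ _
      _ ≤ ‖y‖ + ‖ω‖ * ‖y‖ * ‖ν‖ := by
          rw [norm_smul]
          gcongr
          exact ω.le_opNorm y
      _ = A * ‖y‖ := by ring
  refine le_of_mul_le_mul_left ?_ (pow_pos hs 2)
  calc s ^ 2 * ‖x - ω x • ν‖ ^ 2 = (s * ‖x - ω x • ν‖) ^ 2 := by ring
    _ ≤ (A * ‖y‖) ^ 2 := by gcongr
    _ ≤ A ^ 2 * (s ^ 2 * ‖ω x‖ / c) := by rw [mul_pow]; gcongr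
    _ = s ^ 2 * (A ^ 2 / c * ‖ω x‖) := by ring

theorem exists_convexOverHalfPlane_rescaled (hΩ : StronglyConvexAt Ω p ω) (hν : ω ν = 1) :
    ∃ C, ∀ s > 0, ConvexOverHalfPlane ω C (rescaled Ω p ω ν s) := by
  obtain ⟨K, hK, h⟩ := hΩ.exists_norm_sub_sq_le_of_mem_rescaled hν
  refine ⟨1 + K + ‖ν‖, fun s hs => ⟨hΩ.convex_rescaled s,
    fun x hx => hΩ.re_pos_of_mem_rescaled hν hx, fun x hx => ?_⟩⟩
  have htangential : ‖x - ω x • ν‖ ≤ 1 + K * ‖ω x‖ := by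
    nlinarith [h s hs x hx, sq_nonneg (‖x - ω x • ν‖ - 1), norm_nonneg (x - ω x • ν)]
  calc ‖x‖ ≤ ‖x - ω x • ν‖ + ‖ω x • ν‖ := norm_le_norm_sub_add x _
    _ ≤ (1 + K * ‖ω x‖) + ‖ω x‖ * ‖ν‖ := by
      rw [norm_smul]
      gcongr
    _ ≤ (1 + K + ‖ν‖) * (1 + ‖ω x‖) := by nlinarith [norm_nonneg (ω x), norm_nonneg ν]

theorem exists_ball_subset_rescaled (hΩ : StronglyConvexAt Ω p ω) (hν : ω ν = 1) {a B : ℝ}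
    (ha : 0 < a) (hB : 0 < B) : ∃ κ > 0, ∀ᶠ δ in 𝓝[>] (0 : ℝ), ∀ x ∈ Ω, ‖x - p‖ ^ 2 ≤ B * δ →
      ball x (a * δ) ⊆ Ω → ball (dilation ω ν (√δ)⁻¹ (x - p)) κ ⊆ rescaled Ω p ω ν √δ := by
  obtain ⟨κ, hκ, h⟩ := hΩ.add_mem a ha B hB
  set A : ℝ := 1 + ‖ω‖ * ‖ν‖
  have hA : 0 < A := by positivity
  refine ⟨κ / (A + ‖ω‖), by positivity, ?_⟩
  filter_upwards [h, Ioo_mem_nhdsGT one_pos] with δ hδ ⟨hδ0, hδ1⟩ x hx hxB hxa y hy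
  have hs0 : 0 < √δ := Real.sqrt_pos.mpr hδ0
  have hs1 : √δ ≤ 1 := Real.sqrt_le_one.mpr hδ1.le
  have hsq : √δ ^ 2 = δ := Real.sq_sqrt hδ0.le
  set u := y - dilation ω ν (√δ)⁻¹ (x - p) with hu
  have hunorm : A * ‖u‖ + ‖ω‖ * ‖u‖ ≤ κ := by
    have := (le_div_iff₀ (by positivity)).mp (mem_ball_iff_norm.mp hy).le
    linarith
  have hyu : p + dilation ω ν √δ y = x + dilation ω ν √δ u := by
    rw [hu, map_sub, dilation_dilation_inv hν hs0.ne']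
    abel
  change p + dilation ω ν √δ y ∈ Ω
  rw [hyu]
  refine hδ x hx _ hxB hxa ?_ ?_
  · calc ‖ω (dilation ω ν √δ u)‖ = δ * ‖ω u‖ := by
          rw [map_dilation hν, hsq, norm_mul, norm_real, Real.norm_of_nonneg hδ0.le]
      _ ≤ δ * κ := by
          gcongr
          exact (ω.le_opNorm u).trans (by linarith [mul_nonneg hA.le (norm_nonneg u)])
      _ = κ * δ := mul_comm _ _
  · calc ‖dilation ω ν √δ u‖ ^ 2 ≤ (√δ * (A * ‖u‖)) ^ 2 := by
          gcongr
          exact norm_dilation_le_of_le_one hs0.le hs1 u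
      _ ≤ (√δ * κ) ^ 2 := by
          gcongr
          linarith [mul_nonneg (norm_nonneg ω) (norm_nonneg u)]
      _ = κ ^ 2 * δ := by rw [mul_pow, hsq, mul_comm]

theorem exists_ball_normal_subset (hΩ : StronglyConvexAt Ω p ω) (hν : ω ν = 1) :
    ∃ a > (0 : ℝ), ∀ᶠ δ : ℝ in 𝓝[>] 0, ball (p + (δ : ℂ) • ν) (a * δ) ⊆ Ω := by
  obtain ⟨C, hC, hmem⟩ := hΩ.mem_of_lt
  set a : ℝ := 1 / (2 * (‖ω‖ + 1)) with ha
  have hωa : ‖ω‖ * a ≤ 1 / 2 := by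
    rw [ha]
    field_simp
    linarith
  have hsmall : ∀ᶠ δ : ℝ in 𝓝[>] 0, δ * (C * (‖ν‖ + a) ^ 2) < 1 / 2 := by
    have hcont : Continuous fun δ : ℝ => δ * (C * (‖ν‖ + a) ^ 2) := by fun_prop
    exact nhdsWithin_le_nhds ((hcont.tendsto 0).eventually_lt_const (by simp))
  refine ⟨a, by positivity, ?_⟩
  filter_upwards [hsmall, self_mem_nhdsWithin] with δ hδ (hδ0 : 0 < δ) y hy
  set u := y - (p + (δ : ℂ) • ν) with hu
  have hunorm : ‖u‖ ≤ a * δ := (mem_ball_iff_norm.mp hy).le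
  have hyp : y - p = (δ : ℂ) • ν + u := by
    rw [hu]
    abel
  have hnorm : ‖(δ : ℂ) • ν + u‖ ≤ δ * (‖ν‖ + a) := by
    calc ‖(δ : ℂ) • ν + u‖ ≤ ‖(δ : ℂ) • ν‖ + ‖u‖ := norm_add_le _ _
      _ ≤ δ * ‖ν‖ + a * δ := by
        rw [norm_smul, norm_real, Real.norm_of_nonneg hδ0.le]
        gcongr
      _ = δ * (‖ν‖ + a) := by ring
  have hre : δ / 2 ≤ (ω ((δ : ℂ) • ν + u)).re := by
    have hωu : ‖ω u‖ ≤ 1 / 2 * δ := (ω.le_opNorm_of_le hunorm).trans (by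
      rw [← mul_assoc]
      gcongr)
    rw [map_add, map_smul, hν, smul_eq_mul, mul_one, add_re, ofReal_re]
    linarith [neg_abs_le (ω u).re, abs_re_le_norm (ω u)]
  refine hmem y ?_
  rw [hyp]
  calc C * ‖(δ : ℂ) • ν + u‖ ^ 2 ≤ C * (δ * (‖ν‖ + a)) ^ 2 := by gcongr
    _ = δ * (δ * (C * (‖ν‖ + a) ^ 2)) := by ring
    _ < δ * (1 / 2) := by gcongr
    _ = δ / 2 := by ring
    _ ≤ (ω ((δ : ℂ) • ν + u)).re := hre

end StronglyConvexAt

end Rescaling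

section RescaledIterates

theorem norm_iterate_sub_le {E : Type*} [SeminormedAddCommGroup E] {F : E → E} {x : E} {r η : ℝ}
    (hη : 0 ≤ η) (hF : ∀ y ∈ ball x r, ‖F y - y‖ ≤ η) {i : ℕ} (hi : i * η < r) :
    ‖F^[i] x - x‖ ≤ i * η := by
  induction i with
  | zero => simp
  | succ i ih =>
    push_cast at hi ⊢
    have hle := ih (by linarith)
    have hmem : F^[i] x ∈ ball x r := mem_ball_iff_norm.mpr (by linarith)
    rw [iterate_succ_apply']
    calc ‖F (F^[i] x) - x‖ ≤ ‖F (F^[i] x) - F^[i] x‖ + ‖F^[i] x - x‖ :=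
          norm_sub_le_norm_sub_add_norm_sub _ _ _
      _ ≤ η + i * η := add_le_add (hF _ hmem) hle
      _ = (i + 1) * η := by ring

theorem exists_forall_norm_sub_le_of_tendsto_div_sq {E : Type*} [NormedAddCommGroup E] {Ω : Set E}
    {p : E} {F : E → E} (hp : p ∉ Ω)
    (ho : Tendsto (fun x => ‖F x - x‖ / ‖x - p‖ ^ 2) (𝓝[Ω] p) (𝓝 0)) {η : ℝ} (hη : 0 < η) :
    ∃ r > 0, ∀ x ∈ Ω, ‖x - p‖ < r → ‖F x - x‖ ≤ η * ‖x - p‖ ^ 2 := by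
  obtain ⟨r, hr, h⟩ := Metric.mem_nhdsWithin_iff.mp (ho.eventually_lt_const hη)
  refine ⟨r, hr, fun x hx hxr => ?_⟩
  have hxp : 0 < ‖x - p‖ := norm_sub_pos_iff.mpr fun e => hp (e ▸ hx)
  have hlt : ‖F x - x‖ / ‖x - p‖ ^ 2 < η := h ⟨mem_ball_iff_norm.mpr hxr, hx⟩
  exact (div_le_iff₀ (by positivity)).mp hlt.le

variable {E : Type*} [NormedAddCommGroup E] [NormedSpace ℂ E] {Ω : Set E} {p ν : E} {F : E → E}

theorem eventually_norm_iterate_sub_le (hp : p ∉ Ω)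
    (ho : Tendsto (fun x => ‖F x - x‖ / ‖x - p‖ ^ 2) (𝓝[Ω] p) (𝓝 0)) {a : ℝ} (ha : 0 < a)
    (hball : ∀ᶠ δ : ℝ in 𝓝[>] 0, ball (p + (δ : ℂ) • ν) (a * δ) ⊆ Ω) {m : ℝ} (hm : 0 ≤ m)
    {ε : ℝ} (hε : 0 < ε) :
    ∀ᶠ δ : ℝ in 𝓝[>] 0, ∀ x ∈ ball (p + (δ : ℂ) • ν) (a / 2 * δ), ∀ i : ℕ, i * δ ≤ m →
      ‖F^[i] x - x‖ ≤ ε * δ := by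
  set B : ℝ := ‖ν‖ + a
  have hB : 0 < B := by positivity
  set η : ℝ := min ε (a / 4) / ((m + 1) * B ^ 2) with hη
  have hη0 : 0 < η := by positivity
  have hmη : m * (η * B ^ 2) ≤ min ε (a / 4) := by
    have hmin : 0 < min ε (a / 4) := by positivity
    rw [hη]
    field_simp
    linarith [hmin]
  obtain ⟨r, hr, hrF⟩ := exists_forall_norm_sub_le_of_tendsto_div_sq hp ho hη0
  have hev : ∀ᶠ δ : ℝ in 𝓝[>] 0, δ * B < r :=
    nhdsWithin_le_nhds (((continuous_mul_const B).tendsto 0).eventually_lt_const (by simpa))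
  filter_upwards [hball, hev, self_mem_nhdsWithin] with δ hδ hδr (hδ0 : 0 < δ) x hx i hi
  have hF : ∀ y ∈ ball x (a / 2 * δ), ‖F y - y‖ ≤ η * (δ * B) ^ 2 := fun y hy => by
    have hy' : y ∈ ball (p + (δ : ℂ) • ν) (a * δ) := by
      rw [mem_ball] at hx hy ⊢
      linarith [dist_triangle y x (p + (δ : ℂ) • ν)]
    have hyp : ‖y - p‖ ≤ δ * B := by
      calc ‖y - p‖ ≤ ‖y - (p + (δ : ℂ) • ν)‖ + ‖(p + (δ : ℂ) • ν) - p‖ :=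
            norm_sub_le_norm_sub_add_norm_sub _ _ _
        _ ≤ a * δ + δ * ‖ν‖ := by
            rw [add_sub_cancel_left, norm_smul, norm_real, Real.norm_of_nonneg hδ0.le]
            gcongr
            exact (mem_ball_iff_norm.mp hy').le
        _ = δ * B := by ring
    exact (hrF y (hδ hy') (hyp.trans_lt hδr)).trans (by gcongr)
  have hiη : i * (η * (δ * B) ^ 2) ≤ min ε (a / 4) * δ := by
    calc i * (η * (δ * B) ^ 2) = i * δ * (η * B ^ 2) * δ := by ring
      _ ≤ m * (η * B ^ 2) * δ := by gcongr
      _ ≤ min ε (a / 4) * δ := by gcongr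
  refine (norm_iterate_sub_le (by positivity) hF ?_).trans (hiη.trans ?_)
  · nlinarith [min_le_right ε (a / 4)]
  · gcongr
    exact min_le_left _ _

theorem pow_apply_eq_smul {A : E →L[ℂ] E} {c : ℂ} {v : E} (h : A v = c • v) (k : ℕ) :
    (A ^ k) v = c ^ k • v := by
  induction k with
  | zero => simp
  | succ k ih => rw [pow_succ, mul_apply_eq_comp, h, map_smul, ih, smul_smul, pow_succ, mul_comm]

variable {ω : E →L[ℂ] ℂ}

theorem norm_pow_sub_one_le_norm_fderiv_rescaledMap_sub_one (hν : ω ν = 1) {s : ℝ} (hs : s ≠ 0)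
    {x v : E} {c : ℂ} (hF : DifferentiableAt ℂ F x) (hx : F x = x) (hv : v ≠ 0)
    (hc : fderiv ℂ F x v = c • v) (N : ℕ) :
    ‖c ^ N - 1‖ ≤ ‖fderiv ℂ (rescaledMap F^[N] p ω ν s) (dilation ω ν s⁻¹ (x - p)) - 1‖ := by
  have hderiv : HasFDerivAt F^[N] (fderiv ℂ F x ^ N)
      (p + dilation ω ν s (dilation ω ν s⁻¹ (x - p))) := by
    rw [dilation_dilation_inv hν hs, add_sub_cancel]
    exact hF.hasFDerivAt.iterate hx N
  rw [(hasFDerivAt_rescaledMap hderiv).fderiv]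
  set w := dilation ω ν s⁻¹ v with hw
  have hw0 : w ≠ 0 := fun h => hv <| by
    rw [← dilation_dilation_inv hν hs v, ← hw, h, map_zero]
  set A := dilation ω ν s⁻¹ ∘L (fderiv ℂ F x ^ N) ∘L dilation ω ν s - 1
  have hAw : A w = (c ^ N - 1) • w := by
    simp only [A, ContinuousLinearMap.comp_apply, sub_apply, one_apply_eq_self]
    rw [hw, dilation_dilation_inv hν hs, pow_apply_eq_smul hc, map_smul, sub_smul, one_smul]
  refine le_of_mul_le_mul_right ?_ (norm_pos_iff.mpr hw0)
  calc ‖c ^ N - 1‖ * ‖w‖ = ‖A w‖ := by rw [hAw, norm_smul]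
    _ ≤ ‖A‖ * ‖w‖ := A.le_opNorm w

namespace StronglyConvexAt

section Limits

variable {ι : Type*} {l : Filter ι} {δ : ι → ℝ} {N : ι → ℕ}

theorem tendsto_iterate_rescaledMap_normal (hΩ : StronglyConvexAt Ω p ω) (hν : ω ν = 1)
    (ho : Tendsto (fun x => ‖F x - x‖ / ‖x - p‖ ^ 2) (𝓝[Ω] p) (𝓝 0))
    (hδ : Tendsto δ l (𝓝[>] 0)) (hN : ∀ j, N j * δ j ≤ 1) (m : ℕ) :
    Tendsto (fun j => (rescaledMap F^[N j] p ω ν √(δ j))^[m] ν) l (𝓝 ν) := by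
  obtain ⟨a, ha, hball⟩ := hΩ.exists_ball_normal_subset hν
  have hpos : ∀ᶠ j in l, 0 < δ j := hδ.eventually self_mem_nhdsWithin
  have hsmall : (fun j => F^[N j * m] (p + (δ j : ℂ) • ν) - (p + (δ j : ℂ) • ν)) =o[l] δ := by
    refine Asymptotics.isLittleO_iff.mpr fun ε hε => ?_
    filter_upwards [hpos, hδ.eventually
      (eventually_norm_iterate_sub_le hΩ.notMem ho ha hball m.cast_nonneg hε)] with j hδj h
    rw [Real.norm_of_nonneg hδj.le]
    refine h _ (mem_ball_self (by positivity)) _ ?_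
    push_cast
    nlinarith [hN j, (m.cast_nonneg : (0 : ℝ) ≤ m)]
  refine tendsto_sub_nhds_zero_iff.mp
    ((tendsto_dilation_inv_of_isLittleO (ω := ω) (ν := ν) hδ hsmall).congr' ?_)
  filter_upwards [hpos] with j hδj
  have hs : √(δ j) ≠ 0 := (Real.sqrt_pos.mpr hδj).ne'
  rw [iterate_rescaledMap hν hs, ← iterate_mul, rescaledMap_normal_sub hν hs, Real.sq_sqrt hδj.le]

theorem tendsto_fderiv_iterate_sub_one (hΩ : StronglyConvexAt Ω p ω) (hν : ω ν = 1)
    (hF : DifferentiableOn ℂ F Ω) (hm : MapsTo F Ω Ω)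
    (ho : Tendsto (fun x => ‖F x - x‖ / ‖x - p‖ ^ 2) (𝓝[Ω] p) (𝓝 0))
    (hδ : Tendsto δ l (𝓝[>] 0)) (hN : ∀ j, N j * δ j ≤ 1) :
    Tendsto (fun j => fderiv ℂ F^[N j] (p + (δ j : ℂ) • ν) - 1) l (𝓝 0) := by
  obtain ⟨a, ha, hball⟩ := hΩ.exists_ball_normal_subset hν
  refine tendsto_zero_iff_norm_tendsto_zero.mpr (tendsto_order.mpr
    ⟨fun ε hε => Eventually.of_forall fun _ => hε.trans_le (norm_nonneg _), fun ε hε => ?_⟩)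
  filter_upwards [hδ.eventually (self_mem_nhdsWithin (s := Ioi 0)), hδ.eventually hball,
    hδ.eventually (eventually_norm_iterate_sub_le (ε := ε * a / 8) hΩ.notMem ho ha hball
      zero_le_one (by positivity))] with j (hδj : 0 < δ j) hsub hle
  set b := p + (δ j : ℂ) • ν
  have hsub' : ball b (a / 2 * δ j) ⊆ Ω := (ball_subset_ball (by nlinarith)).trans hsub
  have hd : DifferentiableOn ℂ F^[N j] (ball b (a / 2 * δ j)) := (hF.iterate hm _).mono hsub'
  have hdb := hd.differentiableAt (ball_mem_nhds b (by positivity))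
  have hfderiv : fderiv ℂ (fun y => F^[N j] y - y) b = fderiv ℂ F^[N j] b - 1 :=
    (hdb.hasFDerivAt.sub (hasFDerivAt_id b)).fderiv
  calc ‖fderiv ℂ F^[N j] b - 1‖ ≤ 2 * (ε * a / 8 * δ j) / (a / 2 * δ j) := hfderiv ▸
        norm_fderiv_le_of_bounded_on_ball (by positivity) (hd.sub differentiableOn_id)
          fun y hy => hle y hy _ (hN j)
    _ = ε / 2 := by
      field_simp
      norm_num
    _ < ε := half_lt_self hε

end Limits

section Ultralimits

variable {ι : Type*} {𝒰 : Ultrafilter ι} {δ : ι → ℝ} {x : ι → E} {a B : ℝ}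

theorem mem_ultraKernel_rescaled (hΩ : StronglyConvexAt Ω p ω) (hν : ω ν = 1)
    (hδ : Tendsto δ 𝒰 (𝓝[>] 0)) (ha : 0 < a) (hB : 0 < B)
    (hx : ∀ᶠ j in 𝒰, x j ∈ Ω ∧ ‖x j - p‖ ^ 2 ≤ B * δ j ∧ ball (x j) (a * δ j) ⊆ Ω) {q : E}
    (hq : Tendsto (fun j => dilation ω ν (√(δ j))⁻¹ (x j - p)) 𝒰 (𝓝 q)) :
    q ∈ ultraKernel 𝒰 fun j => rescaled Ω p ω ν √(δ j) := by
  obtain ⟨κ, hκ, hsub⟩ := hΩ.exists_ball_subset_rescaled hν ha hB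
  refine ⟨κ / 2, half_pos hκ, ?_⟩
  filter_upwards [hx, hδ.eventually hsub, hq.eventually (ball_mem_nhds q (half_pos hκ))]
    with j ⟨hxΩ, hxB, hxa⟩ hj hqj
  refine (ball_subset_ball' ?_).trans (hj (x j) hxΩ hxB hxa)
  rw [dist_comm] at hqj
  linarith

theorem normal_mem_ultraKernel_rescaled (hΩ : StronglyConvexAt Ω p ω) (hν : ω ν = 1)
    (hδ : Tendsto δ 𝒰 (𝓝[>] 0)) : ν ∈ ultraKernel 𝒰 fun j => rescaled Ω p ω ν √(δ j) := by
  obtain ⟨a, ha, hball⟩ := hΩ.exists_ball_normal_subset hν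
  have hδ1 : ∀ᶠ j in 𝒰, 0 < δ j ∧ δ j < 1 := hδ.eventually (Ioo_mem_nhdsGT one_pos)
  refine hΩ.mem_ultraKernel_rescaled hν hδ ha (B := ‖ν‖ ^ 2 + 1) (by positivity)
    (x := fun j => p + (δ j : ℂ) • ν) ?_ (tendsto_const_nhds.congr' ?_)
  · filter_upwards [hδ1, hδ.eventually hball] with j ⟨hδ0, hδ1⟩ hsub
    refine ⟨hsub (mem_ball_self (by positivity)), ?_, hsub⟩
    rw [add_sub_cancel_left, norm_smul, norm_real, Real.norm_of_nonneg hδ0.le]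
    nlinarith [mul_nonneg (mul_nonneg hδ0.le (sub_nonneg.mpr hδ1.le)) (sq_nonneg ‖ν‖)]
  · filter_upwards [hδ1] with j ⟨hδ0, _⟩
    have hs : √(δ j) ≠ 0 := (Real.sqrt_pos.mpr hδ0).ne'
    rw [add_sub_cancel_left, ← Real.sq_sqrt hδ0.le, ← dilation_normal hν,
      Real.sqrt_sq (Real.sqrt_nonneg _), dilation_inv_dilation hν hs]

variable {N : ι → ℕ}

theorem isNilpotent_of_tendsto_fderiv_rescaledMap (hΩ : StronglyConvexAt Ω p ω) (hν : ω ν = 1)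
    (hF : DifferentiableOn ℂ F Ω) (hm : MapsTo F Ω Ω)
    (ho : Tendsto (fun x => ‖F x - x‖ / ‖x - p‖ ^ 2) (𝓝[Ω] p) (𝓝 0))
    (hδ : Tendsto δ 𝒰 (𝓝[>] 0)) (hN : ∀ j, N j * δ j ≤ 1) {Z : E →L[ℂ] E}
    (hZ : Tendsto (fun j => fderiv ℂ (rescaledMap F^[N j] p ω ν √(δ j)) ν) 𝒰 (𝓝 Z)) :
    IsNilpotent (Z - 1) := by
  obtain ⟨a, ha, hball⟩ := hΩ.exists_ball_normal_subset hν
  have hs : ∀ᶠ j in 𝒰, 0 < √(δ j) ∧ √(δ j) ≤ 1 := by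
    filter_upwards [hδ.eventually (Ioo_mem_nhdsGT one_pos)] with j ⟨hδ0, hδ1⟩
    exact ⟨Real.sqrt_pos.mpr hδ0, Real.sqrt_le_one.mpr hδ1.le⟩
  refine isNilpotent_of_tendsto_conj_dilation hν hs
    (hΩ.tendsto_fderiv_iterate_sub_one hν hF hm ho hδ hN) ((hZ.sub_const 1).congr' ?_)
  filter_upwards [hs, hδ.eventually (self_mem_nhdsWithin (s := Ioi 0)), hδ.eventually hball]
    with j ⟨hs0, _⟩ (hδ0 : 0 < δ j) hsub
  have hbase : p + dilation ω ν √(δ j) ν = p + (δ j : ℂ) • ν := by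
    rw [dilation_normal hν, Real.sq_sqrt hδ0.le]
  have hmem : p + dilation ω ν √(δ j) ν ∈ Ω := hbase ▸ hsub (mem_ball_self (by positivity))
  have hd := (hF.iterate hm (N j)).differentiableAt (hΩ.isOpen.mem_nhds hmem)
  rw [(hasFDerivAt_rescaledMap hd.hasFDerivAt).fderiv, hbase]
  ext y
  simp only [ContinuousLinearMap.comp_apply, sub_apply, map_sub, one_apply_eq_self,
    dilation_inv_dilation hν hs0.ne']

theorem tendsto_fderiv_rescaledMap_one [FiniteDimensional ℂ E] (hΩ : StronglyConvexAt Ω p ω)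
    (hν : ω ν = 1) (hF : DifferentiableOn ℂ F Ω) (hm : MapsTo F Ω Ω)
    (ho : Tendsto (fun x => ‖F x - x‖ / ‖x - p‖ ^ 2) (𝓝[Ω] p) (𝓝 0)) (hδ0 : ∀ j, 0 < δ j)
    (hδ : Tendsto δ 𝒰 (𝓝 0)) (hN : ∀ j, N j * δ j ≤ 1) {C : ℝ} (ha : 0 < a) (hB : 0 < B)
    (hxΩ : ∀ j, x j ∈ Ω) (hxa : ∀ j, ball (x j) (a * δ j) ⊆ Ω)
    (hxB : ∀ j, ‖x j - p‖ ^ 2 ≤ B * δ j) (hxC : ∀ j, ‖ω (x j - p)‖ ≤ C * δ j) :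
    Tendsto (fun j => fderiv ℂ (rescaledMap F^[N j] p ω ν √(δ j))
      (dilation ω ν (√(δ j))⁻¹ (x j - p))) 𝒰 (𝓝 1) := by
  have : ProperSpace E := FiniteDimensional.proper ℂ E
  have hδ' : Tendsto δ 𝒰 (𝓝[>] 0) :=
    tendsto_nhdsWithin_iff.mpr ⟨hδ, Eventually.of_forall hδ0⟩
  have hs (j : ι) : √(δ j) ≠ 0 := (Real.sqrt_pos.mpr (hδ0 j)).ne'
  obtain ⟨D, hU⟩ := hΩ.exists_convexOverHalfPlane_rescaled hν
  replace hU (j : ι) := hU √(δ j) (Real.sqrt_pos.mpr (hδ0 j))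
  set q : ι → E := fun j => dilation ω ν (√(δ j))⁻¹ (x j - p) with hq
  have hqU (j : ι) : q j ∈ rescaled Ω p ω ν √(δ j) := by
    change p + dilation ω ν √(δ j) (q j) ∈ Ω
    rw [hq, dilation_dilation_inv hν (hs j), add_sub_cancel]
    exact hxΩ j
  have hωq (j : ι) : ‖ω (q j)‖ ≤ C := by
    rw [hq, map_dilation hν, inv_pow, Real.sq_sqrt (hδ0 j).le, norm_mul, norm_real, norm_inv,
      Real.norm_of_nonneg (hδ0 j).le, inv_mul_le_iff₀ (hδ0 j), mul_comm (δ j)]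
    exact hxC j
  have hqbdd (j : ι) : ‖q j‖ ≤ D * (1 + C) := by
    have hD : 0 ≤ D := (hU j).nonneg (hqU j)
    exact ((hU j).norm_le _ (hqU j)).trans (by gcongr; exact hωq j)
  obtain ⟨q₀, hq₀⟩ := exists_tendsto_ultrafilter_of_norm_le 𝒰 (Eventually.of_forall hqbdd)
  refine ConvexOverHalfPlane.tendsto_fderiv_one_of_iterates hU
    (fun j => differentiableOn_rescaledMap (hF.iterate hm _))
    (fun j => mapsTo_rescaledMap hν (hs j) (hm.iterate _))
    (hΩ.normal_mem_ultraKernel_rescaled hν hδ')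
    (hΩ.tendsto_iterate_rescaledMap_normal hν ho hδ' hN)
    (fun Z => hΩ.isNilpotent_of_tendsto_fderiv_rescaledMap hν hF hm ho hδ' hN) hq₀
    (hΩ.mem_ultraKernel_rescaled hν hδ' ha hB
      (Eventually.of_forall fun j => ⟨hxΩ j, hxB j, hxa j⟩) hq₀)

theorem tendsto_eigenvalue_pow [FiniteDimensional ℂ E] (hΩ : StronglyConvexAt Ω p ω)
    (hν : ω ν = 1) (hF : DifferentiableOn ℂ F Ω) (hm : MapsTo F Ω Ω)
    (ho : Tendsto (fun x => ‖F x - x‖ / ‖x - p‖ ^ 2) (𝓝[Ω] p) (𝓝 0)) (hδ0 : ∀ j, 0 < δ j)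
    (hδ : Tendsto δ 𝒰 (𝓝 0)) (hN : ∀ j, N j * δ j ≤ 1) {C : ℝ} (ha : 0 < a) (hB : 0 < B)
    (hxΩ : ∀ j, x j ∈ Ω) (hxF : ∀ j, F (x j) = x j) (hxa : ∀ j, ball (x j) (a * δ j) ⊆ Ω)
    (hxB : ∀ j, ‖x j - p‖ ^ 2 ≤ B * δ j) (hxC : ∀ j, ‖ω (x j - p)‖ ≤ C * δ j)
    {c : ι → ℂ} {v : ι → E} (hv0 : ∀ j, v j ≠ 0)
    (hv : ∀ j, fderiv ℂ F (x j) (v j) = c j • v j) :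
    Tendsto (fun j => c j ^ N j) 𝒰 (𝓝 1) :=
  tendsto_iff_norm_sub_tendsto_zero.mpr <| squeeze_zero (fun _ => norm_nonneg _)
    (fun j => norm_pow_sub_one_le_norm_fderiv_rescaledMap_sub_one hν
      (Real.sqrt_pos.mpr (hδ0 j)).ne' (hF.differentiableAt (hΩ.isOpen.mem_nhds (hxΩ j))) (hxF j)
      (hv0 j) (hv j) (N j))
    (tendsto_iff_norm_sub_tendsto_zero.mp
      (hΩ.tendsto_fderiv_rescaledMap_one hν hF hm ho hδ0 hδ hN ha hB hxΩ hxa hxB hxC))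

end Ultralimits

end StronglyConvexAt

end RescaledIterates

section Trace

theorem le_one_of_forall_pow_le {x K : ℝ} (h : ∀ k : ℕ, x ^ k ≤ K) : x ≤ 1 := by
  by_contra! hx
  obtain ⟨k, hk⟩ := pow_unbounded_of_one_lt K hx
  exact hk.not_ge (h k)

theorem norm_one_sub_mul_le_norm_pow_sub_one {c : ℂ} {M : ℕ}
    (h : ∀ i < M, ‖c ^ i - 1‖ ≤ 1 / 2) : ‖1 - c‖ * (M / 2) ≤ ‖c ^ M - 1‖ := by
  have hsub : ‖(∑ i ∈ Finset.range M, c ^ i) - M‖ ≤ M * (1 / 2) := by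
    calc ‖(∑ i ∈ Finset.range M, c ^ i) - M‖ = ‖∑ i ∈ Finset.range M, (c ^ i - 1)‖ := by
          simp only [Finset.sum_sub_distrib, Finset.sum_const, Finset.card_range, nsmul_eq_mul,
            mul_one]
      _ ≤ ∑ i ∈ Finset.range M, (1 / 2 : ℝ) :=
          norm_sum_le_of_le _ fun i hi => h i (Finset.mem_range.mp hi)
      _ = M * (1 / 2) := by simp
  have hsum : (M : ℝ) / 2 ≤ ‖∑ i ∈ Finset.range M, c ^ i‖ := by
    have htri := norm_sub_norm_le (M : ℂ) (∑ i ∈ Finset.range M, c ^ i)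
    rw [Complex.norm_natCast, norm_sub_rev] at htri
    linarith
  calc ‖1 - c‖ * (M / 2) ≤ ‖1 - c‖ * ‖∑ i ∈ Finset.range M, c ^ i‖ := by gcongr
    _ = ‖c ^ M - 1‖ := by rw [← norm_mul, mul_neg_geom_sum, norm_sub_rev]

theorem exists_le_norm_pow_sub_one {c : ℂ} {δ s : ℝ} (hδ : 0 < δ) (hδ1 : δ ≤ 1) (hs : 0 ≤ s)
    (hcs : s * δ ≤ ‖1 - c‖) : ∃ N : ℕ, N * δ ≤ 1 ∧ min (1 / 2) (s / 4) ≤ ‖c ^ N - 1‖ := by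
  set M := ⌊δ⁻¹⌋₊
  have hM1 : (1 : ℝ) ≤ M := by
    exact_mod_cast (Nat.one_le_floor_iff _).mpr ((one_le_inv₀ hδ).mpr hδ1)
  have hMδ : (M : ℝ) * δ ≤ 1 := by
    simpa [hδ.ne'] using mul_le_mul_of_nonneg_right (Nat.floor_le (inv_pos.mpr hδ).le) hδ.le
  have hMδ' : 1 < (M + 1) * δ := (inv_lt_iff_one_lt_mul₀ hδ).mp (Nat.lt_floor_add_one _)
  by_cases h : ∀ i < M, ‖c ^ i - 1‖ ≤ 1 / 2
  · refine ⟨M, hMδ, (min_le_right _ _).trans ?_⟩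
    calc s / 4 ≤ s * δ * (M / 2) := by nlinarith [mul_le_mul_of_nonneg_right hM1 hδ.le]
      _ ≤ ‖1 - c‖ * (M / 2) := by gcongr
      _ ≤ ‖c ^ M - 1‖ := norm_one_sub_mul_le_norm_pow_sub_one h
  · push Not at h
    obtain ⟨i, hi, hic⟩ := h
    exact ⟨i, le_trans (by gcongr) hMδ, (min_le_left _ _).trans hic.le⟩

theorem eq_one_of_norm_le_one_of_one_le_re {c : ℂ} (h : ‖c‖ ≤ 1) (hre : 1 ≤ c.re) : c = 1 := by
  have hre' : c.re = 1 := le_antisymm ((re_le_norm c).trans h) hre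
  have hsq : ‖c‖ ^ 2 ≤ 1 := pow_le_one₀ (norm_nonneg _) h
  rw [← normSq_eq_norm_sq, normSq_apply, hre'] at hsq
  exact Complex.ext hre' (by simp only [one_im]; nlinarith)

variable {V : Type*} [AddCommGroup V] [Module ℂ V] [FiniteDimensional ℂ V] (f : Module.End ℂ V)

theorem hasEigenvalue_of_mem_roots_charpoly {c : ℂ} (hc : c ∈ f.charpoly.roots) :
    f.HasEigenvalue c :=
  (Module.End.hasEigenvalue_iff_isRoot_charpoly f c).mpr (Polynomial.isRoot_of_mem_roots hc)

theorem card_roots_charpoly : f.charpoly.roots.card = Module.finrank ℂ V := by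
  rw [← (IsAlgClosed.splits f.charpoly).natDegree_eq_card_roots, LinearMap.charpoly_natDegree]

theorem re_trace_one_sub_eq_sum_roots :
    (LinearMap.trace ℂ V (1 - f)).re = (f.charpoly.roots.map fun c => (1 - c).re).sum := by
  have htrace : LinearMap.trace ℂ V (1 - f) = (f.charpoly.roots.map (1 - ·)).sum := by
    rw [map_sub, LinearMap.trace_one, Multiset.sum_map_sub, Multiset.map_id', Multiset.map_const',
      Multiset.sum_replicate, card_roots_charpoly, nsmul_one,
      Module.End.trace_eq_sum_roots_charpoly_of_splits (IsAlgClosed.splits f.charpoly)]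
  rw [htrace, ← coe_reAddGroupHom, map_multiset_sum, Multiset.map_map]
  rfl

theorem exists_hasEigenvalue_re_trace_le [Nontrivial V] :
    ∃ c, f.HasEigenvalue c ∧
      (LinearMap.trace ℂ V (1 - f)).re ≤ Module.finrank ℂ V * (1 - c).re := by
  by_contra! hcon
  set t := (LinearMap.trace ℂ V (1 - f)).re with ht
  have hdim : (0 : ℝ) < Module.finrank ℂ V := by exact_mod_cast Module.finrank_pos
  have hroots : f.charpoly.roots ≠ 0 := by
    rw [← Multiset.card_pos, card_roots_charpoly]
    exact Module.finrank_pos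
  have hlt := Multiset.sum_lt_sum_of_nonempty (g := fun _ => t / Module.finrank ℂ V) hroots
    fun c hc => (lt_div_iff₀' hdim).mpr (hcon c (hasEigenvalue_of_mem_roots_charpoly f hc))
  rw [← re_trace_one_sub_eq_sum_roots, ← ht, Multiset.map_const', Multiset.sum_replicate,
    card_roots_charpoly, nsmul_eq_mul, mul_div_cancel₀ _ hdim.ne'] at hlt
  exact hlt.false

theorem exists_eigenvector_le_norm_pow_sub_one [Nontrivial V] {δ s : ℝ} (hδ : 0 < δ)
    (hδ1 : δ ≤ 1) (hs : 0 ≤ s)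
    (h : s * δ * Module.finrank ℂ V ≤ (LinearMap.trace ℂ V (1 - f)).re) :
    ∃ (c : ℂ) (v : V) (N : ℕ), v ≠ 0 ∧ f v = c • v ∧ N * δ ≤ 1 ∧
      min (1 / 2) (s / 4) ≤ ‖c ^ N - 1‖ := by
  obtain ⟨c, hc, hle⟩ := exists_hasEigenvalue_re_trace_le f
  obtain ⟨v, hv⟩ := hc.exists_hasEigenvector
  have hdim : (0 : ℝ) < Module.finrank ℂ V := by exact_mod_cast Module.finrank_pos
  have hcs : s * δ ≤ (1 - c).re := le_of_mul_le_mul_left (by linarith) hdim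
  obtain ⟨N, hN, hcN⟩ := exists_le_norm_pow_sub_one hδ hδ1 hs (hcs.trans (re_le_norm _))
  exact ⟨c, v, N, hv.2, hv.apply_eq_smul, hN, hcN⟩

variable {f} (h : ∀ c, f.HasEigenvalue c → ‖c‖ ≤ 1)

include h

theorem forall_mem_roots_re_one_sub_nonneg :
    ∀ x ∈ f.charpoly.roots.map fun c => (1 - c).re, 0 ≤ x := fun x hx => by
  obtain ⟨c, hc, rfl⟩ := Multiset.mem_map.mp hx
  simpa using (re_le_norm c).trans (h c (hasEigenvalue_of_mem_roots_charpoly f hc))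

theorem re_trace_one_sub_nonneg : 0 ≤ (LinearMap.trace ℂ V (1 - f)).re := by
  rw [re_trace_one_sub_eq_sum_roots]
  exact Multiset.sum_nonneg (forall_mem_roots_re_one_sub_nonneg h)

theorem isNilpotent_sub_one_of_re_trace_one_sub_eq_zero
    (h0 : (LinearMap.trace ℂ V (1 - f)).re = 0) : IsNilpotent (f - 1) := by
  rw [re_trace_one_sub_eq_sum_roots] at h0
  have hroots : ∀ c ∈ f.charpoly.roots, c = 1 := fun c hc => by
    have hre : (1 - c).re = 0 := Multiset.all_zero_of_le_zero_le_of_sum_eq_zero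
      (forall_mem_roots_re_one_sub_nonneg h) h0 _ (Multiset.mem_map_of_mem _ hc)
    rw [sub_re, one_re] at hre
    exact eq_one_of_norm_le_one_of_one_le_re (h c (hasEigenvalue_of_mem_roots_charpoly f hc))
      (by linarith)
  refine ⟨Multiset.card f.charpoly.roots, ?_⟩
  have hcayley := LinearMap.aeval_self_charpoly f
  rw [(IsAlgClosed.splits f.charpoly).eq_prod_roots_of_monic f.charpoly_monic,
    Multiset.eq_replicate_of_mem hroots] at hcayley
  simpa using hcayley

end Trace

section DerivativeAlongDiscs

variable {E : Type*} [NormedAddCommGroup E] [NormedSpace ℂ E]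

theorem norm_inv_smul_sub_fderiv_le_of_bounded_on_ball {F : Type*} [NormedAddCommGroup F]
    [NormedSpace ℂ F] {f : E → F} {a v : E} {R M : ℝ} (hd : DifferentiableOn ℂ f (ball a R))
    (hM : ∀ x ∈ ball a R, ‖f x‖ ≤ M) {t : ℂ} (ht : t ≠ 0) (hmem : a + t • v ∈ ball a R) :
    ‖t⁻¹ • (f (a + t • v) - f a) - fderiv ℂ f a v‖ ≤ 4 * M * (‖v‖ / R) ^ 2 * ‖t‖ := by
  have hle := norm_sub_sub_fderiv_le_of_bounded_on_ball hd hM hmem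
  have heq : t⁻¹ • (f (a + t • v) - f a) - fderiv ℂ f a v =
      t⁻¹ • (f (a + t • v) - f a - t • fderiv ℂ f a v) := by
    rw [smul_sub _ (_ - _), inv_smul_smul₀ ht]
  rw [add_sub_cancel_left, map_smul, norm_smul] at hle
  rw [heq, norm_smul, norm_inv, inv_mul_le_iff₀ (norm_pos_iff.mpr ht)]
  exact hle.trans_eq (by ring)

theorem differentiableOn_fderiv_comp_of_ball_subset [CompleteSpace E] {F : E → E} {φ : ℂ → E}
    {U : Set ℂ} {Ω : Set E} {R M : ℝ} (hU : IsOpen U) (hF : DifferentiableOn ℂ F Ω)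
    (hM : ∀ x ∈ Ω, ‖F x‖ ≤ M) (hR : 0 < R) (hφ : DifferentiableOn ℂ φ U)
    (hball : ∀ ζ ∈ U, ball (φ ζ) R ⊆ Ω) (v : E) :
    DifferentiableOn ℂ (fun ζ => fderiv ℂ F (φ ζ) v) U := by
  have hsmall : ∀ᶠ t in 𝓝[≠] (0 : ℂ), t ≠ 0 ∧ ∀ x, x + t • v ∈ ball x R := by
    have hcont : Tendsto (fun t : ℂ => ‖t • v‖) (𝓝[≠] 0) (𝓝 0) := by
      refine (Continuous.tendsto' (by fun_prop) 0 0 (by simp)).mono_left nhdsWithin_le_nhds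
    filter_upwards [self_mem_nhdsWithin, hcont.eventually_lt_const hR] with t ht0 ht
    exact ⟨ht0, fun x => by simpa using ht⟩
  set q : ℂ → ℂ → E := fun t ζ => t⁻¹ • (F (φ ζ + t • v) - F (φ ζ))
  have hqd : ∀ᶠ t in 𝓝[≠] 0, DifferentiableOn ℂ (q t) U := by
    filter_upwards [hsmall] with t ⟨_, ht⟩
    exact ((hF.comp (hφ.add_const _) fun ζ hζ => hball ζ hζ (ht _)).sub
      (hF.comp hφ fun ζ hζ => hball ζ hζ (mem_ball_self hR))).const_smul _
  have hlim : TendstoUniformlyOn q (fun ζ => fderiv ℂ F (φ ζ) v) (𝓝[≠] 0) U := by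
    have hbound : Tendsto (fun t : ℂ => 4 * M * (‖v‖ / R) ^ 2 * ‖t‖) (𝓝[≠] 0) (𝓝 0) :=
      (Continuous.tendsto' (by fun_prop) 0 0 (by simp)).mono_left nhdsWithin_le_nhds
    rw [Metric.tendstoUniformlyOn_iff]
    intro ε hε
    filter_upwards [hsmall, hbound.eventually_lt_const hε] with t ⟨ht0, ht⟩ hlt ζ hζ
    rw [dist_comm, dist_eq_norm]
    exact (norm_inv_smul_sub_fderiv_le_of_bounded_on_ball (hF.mono (hball ζ hζ))
      (fun x hx => hM x (hball ζ hζ hx)) ht0 (ht _)).trans_lt hlt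
  exact hlim.tendstoLocallyUniformlyOn.differentiableOn hqd hU

theorem differentiableOn_fderiv_comp [CompleteSpace E] {F : E → E} {φ : ℂ → E} {U : Set ℂ}
    {Ω : Set E} {M : ℝ} (hU : IsOpen U) (hΩ : IsOpen Ω) (hF : DifferentiableOn ℂ F Ω)
    (hM : ∀ x ∈ Ω, ‖F x‖ ≤ M) (hφ : DifferentiableOn ℂ φ U) (hφΩ : MapsTo φ U Ω) (v : E) :
    DifferentiableOn ℂ (fun ζ => fderiv ℂ F (φ ζ) v) U := fun ζ₀ hζ₀ => by
  obtain ⟨R, hR, hRΩ⟩ := Metric.isOpen_iff.mp hΩ _ (hφΩ hζ₀)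
  set W := U ∩ φ ⁻¹' ball (φ ζ₀) (R / 2)
  have hW : IsOpen W := hφ.continuousOn.isOpen_inter_preimage hU isOpen_ball
  have hball : ∀ ζ ∈ W, ball (φ ζ) (R / 2) ⊆ Ω := fun ζ ⟨_, hζ⟩ =>
    (ball_subset_ball' (by linarith [mem_ball.mp hζ])).trans hRΩ
  exact ((differentiableOn_fderiv_comp_of_ball_subset hW hF hM (half_pos hR)
    (hφ.mono inter_subset_left) hball v).differentiableAt (hW.mem_nhds
      ⟨hζ₀, mem_ball_self (half_pos hR)⟩)).differentiableWithinAt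

theorem trace_eq_sum_coord_finBasis [FiniteDimensional ℂ E] (f : E →ₗ[ℂ] E) :
    LinearMap.trace ℂ E f = ∑ i, (Module.finBasis ℂ E).coord i (f (Module.finBasis ℂ E i)) := by
  rw [LinearMap.trace_eq_matrix_trace ℂ (Module.finBasis ℂ E)]
  simp [Matrix.trace, LinearMap.toMatrix_apply]

theorem norm_le_one_of_hasEigenvalue_fderiv {Ω : Set E} {F : E → E} {x : E} {M : ℝ}
    (hΩ : IsOpen Ω) (hM : ∀ x ∈ Ω, ‖x‖ ≤ M) (hF : DifferentiableOn ℂ F Ω) (hm : MapsTo F Ω Ω)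
    (hx : x ∈ Ω) (hfix : F x = x) {c : ℂ}
    (hc : Module.End.HasEigenvalue (fderiv ℂ F x : E →ₗ[ℂ] E) c) : ‖c‖ ≤ 1 := by
  obtain ⟨R, hR, hRΩ⟩ := Metric.isOpen_iff.mp hΩ x hx
  obtain ⟨v, hv⟩ := hc.exists_hasEigenvector
  have hFx : HasFDerivAt F (fderiv ℂ F x) x := (hF.differentiableAt (hΩ.mem_nhds hx)).hasFDerivAt
  refine le_one_of_forall_pow_le (K := 2 * M / R) fun k => ?_
  have hpow : ‖fderiv ℂ F x ^ k‖ ≤ 2 * M / R := (hFx.iterate hfix k).fderiv ▸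
    norm_fderiv_le_of_bounded_on_ball hR ((hF.iterate hm k).mono hRΩ)
      (fun y hy => hM _ (hm.iterate k (hRΩ hy)))
  refine le_of_mul_le_mul_right ?_ (norm_pos_iff.mpr hv.2)
  calc ‖c‖ ^ k * ‖v‖ = ‖(fderiv ℂ F x ^ k) v‖ := by
        rw [pow_apply_eq_smul hv.apply_eq_smul, norm_smul, norm_pow]
    _ ≤ 2 * M / R * ‖v‖ := (fderiv ℂ F x ^ k).le_of_opNorm_le hpow v

/-- The trace of `1 - dF_x`. At a fixed point of a bounded holomorphic self-map its real part is
nonnegative, and vanishes only if `dF_x` is unipotent. -/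
def traceOneSubFDeriv (F : E → E) (x : E) : ℂ :=
  LinearMap.trace ℂ E (1 - (fderiv ℂ F x : E →ₗ[ℂ] E))

variable [FiniteDimensional ℂ E] {Ω : Set E} {F : E → E} {M : ℝ}

theorem differentiableOn_traceOneSubFDeriv_comp {φ : ℂ → E} {U : Set ℂ} (hU : IsOpen U)
    (hΩ : IsOpen Ω) (hF : DifferentiableOn ℂ F Ω) (hM : ∀ x ∈ Ω, ‖F x‖ ≤ M)
    (hφ : DifferentiableOn ℂ φ U) (hφΩ : MapsTo φ U Ω) :
    DifferentiableOn ℂ (fun ζ => traceOneSubFDeriv F (φ ζ)) U := by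
  have : CompleteSpace E := FiniteDimensional.complete ℂ E
  simp only [traceOneSubFDeriv, map_sub, trace_eq_sum_coord_finBasis (fderiv ℂ F _ : E →ₗ[ℂ] E)]
  refine (DifferentiableOn.fun_sum fun i _ => ?_).const_sub _
  exact (LinearMap.toContinuousLinearMap
    ((Module.finBasis ℂ E).coord i)).differentiable.comp_differentiableOn
    (differentiableOn_fderiv_comp hU hΩ hF hM hφ hφΩ _)

variable {x : E} (hΩ : IsOpen Ω) (hM : ∀ x ∈ Ω, ‖x‖ ≤ M) (hF : DifferentiableOn ℂ F Ω)
  (hm : MapsTo F Ω Ω) (hx : x ∈ Ω) (hfix : F x = x)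

include hΩ hM hF hm hx hfix

theorem re_traceOneSubFDeriv_nonneg : 0 ≤ (traceOneSubFDeriv F x).re :=
  re_trace_one_sub_nonneg fun _ => norm_le_one_of_hasEigenvalue_fderiv hΩ hM hF hm hx hfix

theorem isNilpotent_fderiv_sub_one_of_re_traceOneSubFDeriv_eq_zero
    (h0 : (traceOneSubFDeriv F x).re = 0) : IsNilpotent (fderiv ℂ F x - 1) := by
  obtain ⟨k, hk⟩ := isNilpotent_sub_one_of_re_trace_one_sub_eq_zero
    (fun _ => norm_le_one_of_hasEigenvalue_fderiv hΩ hM hF hm hx hfix) h0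
  refine ⟨k, ContinuousLinearMap.coe_injective ?_⟩
  rw [ContinuousLinearMap.toLinearMap_pow]
  exact hk

end DerivativeAlongDiscs

namespace IsDiscAt

variable {E : Type*} [NormedAddCommGroup E] [NormedSpace ℂ E] {Ω : Set E} {p z : E}
  {ω : E →L[ℂ] ℂ} {φ : ℂ → E} {J r : ℝ}

theorem differentiableOn_apply_sub (hφ : IsDiscAt Ω z φ) :
    DifferentiableOn ℂ (fun ζ => ω (φ ζ - p)) (ball 0 1) :=
  ω.differentiable.comp_differentiableOn (hφ.differentiableOn.sub_const p)

theorem norm_deriv_apply_sub_le (hφ : IsDiscAt Ω z φ) (hΩ : StronglyConvexAt Ω p ω)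
    (hJ : SlopeLE ω p φ J) (hr : r ∈ Ico (0 : ℝ) 1) :
    ‖deriv (fun ζ => ω (φ ζ - p)) r‖ ≤ 4 * J := by
  have hr1 : 0 < 1 - r := sub_pos.mpr hr.2
  have hsub : ball (r : ℂ) (1 - r) ⊆ ball 0 1 := ball_subset_ball' <| by
    rw [dist_zero_right, norm_real, Real.norm_of_nonneg hr.1, sub_add_cancel]
  have hre : ∀ ζ ∈ ball (0 : ℂ) 1, 0 < (ω (φ ζ - p)).re := fun ζ hζ => hΩ.re_pos (hφ.mapsTo hζ)
  rw [norm_deriv_eq_norm_fderiv]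
  refine (norm_fderiv_le_of_re_nonneg hr1 (hφ.differentiableOn_apply_sub.mono hsub)
    (fun x hx => (hre x (hsub hx)).le) (hre _ (ofReal_mem_ball_of_mem_Ico hr))).trans ?_
  rw [div_le_iff₀ hr1]
  linarith [re_le_mul_of_slopeLE hΩ hφ hJ hr]

theorem norm_apply_sub_le (hφ : IsDiscAt Ω z φ) (hΩ : StronglyConvexAt Ω p ω)
    (hJ : SlopeLE ω p φ J) (hr : r ∈ Ico (0 : ℝ) 1) :
    ‖ω (φ r - p)‖ ≤ 4 * J * (1 - r) := by
  have hmean : ∀ t ∈ Ico r 1, ‖ω (φ t - p) - ω (φ r - p)‖ ≤ 4 * J * (t - r) := fun t ht => by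
    have hIco : ∀ u ∈ Icc r t, u ∈ Ico (0 : ℝ) 1 := fun u hu =>
      ⟨hr.1.trans hu.1, hu.2.trans_lt ht.2⟩
    exact norm_image_sub_le_of_norm_deriv_le_segment' (f := fun u : ℝ => ω (φ u - p))
      (fun u hu => ((hφ.differentiableOn_apply_sub.differentiableAt (isOpen_ball.mem_nhds
        (ofReal_mem_ball_of_mem_Ico (hIco u hu)))).hasDerivAt.comp_ofReal).hasDerivWithinAt)
      (fun u hu => hφ.norm_deriv_apply_sub_le hΩ hJ (hIco u ⟨hu.1, hu.2.le⟩)) t ⟨ht.1, le_rfl⟩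
  have hlim : Tendsto (fun t : ℝ => ω (φ t - p)) (𝓝[<] 1) (𝓝 0) := by
    have hφp := (tendsto_nhds_of_tendsto_nhdsWithin (tendsto_nhdsWithin hΩ hφ hJ)).sub_const p
    rw [sub_self] at hφp
    exact _root_.map_zero ω ▸ (ω.continuous.tendsto 0).comp hφp
  have hlim' : Tendsto (fun t : ℝ => 4 * J * (t - r)) (𝓝[<] 1) (𝓝 (4 * J * (1 - r))) :=
    (Continuous.tendsto (by fun_prop) 1).mono_left nhdsWithin_le_nhds
  rw [← norm_neg, ← zero_sub]
  refine le_of_tendsto_of_tendsto (hlim.sub_const _).norm hlim' ?_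
  filter_upwards [Ico_mem_nhdsLT hr.2] with t ht using hmean t ht

end IsDiscAt

section Conclusion

theorem one_sub_div_two_mul_re_le_of_re_nonneg {h : ℂ → ℂ} {r : ℝ}
    (hd : DifferentiableOn ℂ h (ball 0 1)) (hre : ∀ x ∈ ball (0 : ℂ) 1, 0 ≤ (h x).re)
    (hr : r ∈ Ico (0 : ℝ) 1) : (1 - r) / 2 * (h 0).re ≤ (h r).re := by
  have hmem := ofReal_mem_ball_of_mem_Ico hr
  have hharnack := harnack_of_re_nonneg hd hre hmem
  rw [sub_zero, norm_real, Real.norm_of_nonneg hr.1, div_one] at hharnack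
  nlinarith [hre r hmem, hr.2]

variable {E : Type*} [NormedAddCommGroup E] [NormedSpace ℂ E] [FiniteDimensional ℂ E]
  {Ω : Set E} {p : E} {ω : E →L[ℂ] ℂ} {F : E → E} {z : E}

namespace StronglyConvexAt

theorem exists_eigenvector_along_disc (hΩ : StronglyConvexAt Ω p ω)
    (hF : DifferentiableOn ℂ F Ω) (hm : MapsTo F Ω Ω) {φ : ℂ → E} (hφ : IsDiscAt Ω z φ)
    (hφF : ∀ ζ ∈ ball (0 : ℂ) 1, F (φ ζ) = φ ζ) (hT : 0 < (traceOneSubFDeriv F z).re) :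
    ∃ ε > 0, ∀ δ ∈ Ioc (0 : ℝ) 1, ∃ (c : ℂ) (v : E) (N : ℕ), v ≠ 0 ∧
      fderiv ℂ F (φ (1 - δ : ℝ)) v = c • v ∧ N * δ ≤ 1 ∧ ε ≤ ‖c ^ N - 1‖ := by
  obtain ⟨M, -, hM⟩ := hΩ.bounded
  have hz : z ∈ Ω := hφ.map_zero ▸ hφ.mapsTo (mem_ball_self one_pos)
  have : Nontrivial E := ⟨z, p, fun h => hΩ.notMem (h ▸ hz)⟩
  have hdim : (0 : ℝ) < Module.finrank ℂ E := by exact_mod_cast Module.finrank_pos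
  set s : ℝ := (traceOneSubFDeriv F z).re / 2 / Module.finrank ℂ E
  have hs : 0 < s := by positivity
  refine ⟨min (1 / 2) (s / 4), by positivity, fun δ ⟨hδ0, hδ1⟩ => ?_⟩
  refine exists_eigenvector_le_norm_pow_sub_one (fderiv ℂ F (φ (1 - δ : ℝ)) : E →ₗ[ℂ] E)
    hδ0 hδ1 hs.le ?_
  have hharnack := one_sub_div_two_mul_re_le_of_re_nonneg (r := 1 - δ)
    (differentiableOn_traceOneSubFDeriv_comp isOpen_ball hΩ.isOpen hF (fun x hx => hM _ (hm hx))
      hφ.differentiableOn hφ.mapsTo)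
    (fun ζ hζ =>
      re_traceOneSubFDeriv_nonneg hΩ.isOpen hM hF hm (hφ.mapsTo hζ) (hφF ζ hζ))
    ⟨by linarith, by linarith⟩
  rw [hφ.map_zero, sub_sub_cancel] at hharnack
  calc s * δ * Module.finrank ℂ E = δ / 2 * (traceOneSubFDeriv F z).re := by
        simp only [s]
        field_simp
    _ ≤ (traceOneSubFDeriv F (φ (1 - δ : ℝ))).re := hharnack

variable (hΩ : StronglyConvexAt Ω p ω) (hz : z ∈ Ω) (hF : DifferentiableOn ℂ F Ω)
  (hm : MapsTo F Ω Ω) (hfix : F z = z)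
  (ho : Tendsto (fun x => ‖F x - x‖ / ‖x - p‖ ^ 2) (𝓝[Ω] p) (𝓝 0))

include hΩ hz hF hm hfix ho

theorem re_traceOneSubFDeriv_eq_zero : (traceOneSubFDeriv F z).re = 0 := by
  obtain ⟨M, -, hM⟩ := hΩ.bounded
  by_contra hne
  obtain ⟨φ, J, hφ, hJ, hφF⟩ := hΩ.exists_fixed_disc hz hF hm hfix ho
  obtain ⟨ε, hε, heigen⟩ := hΩ.exists_eigenvector_along_disc hF hm hφ hφF
    ((re_traceOneSubFDeriv_nonneg hΩ.isOpen hM hF hm hz hfix).lt_of_ne' hne)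
  obtain ⟨a, ha, hball⟩ := hΩ.exists_ball_disc_subset hz
  obtain ⟨B, hB, hsq⟩ := IsDiscAt.exists_norm_sub_sq_le hΩ
  obtain ⟨ν, hν⟩ := hΩ.exists_map_eq_one hz
  have hJ0 : 0 < J := (hΩ.re_pos hz).trans_le (hφ.re_le_of_slopeLE hJ)
  set δ : ℕ → ℝ := fun j => 1 / ((j : ℝ) + 1)
  have hδ (j : ℕ) : δ j ∈ Ioc (0 : ℝ) 1 :=
    ⟨Nat.one_div_pos_of_nat, div_le_one_of_le₀ (by simp) (by positivity)⟩
  have hr (j : ℕ) : 1 - δ j ∈ Ico (0 : ℝ) 1 := ⟨by linarith [(hδ j).2], by linarith [(hδ j).1]⟩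
  have hrb (j : ℕ) := ofReal_mem_ball_of_mem_Ico (hr j)
  choose c v N hv0 hv hN hcN using fun j => heigen (δ j) (hδ j)
  have hlim := hΩ.tendsto_eigenvalue_pow (𝒰 := hyperfilter ℕ) hν hF hm ho (fun j => (hδ j).1)
    (tendsto_one_div_add_atTop_nhds_zero_nat.mono_left Nat.hyperfilter_le_atTop) hN
    (x := fun j => φ (1 - δ j : ℝ)) (B := B * J) (C := 4 * J) ha (by positivity)
    (fun j => hφ.mapsTo (hrb j)) (fun j => hφF _ (hrb j))
    (fun j => by
      simpa [-ofReal_sub, norm_real, abs_of_nonneg (hr j).1] using hball φ hφ _ (hrb j))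
    (fun j => by simpa using hsq φ z J hφ hJ _ (hr j))
    (fun j => by simpa using hφ.norm_apply_sub_le hΩ hJ (hr j)) hv0 hv
  exact hε.not_ge <| ge_of_tendsto (tendsto_iff_norm_sub_tendsto_zero.mp hlim)
    (Eventually.of_forall hcN)

theorem eq_self_of_fixed_point : ∀ x ∈ Ω, F x = x := by
  have : CompleteSpace E := FiniteDimensional.complete ℂ E
  obtain ⟨M, -, hM⟩ := hΩ.bounded
  obtain ⟨R, hR, hRΩ⟩ := Metric.isOpen_iff.mp hΩ.isOpen z hz
  have hnil : IsNilpotent (fderiv ℂ F z - 1) :=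
    isNilpotent_fderiv_sub_one_of_re_traceOneSubFDeriv_eq_zero hΩ.isOpen hM hF hm hz hfix
      (hΩ.re_traceOneSubFDeriv_eq_zero hz hF hm hfix ho)
  have hnear : ∀ᶠ x in 𝓝 z, F x = x :=
    eventually_eq_self_of_bounded_iterates (g := fun m => F^[m]) hR
      (fun m => (hF.iterate hm m).mono hRΩ) (fun m x hx => hM _ (hm.iterate m (hRΩ hx)))
      (fun _ _ => rfl) hfix (fun m x _ _ => iterate_succ_apply F m x) hnil
  exact eqOn_of_convex_of_eventuallyEq hΩ.isOpen hΩ.convex hF differentiableOn_id hz hnear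

end StronglyConvexAt

end Conclusion

theorem huang_strongly_convex_interior_fixed_point_general {E : Type*} [NormedAddCommGroup E]
    [NormedSpace ℂ E] [NormedSpace ℝ E] [IsScalarTower ℝ ℂ E] [FiniteDimensional ℂ E]
    {Ω : Set E} {ρ : E → ℝ} (hΩ : IsStronglyConvexDomain Ω ρ) {p : E} (hp : p ∈ frontier Ω)
    {F : E → E} (hF : DifferentiableOn ℂ F Ω) (hm : MapsTo F Ω Ω) {z : E} (hz : z ∈ Ω)
    (hfix : F z = z) (ho : Tendsto (fun x => ‖F x - x‖ / ‖x - p‖ ^ 2) (𝓝[Ω] p) (𝓝 0)) :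
    ∀ x ∈ Ω, F x = x := by
  have : FiniteDimensional ℝ E := FiniteDimensional.trans ℝ ℂ E
  obtain ⟨ω, hω⟩ := hΩ.stronglyConvexAt hp
  exact hω.eq_self_of_fixed_point hz hF hm hfix ho

theorem IsDefiningFunction.isStronglyConvexDomain {n : ℕ} {Ω : Set (En n)} {ρ : En n → ℝ}
    (hρ : IsDefiningFunction Ω ⊤ ρ) (hΩ : IsDomain' Ω) (hbd : Bornology.IsBounded Ω)
    (hsc : ∀ q ∈ frontier Ω, ∀ ξ : En n, ξ ≠ 0 → fderiv ℝ ρ q ξ = 0 →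
      0 < iteratedFDeriv ℝ 2 ρ q ![ξ, ξ]) :
    IsStronglyConvexDomain Ω ρ where
  contDiff := hρ.1.of_le (WithTop.coe_le_coe.mpr le_top)
  isOpen := hΩ.1
  isPreconnected := hΩ.2.isPreconnected
  isBounded := hbd
  eq_setOf := hρ.2.1
  frontier_eq := hρ.2.2.1
  fderiv_ne_zero := hρ.2.2.2
  hessian_pos q hq ξ hξ hdξ := by simpa [iteratedFDeriv_two_apply] using hsc q hq ξ hξ hdξ

theorem huang_strongly_convex_interior_fixed_point
    {n : ℕ} (hn : 2 ≤ n) (Ω : Set (En n)) (ρ : En n → ℝ)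
    (hΩ : IsDomain' Ω) (hbd : Bornology.IsBounded Ω)
    (hρ : IsDefiningFunction Ω ⊤ ρ)
    (hsc : ∀ q ∈ frontier Ω, ∀ ξ : En n, ξ ≠ 0 → fderiv ℝ ρ q ξ = 0 →
      0 < iteratedFDeriv ℝ 2 ρ q ![ξ, ξ])
    (p : En n) (hp : p ∈ frontier Ω)
    (F : En n → En n) (hF : DifferentiableOn ℂ F Ω) (hFself : MapsTo F Ω Ω)
    (z₀ : En n) (hz₀ : z₀ ∈ Ω) (hfix : F z₀ = z₀)
    (ho : LittleOh Ω F p 2) :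
    ∀ z ∈ Ω, F z = z :=
  huang_strongly_convex_interior_fixed_point_general (hρ.isStronglyConvexDomain hΩ hbd hsc) hp
    hF hFself hz₀ hfix ho
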